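/- arXiv:2209.12312 — 2 statements merged into one kernel-verified Lean document; each statement's English description precedes it below -/
import Mathlib

section
/- Let 𝒮 ⊂ ℝ³ be a smooth embedded surface and let (v₋, v₊) satisfy the CVS conditions (1)–(5) with |v₊|² = |v₋|² on 𝒮. Then for every point q ∈ 𝒮 at least one of the following holds: (a) the Gauss curvature of 𝒮 vanishes at q (equivalently, the differential at q of the Gauss map n : 𝒮 → S² is singular); (b) v₊(q) = v₋(q); (c) v₊(q) = −v₋(q). -/
noncomputable section

open MeasureTheory Filter Set
open scoped RealInnerProductSpace Topology

abbrev E3 : Type := EuclideanSpace ℝ (Fin 3)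
abbrev E2 : Type := EuclideanSpace ℝ (Fin 2)

def mk3 (a b c : ℝ) : E3 := (EuclideanSpace.equiv (Fin 3) ℝ).symm ![a, b, c]

def e3 (i : Fin 3) : E3 := EuclideanSpace.single i 1

/-- `∂_j v_i` at `p`. -/
def pder (v : E3 → E3) (i j : Fin 3) (p : E3) : ℝ := fderiv ℝ v p (e3 j) i

def div3 (v : E3 → E3) (p : E3) : ℝ := ∑ i, pder v i i p

def curl3 (v : E3 → E3) (p : E3) : E3 :=
  mk3 (pder v 2 1 p - pder v 1 2 p) (pder v 0 2 p - pder v 2 0 p)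
    (pder v 1 0 p - pder v 0 1 p)

def lap3 (f : E3 → ℝ) (p : E3) : ℝ :=
  ∑ j, fderiv ℝ (fun x => fderiv ℝ f x (e3 j)) p (e3 j)

def IsTangentAt (S : Set E3) (p v : E3) : Prop :=
  ∃ γ : ℝ → E3, (∀ t, γ t ∈ S) ∧ γ 0 = p ∧ HasDerivAt γ v 0

def IsSurface (k : ℕ∞) (S : Set E3) : Prop :=
  ∀ p ∈ S, ∃ (f : E2 → E3) (U : Set E2) (V : Set E3),
    IsOpen U ∧ IsOpen V ∧ p ∈ V ∧ ContDiffOn ℝ k f U ∧ Set.InjOn f U ∧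
    f '' U = S ∩ V ∧ ∀ x ∈ U, Function.Injective (fderiv ℝ f x)

structure CVSBase (S Ωm Ωp : Set E3) (vm vp : E3 → E3) : Prop where
  openm : IsOpen Ωm
  openp : IsOpen Ωp
  disj : Disjoint Ωm Ωp
  disjm : Disjoint Ωm S
  disjp : Disjoint Ωp S
  clm : S ⊆ closure Ωm
  clp : S ⊆ closure Ωp
  smoothm : ∃ W, IsOpen W ∧ Ωm ∪ S ⊆ W ∧ ContDiffOn ℝ 1 vm W
  smoothp : ∃ W, IsOpen W ∧ Ωp ∪ S ⊆ W ∧ ContDiffOn ℝ 1 vp W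
  divm : ∀ p ∈ Ωm, div3 vm p = 0
  divp : ∀ p ∈ Ωp, div3 vp p = 0
  curlm : ∀ p ∈ Ωm, curl3 vm p = 0
  curlp : ∀ p ∈ Ωp, curl3 vp p = 0
  tangentm : ∀ p ∈ S, IsTangentAt S p (vm p)
  tangentp : ∀ p ∈ S, IsTangentAt S p (vp p)

structure CVSPair (S Ωm Ωp : Set E3) (vm vp : E3 → E3)
    extends CVSBase S Ωm Ωp vm vp : Prop where
  strain : ∀ p ∈ S, (fderiv ℝ vp p + fderiv ℝ vm p) (vp p - vm p) = 0
  bernoulli : ∀ p ∈ S, ∀ᶠ q in 𝓝[S] p,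
    ‖vp q‖ ^ 2 - ‖vm q‖ ^ 2 = ‖vp p‖ ^ 2 - ‖vm p‖ ^ 2

/-- the open region `Ωm` is the bounded region enclosed by the closed surface `S`,
and `Ωp` is its exterior. -/
structure EnclosedBy (S Ωm Ωp : Set E3) : Prop where
  openm : IsOpen Ωm
  bounded : Bornology.IsBounded Ωm
  fr : frontier Ωm = S
  plus : Ωp = (Ωm ∪ S)ᶜ

lemma orth_zero (a b c z : E3) (ha : a ≠ 0) (hb : b ≠ 0) (hc : c ≠ 0)
    (hab : ⟪a, b⟫ = 0) (hac : ⟪a, c⟫ = 0) (hbc : ⟪b, c⟫ = 0)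
    (hza : ⟪z, a⟫ = 0) (hzb : ⟪z, b⟫ = 0) (hzc : ⟪z, c⟫ = 0) : z = 0 := by
  by_contra hz
  have h : LinearIndependent ℝ ![a, b, c, z] := by
    apply linearIndependent_of_ne_zero_of_inner_eq_zero (𝕜 := ℝ)
    · intro i; fin_cases i <;> simpa
    · have hba := hab
      have hca := hac
      have hcb := hbc
      have haz := hza
      have hbz := hzb
      have hcz := hzc
      rw [real_inner_comm] at hba hca hcb haz hbz hcz
      intro i j hij
      fin_cases i <;> fin_cases j <;> first | exact absurd rfl hij | assumption
  have := h.fintype_card_le_finrank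
  simp at this

lemma final_contra (a b n p r : E3) (ha : a ≠ 0) (hb : b ≠ 0) (hn : ‖n‖ = 1)
    (hab : ⟪a, b⟫ = 0) (han : ⟪a, n⟫ = 0) (hbn : ⟪b, n⟫ = 0)
    (hpn : ⟪p, n⟫ = 1) (hrn : ⟪r, n⟫ = 1) (hpb : ⟪p, b⟫ = 0) (hra : ⟪r, a⟫ = 0)
    (hpr : ⟪p, r⟫ = 0) : False := by
  have hnn : ⟪n, n⟫ = (1 : ℝ) := by rw [real_inner_self_eq_norm_sq, hn]; norm_num
  have haa : ⟪a, a⟫ ≠ (0 : ℝ) := by simpa using ha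
  have hn0 : n ≠ 0 := by intro h; simp [h] at hn
  have hna : ⟪n, a⟫ = 0 := by rw [real_inner_comm]; exact han
  have hnb : ⟪n, b⟫ = 0 := by rw [real_inner_comm]; exact hbn
  have h := orth_zero a b n (p - n - (⟪p, a⟫ / ⟪a, a⟫) • a) ha hb hn0 hab han hbn
    (by rw [inner_sub_left, inner_sub_left, real_inner_smul_left, hna]; field_simp; ring)
    (by rw [inner_sub_left, inner_sub_left, real_inner_smul_left, hnb, hab, hpb]; ring)
    (by rw [inner_sub_left, inner_sub_left, real_inner_smul_left, hnn, han, hpn]; ring)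
  have h2 : ⟪p - n - (⟪p, a⟫ / ⟪a, a⟫) • a, r⟫ = (0 : ℝ) := by rw [h]; simp
  have har : ⟪a, r⟫ = 0 := by rw [real_inner_comm]; exact hra
  have hnr : ⟪n, r⟫ = 1 := by rw [real_inner_comm]; exact hrn
  rw [inner_sub_left, inner_sub_left, real_inner_smul_left, har, hnr, hpr] at h2
  norm_num at h2

lemma key_split (a b : E2 → E3) (x0 : E2) (n0 : E3)
    (ha : ContDiffAt ℝ 1 a x0) (hb : ContDiffAt ℝ 1 b x0)
    (kera : ∀ᶠ x in 𝓝 x0, ∃ Y : E2, Y ≠ 0 ∧ fderiv ℝ a x Y = 0)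
    (kerb : ∀ᶠ x in 𝓝 x0, ∃ Y : E2, Y ≠ 0 ∧ fderiv ℝ b x Y = 0)
    (orth : ∀ᶠ x in 𝓝 x0, ⟪a x, b x⟫ = 0)
    (inj : ∀ e : E2, ⟪fderiv ℝ a x0 e, n0⟫ = 0 → ⟪fderiv ℝ b x0 e, n0⟫ = 0 → e = 0) :
    ∃ p r : E3, ⟪p, n0⟫ = 1 ∧ ⟪r, n0⟫ = 1 ∧ ⟪p, b x0⟫ = 0 ∧ ⟪r, a x0⟫ = 0 ∧ ⟪p, r⟫ = 0 := by
  set g : E2 → ℝ × ℝ := fun x => (⟪a x, n0⟫, ⟪b x, n0⟫) with hg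
  have gder : ∀ x, DifferentiableAt ℝ a x → DifferentiableAt ℝ b x → ∀ e,
      fderiv ℝ g x e = (⟪fderiv ℝ a x e, n0⟫, ⟪fderiv ℝ b x e, n0⟫) := by
    intro x hax hbx e
    have h1 : DifferentiableAt ℝ (fun x => (⟪a x, n0⟫ : ℝ)) x := hax.inner ℝ (by fun_prop)
    have h2 : DifferentiableAt ℝ (fun x => (⟪b x, n0⟫ : ℝ)) x := hbx.inner ℝ (by fun_prop)
    rw [hg, DifferentiableAt.fderiv_prodMk h1 h2]
    simp only [ContinuousLinearMap.prod_apply]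
    rw [fderiv_inner_apply ℝ hax (by fun_prop), fderiv_inner_apply ℝ hbx (by fun_prop)]
    simp
  have hgC : ContDiffAt ℝ 1 g x0 :=
    (ha.inner ℝ contDiffAt_const).prodMk (hb.inner ℝ contDiffAt_const)
  have hginj : Function.Injective (fderiv ℝ g x0) := by
    rw [injective_iff_map_eq_zero]
    intro e he
    rw [gder x0 (ha.differentiableAt one_ne_zero) (hb.differentiableAt one_ne_zero)] at he
    have := Prod.mk.inj he
    exact inj e this.1 this.2
  let L : E2 ≃L[ℝ] ℝ × ℝ := (LinearEquiv.ofInjectiveOfFinrankEq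
    (fderiv ℝ g x0 : E2 →ₗ[ℝ] ℝ × ℝ) hginj (by simp)).toContinuousLinearEquiv
  have hL : (L : E2 →L[ℝ] ℝ × ℝ) = fderiv ℝ g x0 := by
    ext1 e; rfl
  have hgd : HasFDerivAt g (L : E2 →L[ℝ] ℝ × ℝ) x0 := by
    rw [hL]; exact (hgC.differentiableAt one_ne_zero).hasFDerivAt
  set h := hgC.localInverse hgd one_ne_zero with hh
  have hhC : ContDiffAt ℝ 1 h (g x0) := hgC.to_localInverse hgd one_ne_zero
  have hs := hgC.hasStrictFDerivAt' hgd one_ne_zero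
  have hright : ∀ᶠ y in 𝓝 (g x0), g (h y) = y := hs.eventually_right_inverse
  have hx0 : h (g x0) = x0 := hs.localInverse_apply_image
  have htend : Tendsto h (𝓝 (g x0)) (𝓝 x0) := by
    have := hhC.continuousAt.tendsto
    rwa [hx0] at this
  set y0 := g x0 with hy0
  have hev : ∀ᶠ y in 𝓝 y0, (∀ᶠ z in 𝓝 y, g (h z) = z) ∧ g (h y) = y ∧
      DifferentiableAt ℝ h y ∧ DifferentiableAt ℝ a (h y) ∧ DifferentiableAt ℝ b (h y) ∧
      (∃ Y : E2, Y ≠ 0 ∧ fderiv ℝ a (h y) Y = 0) ∧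
      (∃ Y : E2, Y ≠ 0 ∧ fderiv ℝ b (h y) Y = 0) ∧ ⟪a (h y), b (h y)⟫ = (0 : ℝ) := by
    filter_upwards [hright.eventually_nhds, hright, hhC.eventually (by simp),
      htend.eventually (ha.eventually (by simp)), htend.eventually (hb.eventually (by simp)),
      htend.eventually kera, htend.eventually kerb, htend.eventually orth]
      with y h1 h2 h3 h4 h5 h6 h7 h8
    exact ⟨h1, h2, h3.differentiableAt one_ne_zero, h4.differentiableAt one_ne_zero,
      h5.differentiableAt one_ne_zero, h6, h7, h8⟩
  obtain ⟨ε, hε, hball⟩ := Metric.eventually_nhds_iff_ball.1 hev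
  have hmain : ∀ y ∈ Metric.ball y0 ε,
      HasFDerivAt (fun z => a (h z)) ((fderiv ℝ a (h y)).comp (fderiv ℝ h y)) y ∧
      HasFDerivAt (fun z => b (h z)) ((fderiv ℝ b (h y)).comp (fderiv ℝ h y)) y ∧
      fderiv ℝ a (h y) (fderiv ℝ h y (0, 1)) = 0 ∧
      fderiv ℝ b (h y) (fderiv ℝ h y (1, 0)) = 0 := by
    intro y hy
    obtain ⟨h1, h2, h3, h4, h5, ⟨Y, hY, hY0⟩, ⟨X, hX, hX0⟩, h8⟩ := hball y hy
    have hgdiff : DifferentiableAt ℝ g (h y) :=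
      (h4.inner ℝ (by fun_prop)).prodMk (h5.inner ℝ (by fun_prop))
    have hcomp : HasFDerivAt (fun z => g (h z)) ((fderiv ℝ g (h y)).comp (fderiv ℝ h y)) y :=
      hgdiff.hasFDerivAt.comp y h3.hasFDerivAt
    have hid : HasFDerivAt (fun z => g (h z)) (ContinuousLinearMap.id ℝ (ℝ × ℝ)) y :=
      (hasFDerivAt_id y).congr_of_eventuallyEq h1
    have hDD : ∀ e, fderiv ℝ g (h y) (fderiv ℝ h y e) = e := fun e => by
      have := congrArg (fun T => T e) (hcomp.unique hid)
      simpa using this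
    have hinj : Function.Injective (fderiv ℝ h y) := fun e e' hee => by
      rw [← hDD e, ← hDD e', hee]
    have hsurj : Function.Surjective (fderiv ℝ h y : ℝ × ℝ →ₗ[ℝ] E2) :=
      (LinearMap.injective_iff_surjective_of_finrank_eq_finrank (by simp)).1 hinj
    refine ⟨h4.hasFDerivAt.comp y h3.hasFDerivAt, h5.hasFDerivAt.comp y h3.hasFDerivAt, ?_, ?_⟩
    · obtain ⟨⟨α, β⟩, hαβ⟩ := hsurj Y
      have hαβ' : fderiv ℝ h y (α, β) = Y := hαβ
      have e1 := hDD (α, β)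
      rw [hαβ', gder _ h4 h5, hY0] at e1
      have hα : α = 0 := by simpa using (Prod.mk.inj e1).1.symm
      subst hα
      have hβ : β ≠ 0 := by
        rintro rfl
        apply hY
        rw [← hαβ']
        exact map_zero _
      have e2 : ((0 : ℝ), β) = β • ((0 : ℝ), (1 : ℝ)) := by simp
      rw [← hαβ', e2, map_smul, map_smul] at hY0
      exact (smul_eq_zero.1 hY0).resolve_left hβ
    · obtain ⟨⟨α, β⟩, hαβ⟩ := hsurj X
      have hαβ' : fderiv ℝ h y (α, β) = X := hαβ
      have e1 := hDD (α, β)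
      rw [hαβ', gder _ h4 h5, hX0] at e1
      have hβ : β = 0 := by simpa using (Prod.mk.inj e1).2.symm
      subst hβ
      have hα : α ≠ 0 := by
        rintro rfl
        apply hX
        rw [← hαβ']
        exact map_zero _
      have e2 : (α, (0 : ℝ)) = α • ((1 : ℝ), (0 : ℝ)) := by simp
      rw [← hαβ', e2, map_smul, map_smul] at hX0
      exact (smul_eq_zero.1 hX0).resolve_left hα
  obtain ⟨s0, t0⟩ := y0
  have hmem : ∀ s ∈ Metric.ball s0 ε, ∀ t ∈ Metric.ball t0 ε,
      (s, t) ∈ Metric.ball (s0, t0) ε := by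
    intro s hs t ht
    rw [← ball_prod_same]
    exact ⟨hs, ht⟩
  have hs0 : s0 ∈ Metric.ball s0 ε := Metric.mem_ball_self hε
  have ht0 : t0 ∈ Metric.ball t0 ε := Metric.mem_ball_self hε
  have lineT : ∀ s t : ℝ, HasDerivAt (fun t : ℝ => (s, t)) ((0 : ℝ), (1 : ℝ)) t := fun s t =>
    (hasDerivAt_const t s).prodMk (hasDerivAt_id t)
  have lineS : ∀ s t : ℝ, HasDerivAt (fun s : ℝ => (s, t)) ((1 : ℝ), (0 : ℝ)) s := fun s t =>
    (hasDerivAt_id s).prodMk (hasDerivAt_const s t)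
  have aconst : ∀ s ∈ Metric.ball s0 ε, ∀ t ∈ Metric.ball t0 ε, a (h (s, t)) = a (h (s, t0)) := by
    intro s hs t ht
    have hd : ∀ t ∈ Metric.ball t0 ε, HasDerivAt (fun t => a (h (s, t))) 0 t := by
      intro t ht
      obtain ⟨m1, m2, m3, m4⟩ := hmain _ (hmem s hs t ht)
      have := m1.comp_hasDerivAt t (lineT s t)
      rw [ContinuousLinearMap.comp_apply, m3] at this
      exact this
    exact Metric.isOpen_ball.is_const_of_deriv_eq_zero (convex_ball t0 ε).isPreconnected
      (fun t ht => (hd t ht).differentiableAt.differentiableWithinAt)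
      (fun t ht => (hd t ht).deriv) ht ht0
  have bconst : ∀ s ∈ Metric.ball s0 ε, ∀ t ∈ Metric.ball t0 ε, b (h (s, t)) = b (h (s0, t)) := by
    intro s hs t ht
    have hd : ∀ s ∈ Metric.ball s0 ε, HasDerivAt (fun s => b (h (s, t))) 0 s := by
      intro s hs
      obtain ⟨m1, m2, m3, m4⟩ := hmain _ (hmem s hs t ht)
      have := m2.comp_hasDerivAt s (lineS s t)
      rw [ContinuousLinearMap.comp_apply, m4] at this
      exact this
    exact Metric.isOpen_ball.is_const_of_deriv_eq_zero (convex_ball s0 ε).isPreconnected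
      (fun t ht => (hd t ht).differentiableAt.differentiableWithinAt)
      (fun t ht => (hd t ht).deriv) hs hs0
  have horth : ∀ s ∈ Metric.ball s0 ε, ∀ t ∈ Metric.ball t0 ε,
      ⟪a (h (s, t0)), b (h (s0, t))⟫ = (0 : ℝ) := by
    intro s hs t ht
    rw [← aconst s hs t ht, ← bconst s hs t ht]
    exact (hball _ (hmem s hs t ht)).2.2.2.2.2.2.2
  obtain ⟨m1, m2, m3, m4⟩ := hmain _ (hmem s0 hs0 t0 ht0)
  have dA := m1.comp_hasDerivAt s0 (lineS s0 t0)
  have dB := m2.comp_hasDerivAt t0 (lineT s0 t0)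
  set p := ((fderiv ℝ a (h (s0, t0))).comp (fderiv ℝ h (s0, t0))) (1, 0)
  set r := ((fderiv ℝ b (h (s0, t0))).comp (fderiv ℝ h (s0, t0))) (0, 1)
  have bs : Metric.ball s0 ε ∈ 𝓝 s0 := Metric.ball_mem_nhds _ hε
  have bt : Metric.ball t0 ε ∈ 𝓝 t0 := Metric.ball_mem_nhds _ hε
  have hpb : ∀ t ∈ Metric.ball t0 ε, ⟪p, b (h (s0, t))⟫ = (0 : ℝ) := by
    intro t ht
    have d1 := dA.inner ℝ (hasDerivAt_const s0 (b (h (s0, t))))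
    have d2 : HasDerivAt (fun s => (⟪a (h (s, t0)), b (h (s0, t))⟫ : ℝ)) 0 s0 :=
      (hasDerivAt_const s0 (0 : ℝ)).congr_of_eventuallyEq
        (by filter_upwards [bs] with s hs using horth s hs t ht)
    simpa using d1.unique d2
  refine ⟨p, r, ?_, ?_, ?_, ?_, ?_⟩
  · have d1 := dA.inner ℝ (hasDerivAt_const s0 n0)
    have d2 : HasDerivAt (fun s => (⟪a (h (s, t0)), n0⟫ : ℝ)) 1 s0 :=
      (hasDerivAt_id s0).congr_of_eventuallyEq
        (by filter_upwards [bs] with s hs using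
          (Prod.mk.inj (hball _ (hmem s hs t0 ht0)).2.1).1)
    simpa using d1.unique d2
  · have d1 := dB.inner ℝ (hasDerivAt_const t0 n0)
    have d2 : HasDerivAt (fun t => (⟪b (h (s0, t)), n0⟫ : ℝ)) 1 t0 :=
      (hasDerivAt_id t0).congr_of_eventuallyEq
        (by filter_upwards [bt] with t ht using
          (Prod.mk.inj (hball _ (hmem s0 hs0 t ht)).2.1).2)
    simpa using d1.unique d2
  · have := hpb t0 ht0
    rwa [hx0] at this
  · have d1 := (hasDerivAt_const t0 (a (h (s0, t0)))).inner ℝ dB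
    have d2 : HasDerivAt (fun t => (⟪a (h (s0, t0)), b (h (s0, t))⟫ : ℝ)) 0 t0 :=
      (hasDerivAt_const t0 (0 : ℝ)).congr_of_eventuallyEq
        (by filter_upwards [bt] with t ht using horth s0 hs0 t ht)
    have := d1.unique d2
    rw [real_inner_comm]
    simpa [hx0] using this
  · have d1 := (hasDerivAt_const t0 p).inner ℝ dB
    have d2 : HasDerivAt (fun t => (⟪p, b (h (s0, t))⟫ : ℝ)) 0 t0 :=
      (hasDerivAt_const t0 (0 : ℝ)).congr_of_eventuallyEq
        (by filter_upwards [bt] with t ht using hpb t ht)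
    simpa using d1.unique d2

lemma sym_bdry (v : E3 → E3) (Ω W : Set E3) (hW : IsOpen W) (hv : ContDiffOn ℝ 1 v W)
    (hcurl : ∀ p ∈ Ω, curl3 v p = 0) (p : E3) (hp : p ∈ W) (hcl : p ∈ closure Ω) (x y : E3) :
    ⟪fderiv ℝ v p x, y⟫ = (⟪x, fderiv ℝ v p y⟫ : ℝ) := by
  have hC : ContDiffAt ℝ 1 v p := hv.contDiffAt (hW.mem_nhds hp)
  have hcont : ContinuousAt (fderiv ℝ v) p := hC.continuousAt_fderiv one_ne_zero
  have hpc : ∀ i j, ContinuousAt (pder v i j) p := by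
    intro i j
    have h1 : ContinuousAt (fun z => fderiv ℝ v z (e3 j)) p := hcont.clm_apply continuousAt_const
    exact (EuclideanSpace.proj i : E3 →L[ℝ] ℝ).continuous.continuousAt.comp h1
  have hne : (𝓝[Ω] p).NeBot := mem_closure_iff_nhdsWithin_neBot.1 hcl
  have lim : ∀ i j k l, (∀ z ∈ Ω, pder v i j z = pder v k l z) → pder v i j p = pder v k l p := by
    intro i j k l h
    exact tendsto_nhds_unique_of_eventuallyEq
      ((hpc i j).tendsto.mono_left nhdsWithin_le_nhds)
      ((hpc k l).tendsto.mono_left nhdsWithin_le_nhds)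
      (by filter_upwards [self_mem_nhdsWithin] with z hz using h z hz)
  have c21 : pder v 2 1 p = pder v 1 2 p := lim _ _ _ _ fun z hz => by
    have := congrArg (fun u : E3 => u 0) (hcurl z hz)
    simp [curl3, mk3] at this
    linarith
  have c02 : pder v 0 2 p = pder v 2 0 p := lim _ _ _ _ fun z hz => by
    have := congrArg (fun u : E3 => u 1) (hcurl z hz)
    simp [curl3, mk3] at this
    linarith
  have c10 : pder v 1 0 p = pder v 0 1 p := lim _ _ _ _ fun z hz => by
    have := congrArg (fun u : E3 => u 2) (hcurl z hz)
    simp [curl3, mk3] at this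
    linarith
  have exp : ∀ z : E3, z = z 0 • e3 0 + z 1 • e3 1 + z 2 • e3 2 := by
    intro z
    ext i
    fin_cases i <;> simp [e3]
  have hA : ∀ (z : E3) (i : Fin 3), fderiv ℝ v p z i
      = z 0 * pder v i 0 p + z 1 * pder v i 1 p + z 2 * pder v i 2 p := by
    intro z i
    conv_lhs => rw [exp z]
    simp [pder]
  simp only [PiLp.inner_apply, Fin.sum_univ_three, hA, RCLike.inner_apply, conj_trivial]
  rw [c21, c02, c10]
  ring

lemma tangent_deriv (S : Set E3) (p z : E3) (h : IsTangentAt S p z) (φ : E3 → ℝ) (c : ℝ)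
    (hφ : DifferentiableAt ℝ φ p) (h0 : ∀ q ∈ S, φ q = c) : fderiv ℝ φ p z = 0 := by
  obtain ⟨γ, hγ, rfl, hd⟩ := h
  have h1 := hφ.hasFDerivAt.comp_hasDerivAt 0 hd
  have h2 : HasDerivAt (φ ∘ γ) 0 0 := by
    have : φ ∘ γ = fun _ => c := funext fun t => h0 _ (hγ t)
    rw [this]
    exact hasDerivAt_const _ _
  exact h1.unique h2

lemma tangent_inner (S : Set E3) (p z : E3) (h : IsTangentAt S p z) (v w : E3 → E3) (c : ℝ)
    (hv : DifferentiableAt ℝ v p) (hw : DifferentiableAt ℝ w p) (h0 : ∀ q ∈ S, ⟪v q, w q⟫ = c) :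
    ⟪v p, fderiv ℝ w p z⟫ + ⟪fderiv ℝ v p z, w p⟫ = (0 : ℝ) := by
  rw [← fderiv_inner_apply ℝ hv hw]
  exact tangent_deriv S p z h _ c (hv.inner ℝ hw) h0

lemma tangent_param (S : Set E3) (f : E2 → E3) (U : Set E2) (hU : IsOpen U)
    (hfS : ∀ x ∈ U, f x ∈ S) (x : E2) (hx : x ∈ U) (hf : DifferentiableAt ℝ f x) (e : E2) :
    IsTangentAt S (f x) (fderiv ℝ f x e) := by
  classical
  refine ⟨fun t => if x + t • e ∈ U then f (x + t • e) else f x, ?_, ?_, ?_⟩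
  · intro t
    dsimp only
    split_ifs with h
    · exact hfS _ h
    · exact hfS _ hx
  · simp
  · have hl : HasDerivAt (fun t : ℝ => x + t • e) e 0 := by
      simpa using ((hasDerivAt_id (0 : ℝ)).smul_const e).const_add x
    have hf' : HasFDerivAt f (fderiv ℝ f x) (x + (0 : ℝ) • e) := by simpa using hf.hasFDerivAt
    have h1 := hf'.comp_hasDerivAt (0 : ℝ) hl
    refine h1.congr_of_eventuallyEq ?_
    have : ∀ᶠ t : ℝ in 𝓝 0, x + t • e ∈ U :=
      hl.continuousAt.eventually (by simpa using hU.mem_nhds hx)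
    filter_upwards [this] with t ht
    simp [ht]

lemma II_symm (f n : E2 → E3) (U : Set E2) (hU : IsOpen U) (hf : ContDiffOn ℝ 2 f U)
    (x : E2) (hx : x ∈ U) (hn : DifferentiableAt ℝ n x)
    (h : ∀ y ∈ U, ∀ e, ⟪n y, fderiv ℝ f y e⟫ = (0 : ℝ)) (e e' : E2) :
    ⟪fderiv ℝ n x e, fderiv ℝ f x e'⟫ = (⟪fderiv ℝ n x e', fderiv ℝ f x e⟫ : ℝ) := by
  have hfx : ContDiffAt ℝ 2 f x := hf.contDiffAt (hU.mem_nhds hx)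
  have hsym := hfx.isSymmSndFDerivAt (by simp)
  have hd : DifferentiableAt ℝ (fderiv ℝ f) x :=
    (hfx.fderiv_right (m := 1) (by norm_num)).differentiableAt one_ne_zero
  have key : ∀ e e', ⟪n x, fderiv ℝ (fderiv ℝ f) x e e'⟫
      + ⟪fderiv ℝ n x e, fderiv ℝ f x e'⟫ = (0 : ℝ) := by
    intro e e'
    have hd' : DifferentiableAt ℝ (fun y => fderiv ℝ f y e') x := hd.clm_apply (by fun_prop)
    have h1 := fderiv_inner_apply ℝ hn hd' e
    have h2 : fderiv ℝ (fun y => (⟪n y, fderiv ℝ f y e'⟫ : ℝ)) x = 0 := by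
      have : (fun y => (⟪n y, fderiv ℝ f y e'⟫ : ℝ)) =ᶠ[𝓝 x] fun _ => 0 := by
        filter_upwards [hU.mem_nhds hx] with y hy using h y hy e'
      rw [this.fderiv_eq]
      simp
    rw [h2, fderiv_clm_apply hd (by fun_prop)] at h1
    simp at h1
    linarith
  have k1 := key e e'
  have k2 := key e' e
  rw [hsym e e'] at k1
  linarith

lemma range_param (A : E2 →L[ℝ] E3) (hA : Function.Injective A) (n : E3) (hn : ‖n‖ = 1)
    (h : ∀ e, ⟪n, A e⟫ = (0 : ℝ)) (z : E3) (hz : ⟪n, z⟫ = (0 : ℝ)) : ∃ e, A e = z := by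
  have hn0 : n ≠ 0 := by intro h; simp [h] at hn
  have : Fact (Module.finrank ℝ E3 = 2 + 1) := ⟨by simp⟩
  have h1 : Module.finrank ℝ (ℝ ∙ n)ᗮ = 2 := Submodule.finrank_orthogonal_span_singleton hn0
  have h2 : Module.finrank ℝ (A : E2 →ₗ[ℝ] E3).range = 2 := by
    rw [LinearMap.finrank_range_of_inj hA]; simp
  have hle : (A : E2 →ₗ[ℝ] E3).range ≤ (ℝ ∙ n)ᗮ := by
    rintro _ ⟨e, rfl⟩
    exact Submodule.mem_orthogonal_singleton_iff_inner_right.2 (h e)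
  have heq := Submodule.eq_of_le_of_finrank_eq hle (h2.trans h1.symm)
  have hz' : z ∈ (ℝ ∙ n)ᗮ := Submodule.mem_orthogonal_singleton_iff_inner_right.2 hz
  rw [← heq] at hz'
  exact hz'

/-- Let `S ⊂ ℝ³` be a smooth embedded surface with unit normal (Gauss map)
`n`, and let `(vm, vp)` satisfy the CVS conditions (1)–(5) with `|vp|² = |vm|²` on `S`.
Then at every point `q ∈ S` at least one of the following holds:
(a) the Gauss curvature of `S` vanishes at `q`, i.e. the differential of the Gauss map at `q`
is singular on the tangent plane (there is a nonzero tangent vector killed by `Dn`);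
(b) `vp q = vm q`; (c) `vp q = -vm q`. -/
theorem statement5
    (S Ωm Ωp : Set E3) (vm vp : E3 → E3) (n : E3 → E3) (W : Set E3)
    (hS : IsSurface 2 S)
    -- `n` is a C¹ unit normal field near `S`
    (hW : IsOpen W) (hSW : S ⊆ W) (hn : ContDiffOn ℝ 1 n W)
    (hn_unit : ∀ p ∈ S, ‖n p‖ = 1)
    (hn_orth : ∀ p ∈ S, ∀ v, IsTangentAt S p v → ⟪n p, v⟫ = 0)
    (hCVS : CVSPair S Ωm Ωp vm vp)
    (hnorm : ∀ p ∈ S, ‖vp p‖ ^ 2 = ‖vm p‖ ^ 2) :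
    ∀ q ∈ S,
      (∃ w : E3, w ≠ 0 ∧ IsTangentAt S q w ∧ fderiv ℝ n q w = 0) ∨
      vp q = vm q ∨ vp q = -vm q := by
  intro q hq
  by_contra hcon
  push Not at hcon
  obtain ⟨hna, hnb, hnc⟩ := hcon
  obtain ⟨Wm, hWm, hsubm, hvm⟩ := hCVS.smoothm
  obtain ⟨Wp, hWp, hsubp, hvp⟩ := hCVS.smoothp
  obtain ⟨f, U, V, hU, hV, hqV, hf, -, himg, hfinj⟩ := hS q hq
  obtain ⟨x0, hx0U, hx0⟩ : q ∈ f '' U := himg ▸ ⟨hq, hqV⟩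
  have hfS : ∀ x ∈ U, f x ∈ S := fun x hx =>
    (himg ▸ mem_image_of_mem f hx : f x ∈ S ∩ V).1
  have hf2 : ContDiffOn ℝ 2 f U := hf
  have hfC : ∀ x ∈ U, ContDiffAt ℝ 2 f x := fun x hx => hf2.contDiffAt (hU.mem_nhds hx)
  have hfd : ∀ x ∈ U, DifferentiableAt ℝ f x := fun x hx =>
    (hfC x hx).differentiableAt two_ne_zero
  have hCm : ∀ p ∈ S, ContDiffAt ℝ 1 vm p := fun p hp =>
    hvm.contDiffAt (hWm.mem_nhds (hsubm (Or.inr hp)))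
  have hCp : ∀ p ∈ S, ContDiffAt ℝ 1 vp p := fun p hp =>
    hvp.contDiffAt (hWp.mem_nhds (hsubp (Or.inr hp)))
  have hdm : ∀ p ∈ S, DifferentiableAt ℝ vm p := fun p hp =>
    (hCm p hp).differentiableAt one_ne_zero
  have hdp : ∀ p ∈ S, DifferentiableAt ℝ vp p := fun p hp =>
    (hCp p hp).differentiableAt one_ne_zero
  have hdn : ∀ p ∈ S, DifferentiableAt ℝ n p := fun p hp =>
    (hn.contDiffAt (hW.mem_nhds (hSW hp))).differentiableAt one_ne_zero
  set u : E3 → E3 := fun p => vp p + vm p with hu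
  set w : E3 → E3 := fun p => vp p - vm p with hw
  have hdu : ∀ p ∈ S, DifferentiableAt ℝ u p := fun p hp => (hdp p hp).add (hdm p hp)
  have hdw : ∀ p ∈ S, DifferentiableAt ℝ w p := fun p hp => (hdp p hp).sub (hdm p hp)
  have hDu : ∀ p ∈ S, ∀ z, fderiv ℝ u p z = fderiv ℝ vp p z + fderiv ℝ vm p z := by
    intro p hp z
    rw [hu, fderiv_fun_add (hdp p hp) (hdm p hp)]; rfl
  have hDw : ∀ p ∈ S, ∀ z, fderiv ℝ w p z = fderiv ℝ vp p z - fderiv ℝ vm p z := by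
    intro p hp z
    rw [hw, fderiv_fun_sub (hdp p hp) (hdm p hp)]; rfl
  have hnp : ∀ p ∈ S, ⟪n p, vp p⟫ = (0 : ℝ) := fun p hp =>
    hn_orth p hp _ (hCVS.tangentp p hp)
  have hnm : ∀ p ∈ S, ⟪n p, vm p⟫ = (0 : ℝ) := fun p hp =>
    hn_orth p hp _ (hCVS.tangentm p hp)
  have hnu : ∀ p ∈ S, ⟪n p, u p⟫ = (0 : ℝ) := fun p hp => by
    rw [hu]; dsimp only; rw [inner_add_right, hnp p hp, hnm p hp, add_zero]
  have hnw : ∀ p ∈ S, ⟪n p, w p⟫ = (0 : ℝ) := fun p hp => by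
    rw [hw]; dsimp only; rw [inner_sub_right, hnp p hp, hnm p hp, sub_zero]
  have huw : ∀ p ∈ S, ⟪u p, w p⟫ = (0 : ℝ) := fun p hp => by
    have := hnorm p hp
    rw [hu, hw]
    dsimp only
    rw [inner_add_left, inner_sub_right, inner_sub_right, real_inner_self_eq_norm_sq,
      real_inner_self_eq_norm_sq, real_inner_comm (vp p) (vm p)]
    linarith
  have hDuw : ∀ p ∈ S, fderiv ℝ u p (w p) = 0 := fun p hp => by
    rw [hDu p hp]
    exact hCVS.strain p hp
  -- tangent vectors
  have hT : ∀ x ∈ U, ∀ e, IsTangentAt S (f x) (fderiv ℝ f x e) := fun x hx e =>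
    tangent_param S f U hU hfS x hx (hfd x hx) e
  have hTn : ∀ x ∈ U, ∀ e, ⟪n (f x), fderiv ℝ f x e⟫ = (0 : ℝ) := fun x hx e =>
    hn_orth _ (hfS x hx) _ (hT x hx e)
  have hR : ∀ x ∈ U, ∀ z, ⟪n (f x), z⟫ = (0 : ℝ) → ∃ e, fderiv ℝ f x e = z := fun x hx z hz =>
    range_param _ (hfinj x hx) _ (hn_unit _ (hfS x hx)) (hTn x hx) z hz
  have hTz : ∀ x ∈ U, ∀ z, ⟪n (f x), z⟫ = (0 : ℝ) → IsTangentAt S (f x) z := fun x hx z hz => by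
    obtain ⟨e, rfl⟩ := hR x hx z hz
    exact hT x hx e
  -- D w · u = 0
  have hDwu : ∀ x ∈ U, fderiv ℝ w (f x) (u (f x)) = 0 := by
    intro x hx
    have hp := hfS x hx
    obtain ⟨eu, heu⟩ := hR x hx _ (hnu _ hp)
    obtain ⟨ew, hew⟩ := hR x hx _ (hnw _ hp)
    have tu := hTz x hx _ (hnu _ hp)
    have tw := hTz x hx _ (hnw _ hp)
    have hnf : DifferentiableAt ℝ (fun y => n (f y)) x := (hdn _ hp).comp x (hfd x hx)
    have hII := II_symm f (fun y => n (f y)) U hU hf2 x hx hnf hTn eu ew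
    have hchain : fderiv ℝ (fun y => n (f y)) x = (fderiv ℝ n (f x)).comp (fderiv ℝ f x) :=
      fderiv_comp x (hdn _ hp) (hfd x hx)
    rw [hchain] at hII
    simp only [ContinuousLinearMap.comp_apply, heu, hew] at hII
    have t1 := tangent_inner S _ _ tu n w 0 (hdn _ hp) (hdw _ hp) hnw
    have t2 := tangent_inner S _ _ tw n u 0 (hdn _ hp) (hdu _ hp) hnu
    rw [hDuw _ hp, inner_zero_right, zero_add] at t2
    have hnormal : ⟪n (f x), fderiv ℝ w (f x) (u (f x))⟫ = (0 : ℝ) := by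
      rw [hII, t2, add_zero] at t1
      exact t1
    have tz := hTz x hx _ hnormal
    set z := fderiv ℝ w (f x) (u (f x)) with hz
    have s1 := tangent_inner S _ _ tz u w 0 (hdu _ hp) (hdw _ hp) huw
    have symp := sym_bdry vp Ωp Wp hWp hvp hCVS.curlp (f x) (hsubp (Or.inr hp)) (hCVS.clp hp)
    have symm' := sym_bdry vm Ωm Wm hWm hvm hCVS.curlm (f x) (hsubm (Or.inr hp)) (hCVS.clm hp)
    have symu : ⟪fderiv ℝ u (f x) z, w (f x)⟫ = (⟪z, fderiv ℝ u (f x) (w (f x))⟫ : ℝ) := by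
      rw [hDu _ hp, hDu _ hp, inner_add_left, inner_add_right, symp, symm']
    have symw : ⟪u (f x), fderiv ℝ w (f x) z⟫ = (⟪fderiv ℝ w (f x) (u (f x)), z⟫ : ℝ) := by
      rw [hDw _ hp, hDw _ hp, inner_sub_left, inner_sub_right, symp, symm']
    rw [symu, symw, hDuw _ hp, inner_zero_right, add_zero, ← hz] at s1
    exact inner_self_eq_zero.1 s1
  -- apply the splitting lemma
  have huq : u q ≠ 0 := fun h => hnc (eq_neg_of_add_eq_zero_left h)
  have hwq : w q ≠ 0 := fun h => hnb (sub_eq_zero.1 h)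
  have hfC1 : ContDiffAt ℝ 1 f x0 := (hfC x0 hx0U).of_le (by norm_num)
  have haC : ContDiffAt ℝ 1 (fun x => u (f x)) x0 := by
    have h1 := hfS x0 hx0U
    exact ((hCp _ h1).add (hCm _ h1)).comp x0 hfC1
  have hbC : ContDiffAt ℝ 1 (fun x => w (f x)) x0 := by
    have h1 := hfS x0 hx0U
    exact ((hCp _ h1).sub (hCm _ h1)).comp x0 hfC1
  have hDa : ∀ x ∈ U, ∀ e, fderiv ℝ (fun x => u (f x)) x e
      = fderiv ℝ u (f x) (fderiv ℝ f x e) := fun x hx e => by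
    have : fderiv ℝ (fun x => u (f x)) x = (fderiv ℝ u (f x)).comp (fderiv ℝ f x) :=
      fderiv_comp x (hdu _ (hfS x hx)) (hfd x hx)
    rw [this]; rfl
  have hDb : ∀ x ∈ U, ∀ e, fderiv ℝ (fun x => w (f x)) x e
      = fderiv ℝ w (f x) (fderiv ℝ f x e) := fun x hx e => by
    have : fderiv ℝ (fun x => w (f x)) x = (fderiv ℝ w (f x)).comp (fderiv ℝ f x) :=
      fderiv_comp x (hdw _ (hfS x hx)) (hfd x hx)
    rw [this]; rfl
  have hUn : ∀ᶠ x in 𝓝 x0, x ∈ U := hU.mem_nhds hx0U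
  have hane : ∀ᶠ x in 𝓝 x0, u (f x) ≠ 0 :=
    haC.continuousAt.eventually_ne (by simpa only [hx0] using huq)
  have hbne : ∀ᶠ x in 𝓝 x0, w (f x) ≠ 0 :=
    hbC.continuousAt.eventually_ne (by simpa only [hx0] using hwq)
  have hnq : n q ≠ 0 := by
    intro h
    have := hn_unit q hq
    simp [h] at this
  have hun : ⟪u q, n q⟫ = (0 : ℝ) := by rw [real_inner_comm]; exact hnu q hq
  have hwn : ⟪w q, n q⟫ = (0 : ℝ) := by rw [real_inner_comm]; exact hnw q hq
  obtain ⟨p, r, k1, k2, k3, k4, k5⟩ := key_split (fun x => u (f x)) (fun x => w (f x)) x0 (n q)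
    haC hbC
    (by
      filter_upwards [hUn, hbne] with x hx hb
      obtain ⟨e, he⟩ := hR x hx _ (hnw _ (hfS x hx))
      refine ⟨e, ?_, ?_⟩
      · rintro rfl
        exact hb (by rw [← he, map_zero])
      · rw [hDa x hx, he, hDuw _ (hfS x hx)])
    (by
      filter_upwards [hUn, hane] with x hx ha
      obtain ⟨e, he⟩ := hR x hx _ (hnu _ (hfS x hx))
      refine ⟨e, ?_, ?_⟩
      · rintro rfl
        exact ha (by rw [← he, map_zero])
      · rw [hDb x hx, he, hDwu x hx])
    (by filter_upwards [hUn] with x hx using huw _ (hfS x hx))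
    (by
      intro e h1 h2
      rw [hDa x0 hx0U, hx0] at h1
      rw [hDb x0 hx0U, hx0] at h2
      have tz := hT x0 hx0U e
      rw [hx0] at tz
      have i1 := tangent_inner S _ _ tz n u 0 (hdn _ hq) (hdu _ hq) hnu
      have i2 := tangent_inner S _ _ tz n w 0 (hdn _ hq) (hdw _ hq) hnw
      have i3 := tangent_inner S _ _ tz n n 1 (hdn _ hq) (hdn _ hq) (fun p hp => by
        rw [real_inner_self_eq_norm_sq, hn_unit p hp]; norm_num)
      rw [real_inner_comm, h1, zero_add] at i1
      rw [real_inner_comm, h2, zero_add] at i2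
      rw [real_inner_comm] at i3
      have hz := orth_zero _ _ _ _ huq hwq hnq (huw q hq) hun hwn i1 i2 (by linarith)
      have hz0 : fderiv ℝ f x0 e = 0 := by
        by_contra hne
        exact hna _ hne tz hz
      exact hfinj x0 hx0U (by rw [hz0, map_zero]))
  rw [hx0] at k3 k4
  exact final_contra (u q) (w q) (n q) p r huq hwq (hn_unit q hq) (huw q hq) hun hwn
    k1 k2 k3 k4 k5
end
end

section
/- Let 𝒮 ⊂ ℝ³ be a smooth compact closed connected embedded surface of genus strictly greater than 1 (equivalently, homeomorphic to neither the 2-sphere nor the 2-torus), and let (v₋, v₊) satisfy the CVS conditions (1)–(5). Then either v₊ = v₋ on some nonempty open subset of 𝒮, or v₊ = −v₋ on some nonempty open subset of 𝒮. -/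
noncomputable section

open MeasureTheory Filter Set
open scoped RealInnerProductSpace Topology

/-- Global existence for bounded Lipschitz fields. -/
lemma exists_global_curve {v : E3 → E3} {K : NNReal} (hv : LipschitzWith K v) {M : NNReal}
    (hM : ∀ x, ‖v x‖ ≤ M) (r : E3) :
    ∃ γ : ℝ → E3, γ 0 = r ∧ ∀ t, HasDerivAt γ (v (γ t)) t := by
  have key : ∀ n : ℕ, ∃ α : ℝ → E3, α 0 = r ∧
      ∀ t ∈ Ioo (-((n : ℝ) + 1)) ((n : ℝ) + 1), HasDerivAt α (v (α t)) t := by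
    intro n
    have h0 : (0 : ℝ) ∈ Icc (-((n : ℝ) + 1)) ((n : ℝ) + 1) := by
      constructor <;> linarith [(Nat.cast_nonneg n : (0 : ℝ) ≤ n)]
    have hpl : IsPicardLindelof (fun _ => v) (⟨0, h0⟩ : Icc (-((n : ℝ) + 1)) ((n : ℝ) + 1)) r
        (M * ((n : NNReal) + 1)) 0 M K := by
      refine ⟨fun t _ => hv.lipschitzOnWith, fun x _ => continuousOn_const,
        fun t _ x _ => hM x, ?_⟩
      simp
    obtain ⟨α, h1, h2⟩ := hpl.exists_eq_forall_mem_Icc_hasDerivWithinAt₀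
    exact ⟨α, h1, fun t ht => (h2 t (Ioo_subset_Icc_self ht)).hasDerivAt (Icc_mem_nhds ht.1 ht.2)⟩
  choose α hα0 hα using key
  have huniq : ∀ n m : ℕ, n ≤ m → EqOn (α n) (α m) (Ioo (-((n : ℝ) + 1)) ((n : ℝ) + 1)) := by
    intro n m hnm
    have hc : (n : ℝ) ≤ m := by exact_mod_cast hnm
    refine ODE_solution_unique_of_mem_Ioo (v := fun _ => v) (s := fun _ => univ) (K := K) (t₀ := 0)
      (fun t _ => hv.lipschitzOnWith) ?_ (fun t ht => ⟨hα n t ht, trivial⟩)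
      (fun t ht => ⟨hα m t ⟨by linarith [ht.1], by linarith [ht.2]⟩, trivial⟩) ?_
    · constructor <;> linarith [(Nat.cast_nonneg n : (0 : ℝ) ≤ n)]
    · rw [hα0, hα0]
  refine ⟨fun t => α ⌈|t|⌉₊ t, by simp [hα0], fun t => ?_⟩
  set N := ⌈|t|⌉₊ + 1 with hN
  have hNt : |t| ≤ ⌈|t|⌉₊ := Nat.le_ceil _
  have hval : ∀ s : ℝ, |s| < |t| + 1 → α ⌈|s|⌉₊ s = α N s := by
    intro s hs
    refine huniq _ _ ?_ ?_
    · refine Nat.ceil_le.mpr ?_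
      push_cast [hN]; linarith
    · have := Nat.le_ceil |s|
      have h2 := abs_lt.mp (show |s| < (⌈|s|⌉₊ : ℝ) + 1 by linarith)
      exact h2
  have hev : (fun s => α ⌈|s|⌉₊ s) =ᶠ[𝓝 t] α N := by
    have : ∀ᶠ s in 𝓝 t, |s| < |t| + 1 :=
      (continuous_abs.continuousAt).eventually_lt continuousAt_const (by linarith)
    exact this.mono hval
  have h1 : HasDerivAt (α N) (v (α N t)) t := by
    refine hα N t (abs_lt.mp ?_)
    push_cast [hN]; linarith
  have h2 := h1.congr_of_eventuallyEq hev
  simpa [hval t (by linarith)] using h2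

lemma hasDerivAt_rev {γ : ℝ → E3} {v : E3} {t : ℝ} (h : HasDerivAt γ v (-t)) :
    HasDerivAt (fun s => γ (-s)) (-v) t := by
  have h1 := HasDerivAt.scomp (h := fun s : ℝ => -s) t h (hasDerivAt_neg t)
  rw [neg_one_smul] at h1
  exact h1

lemma IsTangentAt.neg {S : Set E3} {p v : E3} (h : IsTangentAt S p v) : IsTangentAt S p (-v) := by
  obtain ⟨γ, h1, h2, h3⟩ := h
  refine ⟨fun t => γ (-t), fun t => h1 _, by simpa using h2, ?_⟩
  have h3' : HasDerivAt γ v (-0) := by simpa using h3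
  exact hasDerivAt_rev h3'

/-- Nagumo's invariance theorem, forward in time. -/
lemma nagumo_fwd {S : Set E3} (hS : IsCompact S) {v : E3 → E3} {K : NNReal}
    (hv : LipschitzWith K v) (htan : ∀ p ∈ S, IsTangentAt S p (v p)) {γ : ℝ → E3}
    (h0 : γ 0 ∈ S) (hγ : ∀ t, HasDerivAt γ (v (γ t)) t) {t : ℝ} (ht : 0 ≤ t) : γ t ∈ S := by
  have hne : S.Nonempty := ⟨_, h0⟩
  have hcont : Continuous γ := continuous_iff_continuousAt.mpr fun t => (hγ t).continuousAt
  have hd : Continuous fun t => Metric.infDist (γ t) S :=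
    (Metric.continuous_infDist_pt S).comp hcont
  have main := le_gronwallBound_of_liminf_deriv_right_le (f := fun t => Metric.infDist (γ t) S)
    (f' := fun t => K * Metric.infDist (γ t) S) (δ := 0) (K := K) (ε := 0) (a := 0) (b := t)
    hd.continuousOn ?_ (by simp [Metric.infDist_zero_of_mem h0]) (fun x _ => by simp) t ⟨ht, le_rfl⟩
  · rw [gronwallBound_ε0_δ0] at main
    have h1 : Metric.infDist (γ t) S = 0 := le_antisymm main Metric.infDist_nonneg
    exact (hS.isClosed.mem_iff_infDist_zero hne).mpr h1
  · intro x _ r hr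
    apply Eventually.frequently
    obtain ⟨q, hqS, hq⟩ := hS.exists_infDist_eq_dist hne (γ x)
    obtain ⟨c, hcS, hc0, hc⟩ := htan q hqS
    have hA : HasDerivAt (fun z => γ z - c (z - x)) (v (γ x) - v q) x := by
      refine (hγ x).sub ?_
      have hc' : HasDerivAt c (v q) (x - x) := by simpa using hc
      have h1 := HasDerivAt.scomp (h := fun z : ℝ => z - x) x hc' ((hasDerivAt_id x).sub_const x)
      rw [one_smul] at h1
      exact h1
    have hlt : ‖v (γ x) - v q‖ < r := by
      refine lt_of_le_of_lt ?_ hr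
      rw [← dist_eq_norm]
      simpa [hq] using hv.dist_le_mul (γ x) q
    have hB := (hA.hasDerivWithinAt (s := Ici x)).limsup_slope_norm_le hlt
    have hB' : ∀ᶠ z in 𝓝[>] x, ‖z - x‖⁻¹ * (‖γ z - c (z - x)‖ - ‖γ x - c (x - x)‖) < r :=
      hB.filter_mono (nhdsWithin_mono _ Ioi_subset_Ici_self)
    filter_upwards [hB', self_mem_nhdsWithin] with z hz hzx
    have hzx' : 0 < z - x := sub_pos.mpr hzx
    refine lt_of_le_of_lt ?_ hz
    rw [Real.norm_of_nonneg hzx'.le]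
    gcongr
    · rw [← dist_eq_norm]; exact Metric.infDist_le_dist_of_mem (hcS _)
    · rw [sub_self, hc0, hq, dist_eq_norm]

lemma nagumo {S : Set E3} (hS : IsCompact S) {v : E3 → E3} {K : NNReal}
    (hv : LipschitzWith K v) (htan : ∀ p ∈ S, IsTangentAt S p (v p)) {γ : ℝ → E3}
    (h0 : γ 0 ∈ S) (hγ : ∀ t, HasDerivAt γ (v (γ t)) t) (t : ℝ) : γ t ∈ S := by
  rcases le_total 0 t with ht | ht
  · exact nagumo_fwd hS hv htan h0 hγ ht
  · have h1 : ∀ t, HasDerivAt (fun t => γ (-t)) (-v (γ (-t))) t := fun t => by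
      exact hasDerivAt_rev (hγ (-t))
    have := nagumo_fwd hS (v := fun x => -v x) (K := K) hv.neg (fun p hp => (htan p hp).neg)
      (γ := fun t => γ (-t)) (by simpa using h0) h1 (t := -t) (by linarith)
    simpa using this

/-- A flow on `S` generated by `v`. -/
structure FlowOn (S : Set E3) (v : E3 → E3) (Φ : E3 → ℝ → E3) : Prop where
  zero : ∀ r ∈ S, Φ r 0 = r
  mem : ∀ r ∈ S, ∀ t, Φ r t ∈ S
  deriv : ∀ r ∈ S, ∀ t, HasDerivAt (Φ r) (v (Φ r t)) t

lemma exists_flowOn {S : Set E3} (hS : IsCompact S) {v : E3 → E3} {K M : NNReal}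
    (hv : LipschitzWith K v) (hM : ∀ x, ‖v x‖ ≤ M) (htan : ∀ p ∈ S, IsTangentAt S p (v p)) :
    ∃ Φ, FlowOn S v Φ := by
  choose Φ h0 h1 using exists_global_curve hv hM
  exact ⟨Φ, fun r _ => h0 r, fun r hr t => nagumo hS hv htan (by rw [h0]; exact hr) (h1 r) t,
    fun r _ t => h1 r t⟩

/-- Second order expansion of a flow. -/
lemma FlowOn.taylor {S : Set E3} {v : E3 → E3} {Φ} (h : FlowOn S v Φ) {K M : NNReal}
    (hv : LipschitzWith K v) (hM : ∀ x, ‖v x‖ ≤ M) {r : E3} (hr : r ∈ S) (t : ℝ) :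
    ‖Φ r t - r - t • v r‖ ≤ K * M * t ^ 2 := by
  have hcl : ∀ s, ‖Φ r s - r‖ ≤ M * |s| := by
    intro s
    have := Convex.norm_image_sub_le_of_norm_hasDerivWithin_le (f := Φ r) (s := univ)
      (f' := fun t => v (Φ r t)) (C := M) (x := 0) (y := s)
      (fun x _ => (h.deriv r hr x).hasDerivWithinAt) (fun x _ => hM _) convex_univ trivial trivial
    simpa [h.zero r hr] using this
  have := Convex.norm_image_sub_le_of_norm_hasDerivWithin_le (f := fun s => Φ r s - s • v r)
      (s := uIcc 0 t) (f' := fun s => v (Φ r s) - v r) (C := K * (M * |t|)) (x := 0) (y := t)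
      (fun x _ => ?_) (fun x hx => ?_) (convex_uIcc 0 t) left_mem_uIcc right_mem_uIcc
  · simp only [zero_smul, sub_zero, h.zero r hr, Real.norm_eq_abs] at this
    calc _ = ‖Φ r t - t • v r - r‖ := by congr 1; abel
      _ ≤ _ := this
      _ = _ := by rw [← sq_abs t]; ring
  · have h1 : HasDerivAt (fun s : ℝ => s • v r) ((1 : ℝ) • v r) x := (hasDerivAt_id x).smul_const _
    rw [one_smul] at h1
    exact ((h.deriv r hr x).sub h1).hasDerivWithinAt
  · have hxt : |x| ≤ |t| := by
      rcases le_total 0 t with ht | ht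
      · rw [uIcc_of_le ht] at hx; rw [abs_of_nonneg hx.1, abs_of_nonneg ht]; exact hx.2
      · rw [uIcc_of_ge ht] at hx; rw [abs_of_nonpos hx.2, abs_of_nonpos ht]; linarith [hx.1]
    rw [← dist_eq_norm]
    refine (hv.dist_le_mul _ _).trans ?_
    rw [dist_eq_norm]
    gcongr
    exact (hcl x).trans (by gcongr)

/-- The sum of two tangent fields is tangent. -/
lemma tangent_add {S : Set E3} {v w : E3 → E3} {Φ Ψ} (hΦ : FlowOn S v Φ) (hΨ : FlowOn S w Ψ)
    {K M : NNReal} (hv : LipschitzWith K v) (hM : ∀ x, ‖v x‖ ≤ M) {p : E3} (hp : p ∈ S) :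
    IsTangentAt S p (v p + w p) := by
  refine ⟨fun t => Φ (Ψ p t) t, fun t => hΦ.mem _ (hΨ.mem _ hp _) _, ?_, ?_⟩
  · show Φ (Ψ p 0) 0 = p
    rw [hΨ.zero p hp, hΦ.zero p hp]
  · have h1 : HasDerivAt (fun t => Φ (Ψ p t) t - Ψ p t - t • v (Ψ p t)) 0 0 := by
      rw [hasDerivAt_iff_isLittleO]
      have : (fun t : ℝ => Φ (Ψ p t) t - Ψ p t - t • v (Ψ p t)) =O[𝓝 0] fun t : ℝ => t ^ 2 :=
        Asymptotics.IsBigO.of_bound (K * M) (Eventually.of_forall fun t => by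
          simpa using hΦ.taylor hv hM (hΨ.mem p hp t) t)
      have h2 : (fun t : ℝ => t ^ 2) =o[𝓝 0] fun t : ℝ => t := by
        simpa using Asymptotics.isLittleO_pow_pow (𝕜 := ℝ) (m := 1) (n := 2) (by norm_num)
      simpa [hΨ.zero p hp, hΦ.zero p hp] using this.trans_isLittleO h2
    have h3 : HasDerivAt (fun t => t • v (Ψ p t)) (v p) 0 := by
      have hc : ContinuousAt (fun t => v (Ψ p t)) 0 :=
        hv.continuous.continuousAt.comp (hΨ.deriv p hp 0).continuousAt
      rw [hasDerivAt_iff_tendsto_slope]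
      have : Tendsto (fun t => v (Ψ p t)) (𝓝[≠] 0) (𝓝 (v p)) := by
        have := hc.tendsto.mono_left (nhdsWithin_le_nhds (s := {0}ᶜ))
        simpa [hΨ.zero p hp] using this
      refine this.congr' ?_
      filter_upwards [self_mem_nhdsWithin] with t ht
      simp only [slope, vsub_eq_sub, sub_zero, zero_smul]
      rw [smul_smul, inv_mul_cancel₀ ht, one_smul]
    have h4 := (h1.add h3).add (hΨ.deriv p hp 0)
    rw [hΨ.zero p hp, zero_add] at h4
    refine h4.congr_of_eventuallyEq (Eventually.of_forall fun t => ?_)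
    simp

lemma FlowOn.rev {S : Set E3} {v : E3 → E3} {Φ} (h : FlowOn S v Φ) :
    FlowOn S (fun x => -v x) (fun r t => Φ r (-t)) :=
  ⟨fun r hr => by simpa using h.zero r hr, fun r hr t => h.mem r hr _,
    fun r hr t => hasDerivAt_rev (h.deriv r hr (-t))⟩

lemma hasDerivAt_of_sq_bound {g : ℝ → E3} {t C : ℝ} {w : E3}
    (h : ∀ d, ‖g (t + d) - g t - d • w‖ ≤ C * d ^ 2) : HasDerivAt g w t := by
  rw [hasDerivAt_iff_isLittleO_nhds_zero]
  have h1 : (fun d : ℝ => g (t + d) - g t - d • w) =O[𝓝 0] fun d : ℝ => d ^ 2 :=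
    Asymptotics.IsBigO.of_bound C (Eventually.of_forall fun d => by simpa using h d)
  have h2 : (fun t : ℝ => t ^ 2) =o[𝓝 0] fun t : ℝ => t := by
    simpa using Asymptotics.isLittleO_pow_pow (𝕜 := ℝ) (m := 1) (n := 2) (by norm_num)
  exact h1.trans_isLittleO h2

lemma gronwallBound_lin (δ K ε x C : ℝ) :
    gronwallBound (δ * C) K (ε * C) x = gronwallBound δ K ε x * C := by
  unfold gronwallBound
  split_ifs <;> ring

lemma FlowOn.step {S : Set E3} {v : E3 → E3} {Φ} (h : FlowOn S v Φ) {K M : NNReal}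
    (hv : LipschitzWith K v) (hM : ∀ x, ‖v x‖ ≤ M) {r : E3} (hr : r ∈ S) (t d : ℝ) :
    ‖Φ r (t + d) - Φ r t - d • v (Φ r t)‖ ≤ K * M * d ^ 2 := by
  have hcl : ∀ s, ‖Φ r (t + s) - Φ r t‖ ≤ M * |s| := by
    intro s
    have := Convex.norm_image_sub_le_of_norm_hasDerivWithin_le (f := Φ r) (s := univ)
      (f' := fun t => v (Φ r t)) (C := M) (x := t) (y := t + s)
      (fun x _ => (h.deriv r hr x).hasDerivWithinAt) (fun x _ => hM _) convex_univ trivial trivial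
    simpa using this
  have := Convex.norm_image_sub_le_of_norm_hasDerivWithin_le
      (f := fun s => Φ r (t + s) - s • v (Φ r t))
      (s := uIcc 0 d) (f' := fun s => v (Φ r (t + s)) - v (Φ r t)) (C := K * (M * |d|))
      (x := 0) (y := d)
      (fun x _ => ?_) (fun x hx => ?_) (convex_uIcc 0 d) left_mem_uIcc right_mem_uIcc
  · simp only [zero_smul, sub_zero, add_zero, Real.norm_eq_abs] at this
    calc _ = ‖Φ r (t + d) - d • v (Φ r t) - Φ r t‖ := by congr 1; abel
      _ ≤ _ := this
      _ = _ := by rw [← sq_abs d]; ring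
  · have h1 : HasDerivAt (fun s : ℝ => s • v (Φ r t)) ((1 : ℝ) • v (Φ r t)) x :=
      (hasDerivAt_id x).smul_const _
    rw [one_smul] at h1
    exact (((h.deriv r hr (t + x)).comp_const_add t x).sub h1).hasDerivWithinAt
  · have hxt : |x| ≤ |d| := by
      rcases le_total 0 d with ht | ht
      · rw [uIcc_of_le ht] at hx; rw [abs_of_nonneg hx.1, abs_of_nonneg ht]; exact hx.2
      · rw [uIcc_of_ge ht] at hx; rw [abs_of_nonpos hx.2, abs_of_nonpos ht]; linarith [hx.1]
    rw [← dist_eq_norm]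
    refine (hv.dist_le_mul _ _).trans ?_
    rw [dist_eq_norm]
    gcongr
    exact (hcl x).trans (by gcongr)

/-- Two flows, each preserving the other's generator, act by translations. -/
lemma flows_translate_fwd {S : Set E3} {X Y : E3 → E3} {Φ Ψ} (hΦ : FlowOn S X Φ)
    (hΨ : FlowOn S Y Ψ) {K M : NNReal} (hX : LipschitzWith K X) (hY : LipschitzWith K Y)
    (hMY : ∀ x, ‖Y x‖ ≤ M) (hXY : ∀ r ∈ S, ∀ t, X (Ψ r t) = X r)
    (hYX : ∀ r ∈ S, ∀ t, Y (Φ r t) = Y r) {q : E3} (hq : q ∈ S) {s : ℝ} (hs : 0 ≤ s) (t : ℝ) :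
    Φ (Ψ q t) s = Φ q s + Ψ q t - q := by
  have hderiv : ∀ t, HasDerivAt (fun t => Φ (Ψ q t) s) (Y (Ψ q t)) t := by
    intro t
    refine hasDerivAt_of_sq_bound (C := gronwallBound (K * M) K (K * (K * M)) s) fun d => ?_
    have hm := hΨ.mem q hq t
    have hmd := hΨ.mem q hq (t + d)
    have := dist_le_of_approx_trajectories_ODE (v := fun _ => X) (K := K)
      (f := Φ (Ψ q (t + d))) (g := fun s => Φ (Ψ q t) s + d • Y (Ψ q t))
      (f' := fun s => X (Φ (Ψ q (t + d)) s)) (g' := fun s => X (Φ (Ψ q t) s))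
      (a := 0) (b := s) (εf := 0) (εg := K * (K * M) * d ^ 2) (δ := K * M * d ^ 2)
      (fun _ => hX)
      (continuousOn_of_forall_continuousAt fun x _ => (hΦ.deriv _ hmd x).continuousAt)
      (fun x _ => (hΦ.deriv _ hmd x).hasDerivWithinAt) (by simp)
      (continuousOn_of_forall_continuousAt fun x _ =>
        ((hΦ.deriv _ hm x).continuousAt.add continuousAt_const))
      (fun x _ => ((hΦ.deriv _ hm x).add_const _).hasDerivWithinAt)
      (fun x _ => ?_) ?_ s ⟨hs, le_rfl⟩
    · rw [zero_add, gronwallBound_lin, sub_zero, dist_eq_norm] at this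
      calc _ = ‖Φ (Ψ q (t + d)) s - (Φ (Ψ q t) s + d • Y (Ψ q t))‖ := by congr 1; abel
        _ ≤ _ := this
    · have hmx := hΦ.mem _ hm x
      have h1 := hΨ.taylor hY hMY hmx d
      rw [← hXY _ hmx d]
      refine (hX.dist_le_mul _ _).trans ?_
      rw [hYX _ hm] at h1
      rw [dist_eq_norm]
      calc _ = (K : ℝ) * ‖Ψ (Φ (Ψ q t) x) d - Φ (Ψ q t) x - d • Y (Ψ q t)‖ := by
            congr 2; abel
        _ ≤ K * (K * M * d ^ 2) := by gcongr
        _ = _ := by ring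
    · rw [hΦ.zero _ hmd, dist_eq_norm]
      simp only [hΦ.zero _ hm]
      calc _ = ‖Ψ q (t + d) - Ψ q t - d • Y (Ψ q t)‖ := by congr 1; abel
        _ ≤ _ := hΨ.step hY hMY hq t d
  have hconst : ∀ t, HasDerivAt (fun t => Φ (Ψ q t) s - Ψ q t) 0 t := fun t => by
    simpa using (hderiv t).fun_sub (hΨ.deriv q hq t)
  have := is_const_of_deriv_eq_zero (fun t => (hconst t).differentiableAt)
    (fun t => (hconst t).deriv) t 0
  simp only [hΨ.zero q hq] at this
  rw [sub_eq_iff_eq_add] at this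
  rw [this]; abel

lemma flows_translate {S : Set E3} {X Y : E3 → E3} {Φ Ψ} (hΦ : FlowOn S X Φ)
    (hΨ : FlowOn S Y Ψ) {K M : NNReal} (hX : LipschitzWith K X) (hY : LipschitzWith K Y)
    (hMY : ∀ x, ‖Y x‖ ≤ M) (hXY : ∀ r ∈ S, ∀ t, X (Ψ r t) = X r)
    (hYX : ∀ r ∈ S, ∀ t, Y (Φ r t) = Y r) {q : E3} (hq : q ∈ S) (s t : ℝ) :
    Φ (Ψ q t) s = Φ q s + Ψ q t - q := by
  rcases le_total 0 s with hs | hs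
  · exact flows_translate_fwd hΦ hΨ hX hY hMY hXY hYX hq hs t
  · have := flows_translate_fwd hΦ.rev hΨ (K := K) hX.neg hY hMY
      (fun r hr t => by rw [hXY r hr]) (fun r hr t => hYX r hr _) hq (s := -s) (by linarith) t
    simpa using this

/-- Velocities of the two orbits through `q` are orthogonal. -/
lemma flows_orth {S : Set E3} {X Y : E3 → E3} {Φ Ψ} (hΦ : FlowOn S X Φ)
    (hΨ : FlowOn S Y Ψ) {K M : NNReal} (hX : LipschitzWith K X) (hY : LipschitzWith K Y)
    (hMY : ∀ x, ‖Y x‖ ≤ M) (hXY : ∀ r ∈ S, ∀ t, X (Ψ r t) = X r)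
    (hYX : ∀ r ∈ S, ∀ t, Y (Φ r t) = Y r) (horth : ∀ p ∈ S, ⟪X p, Y p⟫ = 0)
    {q : E3} (hq : q ∈ S) (s t : ℝ) : ⟪X (Φ q s), Y (Ψ q t)⟫ = 0 := by
  have hm := hΨ.mem q hq t
  have h1 := hΦ.deriv _ hm s
  have h2 : HasDerivAt (fun s => Φ q s + Ψ q t - q) (X (Φ q s)) s :=
    ((hΦ.deriv q hq s).add_const _).sub_const _
  have h3 : Φ (Ψ q t) = fun s => Φ q s + Ψ q t - q :=
    funext fun s => flows_translate hΦ hΨ hX hY hMY hXY hYX hq s t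
  rw [h3] at h1
  have h4 := h1.unique h2
  rw [← h3] at h4
  have h5 : X (Φ (Ψ q t) s) = X (Φ q s) := by rw [← h4]
  rw [← h5, ← hYX _ hm s]
  exact horth _ (hΦ.mem _ hm s)

lemma flows_accel {S : Set E3} {X Y : E3 → E3} {Φ Ψ} (hΦ : FlowOn S X Φ)
    (hΨ : FlowOn S Y Ψ) {q : E3} (hq : q ∈ S)
    (hXd : DifferentiableAt ℝ X q) (hYd : DifferentiableAt ℝ Y q)
    (h : ∀ s t, ⟪X (Φ q s), Y (Ψ q t)⟫ = 0) :
    ⟪fderiv ℝ X q (X q), Y q⟫ = 0 ∧ ⟪X q, fderiv ℝ Y q (Y q)⟫ = 0 ∧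
      ⟪fderiv ℝ X q (X q), fderiv ℝ Y q (Y q)⟫ = 0 := by
  have z1 := hΦ.zero q hq
  have z2 := hΨ.zero q hq
  have dX : HasDerivAt (fun s => X (Φ q s)) (fderiv ℝ X q (X q)) 0 := by
    have h1 := hΦ.deriv q hq 0
    have h2 : HasFDerivAt X (fderiv ℝ X q) (Φ q 0) := by rw [z1]; exact hXd.hasFDerivAt
    have h3 := h2.comp_hasDerivAt (0 : ℝ) h1
    rw [z1] at h3
    exact h3
  have dY : HasDerivAt (fun s => Y (Ψ q s)) (fderiv ℝ Y q (Y q)) 0 := by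
    have h1 := hΨ.deriv q hq 0
    have h2 : HasFDerivAt Y (fderiv ℝ Y q) (Ψ q 0) := by rw [z2]; exact hYd.hasFDerivAt
    have h3 := h2.comp_hasDerivAt (0 : ℝ) h1
    rw [z2] at h3
    exact h3
  have A : ∀ w, (∀ s, ⟪X (Φ q s), w⟫ = 0) → ⟪fderiv ℝ X q (X q), w⟫ = 0 := by
    intro w hw
    have h1 := dX.inner ℝ (hasDerivAt_const (0 : ℝ) w)
    simp only [hw, inner_zero_right, zero_add] at h1
    exact h1.unique (hasDerivAt_const _ _)
  have B : ∀ w, (∀ t, ⟪w, Y (Ψ q t)⟫ = 0) → ⟪w, fderiv ℝ Y q (Y q)⟫ = 0 := by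
    intro w hw
    have h1 := (hasDerivAt_const (0 : ℝ) w).inner ℝ dY
    simp only [hw, inner_zero_left, add_zero] at h1
    exact h1.unique (hasDerivAt_const _ _)
  refine ⟨A _ fun s => ?_, B _ fun t => ?_, A _ fun s => B _ fun t => h s t⟩
  · simpa [z2] using h s 0
  · simpa [z1] using h 0 t

lemma FlowOn.lip_time {S : Set E3} {v : E3 → E3} {Φ} (h : FlowOn S v Φ) {M : NNReal}
    (hM : ∀ x, ‖v x‖ ≤ M) {r : E3} (hr : r ∈ S) (s t : ℝ) :
    ‖Φ r t - Φ r s‖ ≤ M * |t - s| := by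
  simpa using Convex.norm_image_sub_le_of_norm_hasDerivWithin_le (f := Φ r) (s := univ)
      (f' := fun t => v (Φ r t)) (C := M) (x := s) (y := t)
      (fun x _ => (h.deriv r hr x).hasDerivWithinAt) (fun x _ => hM _) convex_univ trivial trivial

lemma FlowOn.lip_fwd {S : Set E3} {v : E3 → E3} {Φ} (h : FlowOn S v Φ) {K : NNReal}
    (hv : LipschitzWith K v) {a b : E3} (ha : a ∈ S) (hb : b ∈ S) {t : ℝ} (ht : 0 ≤ t) :
    ‖Φ a t - Φ b t‖ ≤ ‖a - b‖ * Real.exp (K * t) := by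
  have := dist_le_of_trajectories_ODE (v := fun _ => v) (K := K) (f := Φ a) (g := Φ b)
    (a := 0) (b := t) (δ := ‖a - b‖) (fun _ => hv)
    (continuousOn_of_forall_continuousAt fun x _ => (h.deriv _ ha x).continuousAt)
    (fun x _ => (h.deriv _ ha x).hasDerivWithinAt)
    (continuousOn_of_forall_continuousAt fun x _ => (h.deriv _ hb x).continuousAt)
    (fun x _ => (h.deriv _ hb x).hasDerivWithinAt)
    (by rw [h.zero a ha, h.zero b hb, dist_eq_norm]) t ⟨ht, le_rfl⟩
  simpa [dist_eq_norm] using this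

lemma FlowOn.lip {S : Set E3} {v : E3 → E3} {Φ} (h : FlowOn S v Φ) {K : NNReal}
    (hv : LipschitzWith K v) {a b : E3} (ha : a ∈ S) (hb : b ∈ S) (t : ℝ) :
    ‖Φ a t - Φ b t‖ ≤ ‖a - b‖ * Real.exp (K * |t|) := by
  rcases le_total 0 t with ht | ht
  · rw [abs_of_nonneg ht]; exact h.lip_fwd hv ha hb ht
  · rw [abs_of_nonpos ht]
    simpa using h.rev.lip_fwd (K := K) hv.neg ha hb (t := -t) (by linarith)

lemma abs_le_of_uIcc {x s t : ℝ} (hx : x ∈ uIcc s t) : |x| ≤ max |s| |t| := by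
  rcases le_total s t with h | h
  · rw [uIcc_of_le h] at hx; exact abs_le_max_abs_abs hx.1 hx.2
  · rw [uIcc_of_ge h] at hx; rw [max_comm]; exact abs_le_max_abs_abs hx.1 hx.2

/-- displacement difference -/
lemma FlowOn.disp {S : Set E3} {v : E3 → E3} {Φ} (h : FlowOn S v Φ) {K : NNReal}
    (hv : LipschitzWith K v) {a b : E3} (ha : a ∈ S) (hb : b ∈ S) (t : ℝ) :
    ‖(Φ a t - a) - (Φ b t - b)‖ ≤ K * Real.exp (K * |t|) * |t| * ‖a - b‖ := by
  have := Convex.norm_image_sub_le_of_norm_hasDerivWithin_le (f := fun t => Φ a t - Φ b t)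
      (s := uIcc 0 t) (f' := fun t => v (Φ a t) - v (Φ b t))
      (C := K * (‖a - b‖ * Real.exp (K * |t|))) (x := 0) (y := t)
      (fun x _ => ((h.deriv a ha x).sub (h.deriv b hb x)).hasDerivWithinAt) (fun x hx => ?_)
      (convex_uIcc 0 t) left_mem_uIcc right_mem_uIcc
  · simp only [h.zero a ha, h.zero b hb, sub_zero, Real.norm_eq_abs] at this
    calc _ = ‖Φ a t - Φ b t - (a - b)‖ := by congr 1; abel
      _ ≤ _ := this
      _ = _ := by ring
  · rw [← dist_eq_norm]
    refine (hv.dist_le_mul _ _).trans ?_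
    rw [dist_eq_norm]
    gcongr
    refine (h.lip hv ha hb x).trans ?_
    have := abs_le_of_uIcc hx
    simp only [abs_zero, abs_nonneg, sup_of_le_right] at this
    gcongr

lemma FlowOn.time_strict {S : Set E3} {v : E3 → E3} {Φ} (h : FlowOn S v Φ) {K M : NNReal}
    (hv : LipschitzWith K v) (hM : ∀ x, ‖v x‖ ≤ M) {a p : E3} (ha : a ∈ S) (s t : ℝ) :
    ‖Φ a t - Φ a s - (t - s) • v p‖ ≤ K * (M * max |s| |t| + ‖a - p‖) * |t - s| := by
  have := Convex.norm_image_sub_le_of_norm_hasDerivWithin_le (f := fun t => Φ a t - t • v p)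
      (s := uIcc s t) (f' := fun t => v (Φ a t) - v p)
      (C := K * (M * max |s| |t| + ‖a - p‖)) (x := s) (y := t)
      (fun x _ => ?_) (fun x hx => ?_)
      (convex_uIcc s t) left_mem_uIcc right_mem_uIcc
  · simp only [Real.norm_eq_abs] at this
    calc _ = ‖Φ a t - t • v p - (Φ a s - s • v p)‖ := by congr 1; rw [sub_smul]; abel
      _ ≤ _ := this
  · have h1 : HasDerivAt (fun s : ℝ => s • v p) ((1 : ℝ) • v p) x := (hasDerivAt_id x).smul_const _
    rw [one_smul] at h1
    exact ((h.deriv a ha x).sub h1).hasDerivWithinAt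
  · rw [← dist_eq_norm]
    refine (hv.dist_le_mul _ _).trans ?_
    rw [dist_eq_norm]
    gcongr
    have h1 := h.lip_time hM ha 0 x
    rw [h.zero a ha, sub_zero] at h1
    calc ‖Φ a x - p‖ = ‖(Φ a x - a) + (a - p)‖ := by congr 1; abel
      _ ≤ ‖Φ a x - a‖ + ‖a - p‖ := norm_add_le _ _
      _ ≤ _ := by
        gcongr
        refine h1.trans ?_
        gcongr
        exact abs_le_of_uIcc hx

lemma flow_strict {S : Set E3} {v : E3 → E3} {Φ} (h : FlowOn S v Φ) {K M : NNReal}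
    (hv : LipschitzWith K v) (hM : ∀ x, ‖v x‖ ≤ M) {f : E2 → E3} {x₀ : E2} {A : E2 →L[ℝ] E3}
    (hf : HasStrictFDerivAt f A x₀) (hfS : ∀ᶠ x in 𝓝 x₀, f x ∈ S) :
    HasStrictFDerivAt (fun z : E2 × ℝ => Φ (f z.1) z.2)
      (A.comp (ContinuousLinearMap.fst ℝ E2 ℝ) +
        (ContinuousLinearMap.snd ℝ E2 ℝ).smulRight (v (f x₀))) (x₀, 0) := by
  have h1 : HasStrictFDerivAt (fun z : E2 × ℝ => f z.1)
      (A.comp (ContinuousLinearMap.fst ℝ E2 ℝ)) (x₀, 0) :=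
    HasStrictFDerivAt.comp (g := f) (x₀, (0 : ℝ)) hf hasStrictFDerivAt_fst
  have h2 : HasStrictFDerivAt (fun z : E2 × ℝ => Φ (f z.1) z.2 - f z.1)
      ((ContinuousLinearMap.snd ℝ E2 ℝ).smulRight (v (f x₀))) (x₀, 0) := by
    obtain ⟨L, s, hs, hL⟩ := hf.exists_lipschitzOnWith
    refine HasStrictFDerivAt.of_isLittleO ?_
    rw [Asymptotics.isLittleO_iff]
    intro c hc
    -- the two small quantities
    have e1 : Tendsto (fun z : (E2 × ℝ) × (E2 × ℝ) =>
        K * (M * max |z.2.2| |z.1.2| + ‖f z.1.1 - f x₀‖) +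
          K * Real.exp (K * |z.2.2|) * |z.2.2| * L) (𝓝 ((x₀, 0), (x₀, 0))) (𝓝 0) := by
      have hfc : ContinuousAt (fun z : (E2 × ℝ) × (E2 × ℝ) => f z.1.1) ((x₀, 0), (x₀, 0)) :=
        ContinuousAt.comp (f := fun z : (E2 × ℝ) × (E2 × ℝ) => z.1.1) (g := f)
          hf.continuousAt (by fun_prop)
      have : ContinuousAt (fun z : (E2 × ℝ) × (E2 × ℝ) =>
        K * (M * max |z.2.2| |z.1.2| + ‖f z.1.1 - f x₀‖) +
          K * Real.exp (K * |z.2.2|) * |z.2.2| * L) ((x₀, 0), (x₀, 0)) :=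
        (continuousAt_const.mul ((Continuous.continuousAt (by fun_prop)).add
          ((hfc.sub continuousAt_const).norm))).add (Continuous.continuousAt (by fun_prop))
      have h3 := this.tendsto
      simpa using h3
    have e2 : ∀ᶠ z : (E2 × ℝ) × (E2 × ℝ) in 𝓝 ((x₀, 0), (x₀, 0)), f z.1.1 ∈ S ∧ z.1.1 ∈ s := by
      have : Tendsto (fun z : (E2 × ℝ) × (E2 × ℝ) => z.1.1) (𝓝 ((x₀, 0), (x₀, 0))) (𝓝 x₀) :=
        Continuous.tendsto (by fun_prop) _
      exact this.eventually (hfS.and hs)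
    have e3 : ∀ᶠ z : (E2 × ℝ) × (E2 × ℝ) in 𝓝 ((x₀, 0), (x₀, 0)), f z.2.1 ∈ S ∧ z.2.1 ∈ s := by
      have : Tendsto (fun z : (E2 × ℝ) × (E2 × ℝ) => z.2.1) (𝓝 ((x₀, 0), (x₀, 0))) (𝓝 x₀) :=
        Continuous.tendsto (by fun_prop) _
      exact this.eventually (hfS.and hs)
    filter_upwards [e1.eventually (ge_mem_nhds hc), e2, e3] with z hz h2 h3
    obtain ⟨⟨x, t⟩, ⟨y, r⟩⟩ := z
    simp only at hz h2 h3 ⊢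
    have b1 := h.time_strict hv hM (p := f x₀) h2.1 r t
    have b2 := h.disp hv h2.1 h3.1 r
    have b3 : ‖f x - f y‖ ≤ L * ‖x - y‖ := by
      simpa [dist_eq_norm] using hL.dist_le_mul _ h2.2 _ h3.2
    have n1 : ‖x - y‖ ≤ ‖((x, t) : E2 × ℝ) - (y, r)‖ := by
      exact norm_fst_le (((x, t) : E2 × ℝ) - (y, r))
    have n2 : |t - r| ≤ ‖((x, t) : E2 × ℝ) - (y, r)‖ := by
      exact norm_snd_le (((x, t) : E2 × ℝ) - (y, r))
    have eq : Φ (f x) t - f x - (Φ (f y) r - f y) -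
        ((ContinuousLinearMap.snd ℝ E2 ℝ).smulRight (v (f x₀))) (((x, t) : E2 × ℝ) - (y, r)) =
        (Φ (f x) t - Φ (f x) r - (t - r) • v (f x₀)) +
          ((Φ (f x) r - f x) - (Φ (f y) r - f y)) := by
      simp only [ContinuousLinearMap.smulRight_apply, ContinuousLinearMap.coe_snd',
        Prod.mk_sub_mk]
      abel
    rw [eq]
    set N := ‖((x, t) : E2 × ℝ) - (y, r)‖
    calc _ ≤ _ := norm_add_le _ _
      _ ≤ K * (M * max |r| |t| + ‖f x - f x₀‖) * |t - r| +
          K * Real.exp (K * |r|) * |r| * (L * ‖x - y‖) := by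
        refine add_le_add b1 (b2.trans ?_)
        gcongr
      _ ≤ K * (M * max |r| |t| + ‖f x - f x₀‖) * N +
          K * Real.exp (K * |r|) * |r| * (L * N) := by gcongr
      _ = (K * (M * max |r| |t| + ‖f x - f x₀‖) +
          K * Real.exp (K * |r|) * |r| * L) * N := by ring
      _ ≤ c * N := by gcongr
  have h3 := h1.fun_add h2
  refine h3.congr_of_eventuallyEq (Eventually.of_forall fun z => ?_)
  simp

/-- A field with a flow on `S` is tangent to every sheet when `S` has no interior. -/
lemma tangent_sheet {S : Set E3} (hint : interior S = ∅) {v : E3 → E3} {Φ} (h : FlowOn S v Φ)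
    {K M : NNReal}
    (hv : LipschitzWith K v) (hM : ∀ x, ‖v x‖ ≤ M) {f : E2 → E3} {x₀ : E2} {A : E2 →L[ℝ] E3}
    (hf : HasStrictFDerivAt f A x₀) (hA : Function.Injective A)
    (hfS : ∀ᶠ x in 𝓝 x₀, f x ∈ S) : ∃ ξ, A ξ = v (f x₀) := by
  by_contra hcon
  push Not at hcon
  have hst := flow_strict h hv hM hf hfS
  set B := (A.comp (ContinuousLinearMap.fst ℝ E2 ℝ) +
        (ContinuousLinearMap.snd ℝ E2 ℝ).smulRight (v (f x₀))) with hB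
  have hBapp : ∀ x t, B (x, t) = A x + t • v (f x₀) := fun x t => by simp [hB]
  have hinj : Function.Injective (B : E2 × ℝ →ₗ[ℝ] E3) := by
    rw [← LinearMap.ker_eq_bot, LinearMap.ker_eq_bot']
    rintro ⟨x, t⟩ hz
    have hz' : A x + t • v (f x₀) = 0 := by rw [← hBapp]; exact hz
    by_cases ht : t = 0
    · subst ht
      have : A x = A 0 := by simpa using hz'
      rw [hA this]; rfl
    · exfalso
      refine hcon (-(t⁻¹ • x)) ?_
      rw [map_neg, map_smul, eq_neg_of_add_eq_zero_left hz', smul_neg, neg_neg, smul_smul,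
        inv_mul_cancel₀ ht, one_smul]
  have hsurj : Function.Surjective (B : E2 × ℝ →ₗ[ℝ] E3) := by
    refine (LinearMap.injective_iff_surjective_of_finrank_eq_finrank ?_).mp hinj
    simp
  have hmap := hst.map_nhds_eq_of_surj (LinearMap.range_eq_top.mpr hsurj)
  have hS : S ∈ 𝓝 (Φ (f x₀) 0) := by
    rw [← hmap, mem_map]
    have : Tendsto (fun z : E2 × ℝ => z.1) (𝓝 (x₀, 0)) (𝓝 x₀) := Continuous.tendsto (by fun_prop) _
    filter_upwards [this.eventually hfS] with z hz
    exact h.mem _ hz _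
  have : Φ (f x₀) 0 ∈ interior S := mem_interior_iff_mem_nhds.mpr hS
  rw [hint] at this
  exact this

/-- Normal part of the derivative of a tangent field equals the second fundamental form. -/
lemma normal_deriv {f : E2 → E3} {x₀ : E2} (hf : ContDiffAt ℝ 2 f x₀)
    (hinj : Function.Injective (fderiv ℝ f x₀)) {v : E3 → E3}
    (hv : DifferentiableAt ℝ v (f x₀))
    (htan : ∀ᶠ x in 𝓝 x₀, ∃ ξ, fderiv ℝ f x ξ = v (f x)) {ξ : E2}
    (hξ : fderiv ℝ f x₀ ξ = v (f x₀)) {n : E3} (hn : ∀ w, ⟪n, fderiv ℝ f x₀ w⟫ = 0) (ζ : E2) :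
    ⟪n, fderiv ℝ v (f x₀) (fderiv ℝ f x₀ ζ)⟫ = ⟪n, fderiv ℝ (fderiv ℝ f) x₀ ζ ξ⟫ := by
  have hfd : DifferentiableAt ℝ f x₀ := hf.differentiableAt (by norm_num)
  have hf1 : DifferentiableAt ℝ (fderiv ℝ f) x₀ :=
    (hf.fderiv_right (m := 1) (by norm_num)).differentiableAt (by norm_num)
  have dg : HasFDerivAt (fun x => v (f x) - fderiv ℝ f x ξ)
      ((fderiv ℝ v (f x₀)).comp (fderiv ℝ f x₀) -
        (ContinuousLinearMap.apply ℝ E3 ξ).comp (fderiv ℝ (fderiv ℝ f) x₀)) x₀ := by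
    refine (HasFDerivAt.comp (g := v) x₀ hv.hasFDerivAt hfd.hasFDerivAt).fun_sub ?_
    exact (ContinuousLinearMap.hasFDerivAt (ContinuousLinearMap.apply ℝ E3 ξ)).comp x₀
      hf1.hasFDerivAt
  have dN := (innerSL ℝ n).hasFDerivAt.comp x₀ dg
  -- the same function has zero derivative
  have hz : HasFDerivAt (fun x => ⟪n, v (f x) - fderiv ℝ f x ξ⟫) (0 : E2 →L[ℝ] ℝ) x₀ := by
    obtain ⟨C, hC0, hC⟩ : ∃ C : ℝ, 0 < C ∧ ∀ w, ‖w‖ ≤ C * ‖fderiv ℝ f x₀ w‖ := by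
      obtain ⟨C, hC0, hC⟩ := (LinearMap.exists_antilipschitzWith
        (fderiv ℝ f x₀ : E2 →ₗ[ℝ] E3) (LinearMap.ker_eq_bot.mpr hinj))
      refine ⟨C, by exact_mod_cast hC0, fun w => ?_⟩
      simpa [dist_eq_norm] using hC.le_mul_dist w 0
    have o1 : (fun x => v (f x) - fderiv ℝ f x ξ) =O[𝓝 x₀] fun x => x - x₀ := by
      have := dg.isBigO_sub
      simpa [hξ] using this
    have o2 : (fun x => fderiv ℝ f x - fderiv ℝ f x₀) =O[𝓝 x₀] fun x => x - x₀ :=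
      hf1.hasFDerivAt.isBigO_sub
    have small : ∀ᶠ x in 𝓝 x₀, ‖fderiv ℝ f x - fderiv ℝ f x₀‖ * C ≤ 1 / 2 := by
      have hc : ContinuousAt (fun x => ‖fderiv ℝ f x - fderiv ℝ f x₀‖ * C) x₀ :=
        ((hf1.continuousAt.sub continuousAt_const).norm).mul continuousAt_const
      have := hc.tendsto
      simp only [sub_self, norm_zero, zero_mul] at this
      exact this.eventually (ge_mem_nhds (by norm_num))
    have bnd : (fun x => ⟪n, v (f x) - fderiv ℝ f x ξ⟫) =O[𝓝 x₀]
        fun x => ‖fderiv ℝ f x - fderiv ℝ f x₀‖ * ‖v (f x) - fderiv ℝ f x ξ‖ := by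
      refine Asymptotics.IsBigO.of_bound (‖n‖ * (2 * C)) ?_
      filter_upwards [small, htan] with x hx ⟨η, hη⟩
      set D := fderiv ℝ f x
      set D₀ := fderiv ℝ f x₀
      have hη' : v (f x) - D ξ = D (η - ξ) := by rw [map_sub, hη]
      have hle : ‖η - ξ‖ ≤ 2 * C * ‖D (η - ξ)‖ := by
        have h1 := hC (η - ξ)
        have h2 : ‖D₀ (η - ξ)‖ ≤ ‖D (η - ξ)‖ + ‖D - D₀‖ * ‖η - ξ‖ := by
          have h3 : D₀ (η - ξ) = D (η - ξ) - (D - D₀) (η - ξ) := by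
            simp
          rw [h3]
          exact (norm_sub_le _ _).trans (by gcongr; exact (D - D₀).le_opNorm _)
        have h4 : C * ‖D₀ (η - ξ)‖ ≤ C * ‖D (η - ξ)‖ + (‖D - D₀‖ * C) * ‖η - ξ‖ := by
          calc _ ≤ C * (‖D (η - ξ)‖ + ‖D - D₀‖ * ‖η - ξ‖) := by gcongr
            _ = _ := by ring
        have h5 : (‖D - D₀‖ * C) * ‖η - ξ‖ ≤ 1 / 2 * ‖η - ξ‖ := by gcongr
        linarith
      rw [hη']
      have h6 : ⟪n, D (η - ξ)⟫ = ⟪n, (D - D₀) (η - ξ)⟫ := by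
        rw [sub_apply, inner_sub_right, hn, sub_zero]
      rw [h6, norm_mul, norm_norm, norm_norm]
      calc _ ≤ ‖n‖ * ‖(D - D₀) (η - ξ)‖ := norm_inner_le_norm _ _
        _ ≤ ‖n‖ * (‖D - D₀‖ * ‖η - ξ‖) := by gcongr; exact (D - D₀).le_opNorm _
        _ ≤ ‖n‖ * (‖D - D₀‖ * (2 * C * ‖D (η - ξ)‖)) := by gcongr
        _ = _ := by ring
    have o3 : (fun x => ⟪n, v (f x) - fderiv ℝ f x ξ⟫) =O[𝓝 x₀] fun x => ‖x - x₀‖ * ‖x - x₀‖ :=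
      bnd.trans (o2.norm_norm.mul o1.norm_norm)
    have o4 : (fun x => ‖x - x₀‖ * ‖x - x₀‖) =o[𝓝 x₀] fun x => x - x₀ := by
      have h1 : (fun x => ‖x - x₀‖) =o[𝓝 x₀] fun _ : E2 => (1 : ℝ) := by
        rw [Asymptotics.isLittleO_one_iff]
        have : ContinuousAt (fun x => ‖x - x₀‖) x₀ := by fun_prop
        simpa using this.tendsto
      have h2 := h1.mul_isBigO (Asymptotics.isBigO_refl (fun x => ‖x - x₀‖) (𝓝 x₀))
      simpa using h2.norm_right
    refine HasFDerivAt.of_isLittleO ?_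
    simpa [hξ] using o3.trans_isLittleO o4
  have := congrArg (fun T : E2 →L[ℝ] ℝ => T ζ) (dN.unique hz)
  simp at this
  linarith

lemma ker_unique {T : E3 →L[ℝ] E3} (hsym : ∀ u v, ⟪T u, v⟫ = ⟪u, T v⟫)
    (htr : LinearMap.trace ℝ E3 (T : E3 →ₗ[ℝ] E3) = 0) (hT : T ≠ 0) {k v : E3} (hk : ‖k‖ = 1)
    (hTk : T k = 0) (hTv : T v = 0) : ∃ c : ℝ, v = c • k := by
  by_contra hcon
  push Not at hcon
  set l0 := v - ⟪v, k⟫ • k with hl0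
  have hl0n : l0 ≠ 0 := fun h => hcon _ (sub_eq_zero.1 h)
  have hkk : ⟪k, k⟫ = 1 := by rw [real_inner_self_eq_norm_sq, hk]; norm_num
  have hl0k : ⟪k, l0⟫ = 0 := by
    rw [hl0, inner_sub_right, inner_smul_right, hkk, real_inner_comm]; ring
  have hn : ‖l0‖ ≠ 0 := norm_ne_zero_iff.2 hl0n
  set l := ‖l0‖⁻¹ • l0 with hl
  have hln : ‖l‖ = 1 := by rw [hl, norm_smul, norm_inv, norm_norm, inv_mul_cancel₀ hn]
  have hlk : ⟪k, l⟫ = 0 := by rw [hl, inner_smul_right, hl0k, mul_zero]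
  have hTl : T l = 0 := by rw [hl, hl0]; simp [hTk, hTv]
  let vv : Fin 3 → E3 := ![k, l, 0]
  have hor : Orthonormal ℝ (({0, 1} : Set (Fin 3)).domRestrict vv) := by
    constructor
    · rintro ⟨i, hi⟩
      rcases hi with rfl | rfl
      · exact hk
      · exact hln
    · rintro ⟨i, hi⟩ ⟨j, hj⟩ hij
      rcases hi with rfl | rfl <;> rcases hj with rfl | rfl
      · exact absurd rfl hij
      · exact hlk
      · exact (real_inner_comm k l).trans hlk
      · exact absurd rfl hij
  obtain ⟨b, hb⟩ := hor.exists_orthonormalBasis_extension_of_card_eq (by simp)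
  have b0 : T (b 0) = 0 := by rw [hb 0 (by simp)]; exact hTk
  have b1 : T (b 1) = 0 := by rw [hb 1 (by simp)]; exact hTl
  have htr2 := LinearMap.trace_eq_sum_inner (T : E3 →ₗ[ℝ] E3) b
  rw [htr, Fin.sum_univ_three] at htr2
  simp [b0, b1] at htr2
  have b2 : T (b 2) = 0 := by
    refine InnerProductSpace.ext_inner_left_basis b.toBasis fun i => ?_
    fin_cases i
    · simpa [b0] using (hsym (b 0) (b 2)).symm
    · simpa [b1] using (hsym (b 1) (b 2)).symm
    · simpa using htr2.symm
  apply hT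
  ext1 x
  rw [← b.sum_repr x, map_sum, Fin.sum_univ_three]
  simp [b0, b1, b2]

structure IsChart (S : Set E3) (f : E2 → E3) (U : Set E2) (V : Set E3) : Prop where
  oU : IsOpen U
  oV : IsOpen V
  cd : ContDiffOn ℝ 2 f U
  inj : InjOn f U
  img : f '' U = S ∩ V
  imm : ∀ x ∈ U, Function.Injective (fderiv ℝ f x)

lemma IsChart.mem {S f U V} (h : IsChart S f U V) {x} (hx : x ∈ U) : f x ∈ S :=
  (h.img ▸ mem_image_of_mem f hx : f x ∈ S ∩ V).1

lemma IsChart.memV {S f U V} (h : IsChart S f U V) {x} (hx : x ∈ U) : f x ∈ V :=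
  (h.img ▸ mem_image_of_mem f hx : f x ∈ S ∩ V).2

lemma IsChart.cda {S f U V} (h : IsChart S f U V) {x} (hx : x ∈ U) : ContDiffAt ℝ 2 f x :=
  h.cd.contDiffAt (h.oU.mem_nhds hx)

lemma IsChart.cts {S f U V} (h : IsChart S f U V) {x} (hx : x ∈ U) : ContinuousAt f x :=
  (h.cda hx).continuousAt

lemma IsChart.hfd {S f U V} (h : IsChart S f U V) {x} (hx : x ∈ U) :
    HasFDerivAt f (fderiv ℝ f x) x :=
  ((h.cda hx).differentiableAt (by norm_num)).hasFDerivAt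

lemma exists_chart {S : Set E3} (hS : IsSurface 2 S) {p : E3} (hp : p ∈ S) :
    ∃ f U V x, IsChart S f U V ∧ x ∈ U ∧ f x = p := by
  obtain ⟨f, U, V, h1, h2, h3, h4, h5, h6, h7⟩ := hS p hp
  have : p ∈ f '' U := by rw [h6]; exact ⟨hp, h3⟩
  obtain ⟨x, hx, hfx⟩ := this
  exact ⟨f, U, V, x, ⟨h1, h2, h4, h5, h6, h7⟩, hx, hfx⟩

structure Core (S : Set E3) (M Q : E3 → E3) (Φ : E3 → ℝ → E3) : Prop where
  cpt : IsCompact S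
  int : interior S = ∅
  surf : IsSurface 2 S
  hM : ContDiff ℝ 1 M
  hQ : ContDiff ℝ 1 Q
  sym : ∀ p ∈ S, ∀ u v, ⟪fderiv ℝ M p u, v⟫ = ⟪u, fderiv ℝ M p v⟫
  tr : ∀ p ∈ S, LinearMap.trace ℝ E3 (fderiv ℝ M p : E3 →ₗ[ℝ] E3) = 0
  MQ : ∀ p ∈ S, fderiv ℝ M p (Q p) = 0
  QM : ∀ p ∈ S, fderiv ℝ Q p (M p) = 0
  orth : ∀ p ∈ S, ⟪M p, Q p⟫ = 0
  fl : FlowOn S M Φ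
  tanM : ∀ f U V, IsChart S f U V → ∀ x ∈ U, ∃ ξ, fderiv ℝ f x ξ = M (f x)
  tanQ : ∀ f U V, IsChart S f U V → ∀ x ∈ U, ∃ ξ, fderiv ℝ f x ξ = Q (f x)
  dense : S ⊆ closure {p | p ∈ S ∧ M p ≠ 0 ∧ Q p ≠ 0}

def WW (M : E3 → E3) (q : E3) : E3 := fderiv ℝ M q (M q)

section
variable {S : Set E3} {M Q : E3 → E3} {Φ : E3 → ℝ → E3}

lemma Core.ctsD (h : Core S M Q Φ) : Continuous (fderiv ℝ M) :=
  h.hM.continuous_fderiv (by norm_num)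

lemma Core.ctsW (h : Core S M Q Φ) : Continuous (WW M) :=
  h.ctsD.clm_apply h.hM.continuous

lemma Core.hfd (h : Core S M Q Φ) (q : E3) : HasFDerivAt M (fderiv ℝ M q) q :=
  (h.hM.differentiable (by norm_num) q).hasFDerivAt

lemma WW_ne {q : E3} (hW : WW M q ≠ 0) : M q ≠ 0 := by
  intro h; apply hW; simp [WW, h]

lemma WW_ne' {q : E3} (hW : WW M q ≠ 0) : fderiv ℝ M q ≠ 0 := by
  intro h; apply hW; simp [WW, h]

lemma Core.kernel (h : Core S M Q Φ) {q : E3} (hq : q ∈ S) :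
    ∃ k : E3, ‖k‖ = 1 ∧ fderiv ℝ M q k = 0 ∧ ⟪k, M q⟫ = 0 := by
  let C : Set (E3 × E3) := (S ×ˢ Metric.sphere (0 : E3) 1) ∩
    {p | fderiv ℝ M p.1 p.2 = 0 ∧ ⟪p.2, M p.1⟫ = 0}
  have hC : IsCompact C := by
    refine (h.cpt.prod (isCompact_sphere _ _)).inter_right ?_
    refine IsClosed.and ?_ ?_
    · exact isClosed_eq ((h.ctsD.comp continuous_fst).clm_apply continuous_snd) continuous_const
    · exact isClosed_eq (continuous_snd.inner (h.hM.continuous.comp continuous_fst))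
        continuous_const
  have hcl : IsClosed (Prod.fst '' C) := (hC.image continuous_fst).isClosed
  have hsub : {p | p ∈ S ∧ M p ≠ 0 ∧ Q p ≠ 0} ⊆ Prod.fst '' C := by
    rintro p ⟨hp, -, hQ⟩
    have hn : ‖Q p‖ ≠ 0 := norm_ne_zero_iff.2 hQ
    refine ⟨(p, ‖Q p‖⁻¹ • Q p), ⟨⟨hp, ?_⟩, ?_, ?_⟩, rfl⟩
    · simp [norm_smul, inv_mul_cancel₀ hn]
    · simp [h.MQ p hp]
    · simp only [inner_smul_left]
      rw [real_inner_comm, h.orth p hp]; simp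
  obtain ⟨⟨p, k⟩, ⟨⟨-, hk⟩, h1, h2⟩, rfl⟩ := hcl.closure_subset_iff.2 hsub (h.dense hq)
  exact ⟨k, by simpa using hk, h1, h2⟩

lemma Core.ker_uniq (h : Core S M Q Φ) {q : E3} (hq : q ∈ S) (hW : WW M q ≠ 0) {k v : E3}
    (hk : ‖k‖ = 1) (hTk : fderiv ℝ M q k = 0) (hTv : fderiv ℝ M q v = 0) :
    ∃ c : ℝ, v = c • k :=
  ker_unique (h.sym q hq) (h.tr q hq) (WW_ne' hW) hk hTk hTv

lemma Core.ker_orth (h : Core S M Q Φ) {q : E3} (hq : q ∈ S) (hW : WW M q ≠ 0) {k : E3}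
    (hk : ‖k‖ = 1) (hTk : fderiv ℝ M q k = 0) : ⟪k, M q⟫ = 0 := by
  obtain ⟨k', hk', h1, h2⟩ := h.kernel hq
  obtain ⟨c, rfl⟩ := h.ker_uniq hq hW hk' h1 hTk
  simp [inner_smul_left, h2]

/-- straightening map -/
def HH (M : E3 → E3) (k y : E3) : E3 := M y + ⟪y, k⟫ • k

def DHH (M : E3 → E3) (k y : E3) : E3 →L[ℝ] E3 :=
  fderiv ℝ M y + ((innerSL ℝ k).smulRight k)

lemma DHH_apply (k y v : E3) : DHH M k y v = fderiv ℝ M y v + ⟪v, k⟫ • k := by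
  simp [DHH, real_inner_comm]

lemma HH_of_eq {k y y' : E3} (hM : M y' = M y) : HH M k y' = HH M k y + ⟪y' - y, k⟫ • k := by
  simp only [HH, hM, inner_sub_left, sub_smul]; abel

lemma Core.HH_fd (h : Core S M Q Φ) (k y : E3) : HasFDerivAt (HH M k) (DHH M k y) y := by
  have h1 := h.hfd y
  have h2 : HasFDerivAt (fun y : E3 => ⟪k, y⟫ • k) ((innerSL ℝ k).smulRight k) y :=
    ((innerSL ℝ k).hasFDerivAt).smul_const k
  have h3 := h1.add h2
  refine h3.congr_of_eventuallyEq (Eventually.of_forall fun y => ?_)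
  simp [HH, real_inner_comm]

lemma Core.HH_cd (h : Core S M Q Φ) (k : E3) : ContDiff ℝ 1 (HH M k) := by
  unfold HH
  exact h.hM.add ((contDiff_id.inner ℝ contDiff_const).smul contDiff_const)

lemma Core.DHH_inj (h : Core S M Q Φ) {q : E3} (hq : q ∈ S) (hW : WW M q ≠ 0) {k : E3}
    (hk : ‖k‖ = 1) (hTk : fderiv ℝ M q k = 0) {v : E3} (hv : DHH M k q v = 0) : v = 0 := by
  have hkk : ⟪k, k⟫ = 1 := by rw [real_inner_self_eq_norm_sq, hk]; norm_num
  rw [DHH_apply] at hv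
  have h1 : ⟪v, k⟫ = 0 := by
    have := congrArg (fun z => ⟪z, k⟫) hv
    simpa [inner_add_left, h.sym q hq, hTk, inner_smul_left, hk] using this
  rw [h1, zero_smul, add_zero] at hv
  obtain ⟨c, rfl⟩ := h.ker_uniq hq hW hk hTk hv
  rw [inner_smul_left, hkk] at h1
  simp at h1
  simp [h1]

structure Box (M : E3 → E3) (k z : E3) (R : ℝ) (O : Set E3) (σ : E3 → E3) : Prop where
  pos : 0 < R
  oO : IsOpen O
  zO : z ∈ O
  mapsσ : ∀ y ∈ Metric.ball (HH M k z) R, σ y ∈ O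
  mapsH : ∀ y ∈ O, HH M k y ∈ Metric.ball (HH M k z) R
  left : ∀ y ∈ O, σ (HH M k y) = y
  right : ∀ y ∈ Metric.ball (HH M k z) R, HH M k (σ y) = y
  cts : ∀ y ∈ Metric.ball (HH M k z) R, ContinuousAt σ y
  diff : ∀ y ∈ Metric.ball (HH M k z) R, DifferentiableAt ℝ σ y
  inj : ∀ y ∈ O, ∀ v, DHH M k y v = 0 → v = 0

lemma Core.box (h : Core S M Q Φ) {z : E3} (hz : z ∈ S) (hW : WW M z ≠ 0) {k : E3}
    (hk : ‖k‖ = 1) (hTk : fderiv ℝ M z k = 0) {N : Set E3} (hN : N ∈ 𝓝 z) :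
    ∃ R O σ, Box M k z R O σ ∧ O ⊆ N := by
  have hinj : Function.Injective (DHH M k z) := by
    rw [injective_iff_map_eq_zero]
    exact fun v hv => h.DHH_inj hz hW hk hTk hv
  let e0 : E3 ≃L[ℝ] E3 :=
    (LinearEquiv.ofInjectiveEndo (DHH M k z : E3 →ₗ[ℝ] E3) hinj).toContinuousLinearEquiv
  have he0 : (e0 : E3 →L[ℝ] E3) = DHH M k z := by
    ext1 v; rfl
  have hctsD : Continuous (DHH M k) := h.ctsD.add continuous_const
  have hinv : ∀ᶠ y in 𝓝 z, DHH M k y ∈ range ((↑) : (E3 ≃L[ℝ] E3) → E3 →L[ℝ] E3) := by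
    apply hctsD.continuousAt
    rw [← he0]
    exact ContinuousLinearEquiv.nhds e0
  have hcd : ContDiffAt ℝ 1 (HH M k) z := (h.HH_cd k).contDiffAt
  have hf' : HasFDerivAt (HH M k) (e0 : E3 →L[ℝ] E3) z := he0 ▸ h.HH_fd k z
  obtain ⟨e, hcoe, hzs⟩ : ∃ e : OpenPartialHomeomorph E3 E3, (e : E3 → E3) = HH M k ∧
      z ∈ e.source := ⟨hcd.toOpenPartialHomeomorph (HH M k) hf' (by norm_num),
    hcd.toOpenPartialHomeomorph_coe hf' (by norm_num),
    hcd.mem_toOpenPartialHomeomorph_source hf' (by norm_num)⟩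
  have hzt : HH M k z ∈ e.target := by
    have := e.map_source hzs; rwa [hcoe] at this
  obtain ⟨N', hN'sub, hN'o, hzN'⟩ := mem_nhds_iff.1 (inter_mem hN hinv)
  have hsz : e.symm (HH M k z) = z := by
    have := e.left_inv hzs; rwa [hcoe] at this
  have hev : ∀ᶠ y in 𝓝 (HH M k z), y ∈ e.target ∧ e.symm y ∈ N' := by
    refine Filter.Eventually.and (e.open_target.mem_nhds hzt) ?_
    have := e.continuousAt_symm hzt
    apply this
    rw [hsz]; exact hN'o.mem_nhds hzN'
  obtain ⟨R, hR, hRsub⟩ := Metric.eventually_nhds_iff_ball.1 hev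
  have hleft : ∀ y ∈ e.source, e.symm (HH M k y) = y := by
    intro y hy
    have := e.left_inv hy; rwa [hcoe] at this
  have hright : ∀ y ∈ Metric.ball (HH M k z) R, HH M k (e.symm y) = y := by
    intro y hy
    have := e.right_inv (hRsub y hy).1; rwa [hcoe] at this
  obtain ⟨O, hO, hOo⟩ : ∃ O : Set E3, (∀ y, y ∈ O ↔ y ∈ e.source ∧
      HH M k y ∈ Metric.ball (HH M k z) R) ∧ IsOpen O :=
    ⟨e.source ∩ HH M k ⁻¹' Metric.ball (HH M k z) R, fun y => Iff.rfl,
      e.open_source.inter (Metric.isOpen_ball.preimage (h.HH_cd k).continuous)⟩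
  have hON : ∀ y ∈ O, y ∈ N' := by
    intro y hy
    obtain ⟨hy1, hy2⟩ := (hO y).1 hy
    have := (hRsub _ hy2).2
    rwa [hleft y hy1] at this
  refine ⟨R, O, e.symm, ⟨hR, hOo, (hO z).2 ⟨hzs, Metric.mem_ball_self hR⟩, ?_,
    fun y hy => ((hO y).1 hy).2, fun y hy => hleft y ((hO y).1 hy).1, hright,
    fun y hy => e.continuousAt_symm (hRsub y hy).1, ?_, ?_⟩, ?_⟩
  · intro y hy
    refine (hO _).2 ⟨e.map_target (hRsub y hy).1, ?_⟩
    rw [hright y hy]; exact hy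
  · intro y hy
    obtain ⟨ey, hey⟩ := (hN'sub (hRsub y hy).2).2
    have := e.contDiffAt_symm (n := 1) (f₀' := ey) (hRsub y hy).1
      (by rw [hcoe, hey]; exact h.HH_fd k _) (by rw [hcoe]; exact (h.HH_cd k).contDiffAt)
    exact this.differentiableAt (by norm_num)
  · intro y hy v hv
    obtain ⟨ey, hey⟩ := (hN'sub (hON y hy)).2
    rw [← hey] at hv
    simpa using hv
  · exact fun y hy => (hN'sub (hON y hy)).1

end

lemma rank_one_E2 {L : E2 →L[ℝ] E3} {ζ ξ : E2} (hζ : ζ ≠ 0) (hLζ : L ζ = 0) (hξ : L ξ ≠ 0)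
    (η : E2) : ∃ c : ℝ, L η = c • L ξ := by
  let L' : E2 →ₗ[ℝ] E3 := L
  have h1 := LinearMap.finrank_range_add_finrank_ker L'
  have h2 : Module.finrank ℝ E2 = 2 := by simp
  have h3 : 0 < Module.finrank ℝ (LinearMap.ker L') := by
    rw [Module.finrank_pos_iff_exists_ne_zero]
    exact ⟨⟨ζ, hLζ⟩, fun h => hζ (congrArg Subtype.val h)⟩
  have h5 : 0 < Module.finrank ℝ (LinearMap.range L') := by
    rw [Module.finrank_pos_iff_exists_ne_zero]
    exact ⟨⟨L ξ, ξ, rfl⟩, fun h => hξ (congrArg Subtype.val h)⟩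
  have h4 : Module.finrank ℝ (LinearMap.range L') = 1 := by omega
  obtain ⟨c, hc⟩ := exists_smul_eq_of_finrank_eq_one h4
    (x := (⟨L ξ, ξ, rfl⟩ : LinearMap.range L')) (fun h => hξ (congrArg Subtype.val h))
    (⟨L η, η, rfl⟩ : LinearMap.range L')
  exact ⟨c, (congrArg Subtype.val hc).symm⟩

def EC (S : Set E3) (M : E3 → E3) (q : E3) : Prop :=
  ∃ (γ : ℝ → E3) (v : E3), γ 0 = q ∧ HasStrictDerivAt γ v 0 ∧ v ≠ 0 ∧
    ∀ᶠ t in 𝓝 (0 : ℝ), γ t ∈ S ∧ M (γ t) = M q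

section
variable {S : Set E3} {M Q : E3 → E3} {Φ : E3 → ℝ → E3}

lemma Core.ec_vert (h : Core S M Q Φ) {k z R O σ} (B : Box M k z R O σ) {q : E3}
    (hq : EC S M q) (hqO : q ∈ O) :
    ∀ᶠ t in 𝓝 (0 : ℝ), σ (HH M k q + t • k) ∈ S ∧ M (σ (HH M k q + t • k)) = M q := by
  obtain ⟨γ, v, h0, hd, hv, hev⟩ := hq
  have hDM : fderiv ℝ M q v = 0 := by
    have h1 : HasDerivAt (fun t => M (γ t)) (fderiv ℝ M q v) 0 := by
      have := (h0 ▸ h.hfd q : HasFDerivAt M (fderiv ℝ M q) (γ 0)).comp_hasDerivAt 0 hd.hasDerivAt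
      exact this
    have h2 : HasDerivAt (fun t => M (γ t)) 0 0 :=
      (hasDerivAt_const (0 : ℝ) (M q)).congr_of_eventuallyEq (hev.mono fun t ht => ht.2)
    exact h1.unique h2
  have hvk : ⟪v, k⟫ ≠ 0 := by
    intro hvk
    exact hv (B.inj q hqO v (by rw [DHH_apply, hDM, hvk]; simp))
  have hg : HasStrictDerivAt (fun t => ⟪k, γ t - q⟫) ⟪k, v⟫ 0 := by
    have := HasStrictFDerivAt.comp_hasStrictDerivAt (0 : ℝ)
      (f := fun t => γ t - q) (innerSL ℝ k).hasStrictFDerivAt (hd.sub_const q)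
    exact this
  have hmap := hg.map_nhds_eq (by rwa [real_inner_comm])
  have hg0 : ⟪k, γ 0 - q⟫ = 0 := by simp [h0]
  rw [hg0] at hmap
  have hevO : ∀ᶠ t in 𝓝 (0 : ℝ), γ t ∈ O :=
    hd.hasDerivAt.continuousAt (B.oO.mem_nhds (h0 ▸ hqO))
  have himg := image_mem_map (m := fun t => ⟪k, γ t - q⟫) (hev.and hevO)
  rw [hmap] at himg
  filter_upwards [himg]
  rintro _ ⟨t, ⟨⟨ht1, ht2⟩, ht3⟩, rfl⟩
  have : HH M k q + ⟪k, γ t - q⟫ • k = HH M k (γ t) := by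
    rw [HH_of_eq ht2, real_inner_comm]
  simp only [this, B.left _ ht3]
  exact ⟨ht1, ht2⟩

lemma Core.sat (h : Core S M Q Φ) {k z R O σ} (B : Box M k z R O σ) {J : Set ℝ}
    (hJ : IsPreconnected J) {p : E3} (hb : ∀ t ∈ J, p + t • k ∈ Metric.ball (HH M k z) R)
    (hEC : ∀ t ∈ J, σ (p + t • k) ∈ S → EC S M (σ (p + t • k)))
    {t₀ : ℝ} (ht₀ : t₀ ∈ J) (hS : σ (p + t₀ • k) ∈ S) :
    ∀ t ∈ J, σ (p + t • k) ∈ S ∧ M (σ (p + t • k)) = M (σ (p + t₀ • k)) := by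
  have : PreconnectedSpace J := Subtype.preconnectedSpace hJ
  have hcts : Continuous (fun t : J => σ (p + (t : ℝ) • k)) := by
    rw [continuous_iff_continuousAt]
    intro t
    have h1 := B.cts _ (hb t t.2)
    exact ContinuousAt.comp (f := fun t : J => p + (t : ℝ) • k) h1 (by fun_prop)
  let P : Set J := {t | σ (p + (t : ℝ) • k) ∈ S ∧ M (σ (p + (t : ℝ) • k)) = M (σ (p + t₀ • k))}
  have hcl : IsClosed P := (h.cpt.isClosed.preimage hcts).inter
    (isClosed_eq (h.hM.continuous.comp hcts) continuous_const)
  have hop : IsOpen P := by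
    rw [isOpen_iff_mem_nhds]
    rintro ⟨t, ht⟩ ⟨h1, h2⟩
    have h3 := h.ec_vert B (hEC t ht h1) (B.mapsσ _ (hb t ht))
    rw [B.right _ (hb t ht)] at h3
    have h4 : Tendsto (fun s : J => (s : ℝ) - t) (𝓝 ⟨t, ht⟩) (𝓝 0) := by
      have : ContinuousAt (fun s : J => (s : ℝ) - t) ⟨t, ht⟩ := by fun_prop
      simpa [ContinuousAt] using this
    filter_upwards [h4.eventually h3] with s hs
    have : p + t • k + ((s : ℝ) - t) • k = p + (s : ℝ) • k := by module
    rw [this] at hs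
    exact ⟨hs.1, hs.2.trans h2⟩
  have huniv : P = univ := IsClopen.eq_univ ⟨hcl, hop⟩ ⟨⟨t₀, ht₀⟩, hS, rfl⟩
  intro t ht
  have : (⟨t, ht⟩ : J) ∈ P := by rw [huniv]; trivial
  exact this

/-- full saturation in a box where every point of `S` is EC -/
lemma Core.sat_box (h : Core S M Q Φ) {k z R O σ} (B : Box M k z R O σ)
    (hEC : ∀ q ∈ O, q ∈ S → EC S M q) {q : E3} (hqO : q ∈ O) (hqS : q ∈ S) {t : ℝ}
    (ht : HH M k q + t • k ∈ Metric.ball (HH M k z) R) :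
    σ (HH M k q + t • k) ∈ S ∧ M (σ (HH M k q + t • k)) = M q := by
  have h0 : σ (HH M k q + (0 : ℝ) • k) = q := by simpa using B.left q hqO
  have := h.sat B (J := {t | HH M k q + t • k ∈ Metric.ball (HH M k z) R}) (p := HH M k q)
    (t₀ := 0) ?_ (fun t ht => ht) (fun t ht => hEC _ (B.mapsσ _ ht))
    (by simpa using B.mapsH q hqO) (by rwa [h0]) t ht
  · rwa [h0] at this
  · apply Convex.isPreconnected
    have : Convex ℝ ((AffineMap.lineMap (HH M k q) (HH M k q + k)) ⁻¹'
        Metric.ball (HH M k z) R) := (convex_ball _ _).affine_preimage _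
    convert this using 1
    ext t
    simp [AffineMap.lineMap_apply, add_comm]

def PP (M : E3 → E3) (W0 k : E3) (f : E2 → E3) (x : E2) : ℝ × ℝ := (⟪W0, M (f x)⟫, ⟪k, f x⟫)

def DPP (M : E3 → E3) (W0 k : E3) (f : E2 → E3) (x : E2) : E2 →L[ℝ] ℝ × ℝ :=
  ((innerSL ℝ W0).comp ((fderiv ℝ M (f x)).comp (fderiv ℝ f x))).prod
    ((innerSL ℝ k).comp (fderiv ℝ f x))

lemma Core.PP_fd (h : Core S M Q Φ) {f U V} (hc : IsChart S f U V) {x} (hx : x ∈ U) (W0 k : E3) :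
    HasFDerivAt (PP M W0 k f) (DPP M W0 k f x) x := by
  have h1 := (h.hfd (f x)).comp x (hc.hfd hx)
  exact ((innerSL ℝ W0).hasFDerivAt.comp x h1).prodMk
    ((innerSL ℝ k).hasFDerivAt.comp x (hc.hfd hx))

lemma Core.PP_cd (h : Core S M Q Φ) {f U V} (hc : IsChart S f U V) {x} (hx : x ∈ U) (W0 k : E3) :
    ContDiffAt ℝ 1 (PP M W0 k f) x := by
  have h0 : ContDiffAt ℝ 1 f x := (hc.cda hx).of_le (by norm_num)
  have h1 : ContDiffAt ℝ 1 (fun x => M (f x)) x := h.hM.contDiffAt.comp x h0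
  exact (contDiffAt_const.inner ℝ h1).prodMk (contDiffAt_const.inner ℝ h0)

/-- tangent points of a chart -/
def Tng (M : E3 → E3) (f : E2 → E3) (x : E2) : Prop :=
  ∃ ζ : E2, ζ ≠ 0 ∧ fderiv ℝ M (f x) (fderiv ℝ f x ζ) = 0

lemma Core.PP_homeo (h : Core S M Q Φ) {f U V} (hc : IsChart S f U V) {x} (hx : x ∈ U)
    (hW : WW M (f x) ≠ 0) {k : E3} (hk : ‖k‖ = 1) (hTk : fderiv ℝ M (f x) k = 0)
    (ht : Tng M f x) :
    ∃ e : OpenPartialHomeomorph E2 (ℝ × ℝ), (e : E2 → ℝ × ℝ) = PP M (WW M (f x)) k f ∧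
      x ∈ e.source ∧ ContDiffAt ℝ 1 e.symm (PP M (WW M (f x)) k f x) := by
  set W0 := WW M (f x) with hW0
  obtain ⟨ζ, hζ, hζ0⟩ := ht
  obtain ⟨ξ, hξ⟩ := h.tanM f U V hc x hx
  obtain ⟨c, hcζ⟩ := h.ker_uniq (hc.mem hx) hW hk hTk hζ0
  have hkk : ⟪k, k⟫ = 1 := by rw [real_inner_self_eq_norm_sq, hk]; norm_num
  have hc0 : c ≠ 0 := by
    rintro rfl
    rw [zero_smul] at hcζ
    exact hζ (hc.imm x hx (by rw [hcζ, map_zero]))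
  have hWW : ⟪W0, W0⟫ ≠ 0 := by simpa using hW
  have hsurj : Function.Surjective (DPP M W0 k f x) := by
    rintro ⟨a, b⟩
    refine ⟨(a / ⟪W0, W0⟫) • ξ + ((b - (a / ⟪W0, W0⟫) * ⟪k, M (f x)⟫) / c) • ζ, ?_⟩
    have e1 : DPP M W0 k f x ξ = (⟪W0, W0⟫, ⟪k, M (f x)⟫) := by
      simp [DPP, hξ, hW0, WW]
    have e2 : DPP M W0 k f x ζ = (0, c) := by
      simp only [DPP, ContinuousLinearMap.prod_apply, ContinuousLinearMap.comp_apply, hcζ]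
      simp [hTk, hk]
    rw [map_add, map_smul, map_smul, e1, e2]
    ext
    · simp only [Prod.smul_mk, smul_eq_mul, Prod.mk_add_mk]; field_simp; ring
    · simp only [Prod.smul_mk, smul_eq_mul, Prod.mk_add_mk]; field_simp; ring
  have hfr : Module.finrank ℝ E2 = Module.finrank ℝ (ℝ × ℝ) := by simp
  have hinj : Function.Injective (DPP M W0 k f x) :=
    (LinearMap.injective_iff_surjective_of_finrank_eq_finrank
      (f := (DPP M W0 k f x : E2 →ₗ[ℝ] ℝ × ℝ)) hfr).2 hsurj
  let e0 : E2 ≃L[ℝ] ℝ × ℝ := (LinearEquiv.ofBijective (DPP M W0 k f x : E2 →ₗ[ℝ] ℝ × ℝ)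
    ⟨hinj, hsurj⟩).toContinuousLinearEquiv
  have he0 : (e0 : E2 →L[ℝ] ℝ × ℝ) = DPP M W0 k f x := by
    ext1 v; rfl
  have hcd := h.PP_cd hc hx W0 k
  have hf' : HasFDerivAt (PP M W0 k f) (e0 : E2 →L[ℝ] ℝ × ℝ) x := he0 ▸ h.PP_fd hc hx W0 k
  exact ⟨hcd.toOpenPartialHomeomorph _ hf' (by norm_num),
    hcd.toOpenPartialHomeomorph_coe hf' (by norm_num),
    hcd.mem_toOpenPartialHomeomorph_source hf' (by norm_num),
    hcd.to_localInverse hf' (by norm_num)⟩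

lemma Core.sheet_ec (h : Core S M Q Φ) {f U V} (hc : IsChart S f U V) {x₁} (hx : x₁ ∈ U)
    (hW : WW M (f x₁) ≠ 0) (ht : ∀ᶠ x in 𝓝 x₁, Tng M f x) : EC S M (f x₁) := by
  obtain ⟨k, hk, hTk, -⟩ := h.kernel (hc.mem hx)
  obtain ⟨e, he, hxe, hcd⟩ := h.PP_homeo hc hx hW hk hTk ht.self_of_nhds
  set W0 := WW M (f x₁) with hW0
  set α : ℝ → E2 := fun t => e.symm (PP M W0 k f x₁ + t • (0, 1)) with hα
  have hβ : ContDiff ℝ 1 (fun t : ℝ => PP M W0 k f x₁ + t • ((0, 1) : ℝ × ℝ)) := by fun_prop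
  have hαcd : ContDiffAt ℝ 1 α 0 :=
    ContDiffAt.comp (0 : ℝ) (g := e.symm) (f := fun t : ℝ => PP M W0 k f x₁ + t • ((0, 1) : ℝ × ℝ))
      (by simpa using hcd) hβ.contDiffAt
  have hα0 : α 0 = x₁ := by
    have := e.left_inv hxe
    rw [he] at this
    simp only [hα, zero_smul, add_zero, this]
  have hαc : ContinuousAt α 0 := hαcd.continuousAt
  have hαtgt : ∀ᶠ t in 𝓝 (0 : ℝ), PP M W0 k f (α t) = PP M W0 k f x₁ + t • ((0, 1) : ℝ × ℝ) := by
    have h1 : ∀ᶠ t in 𝓝 (0 : ℝ), PP M W0 k f x₁ + t • ((0, 1) : ℝ × ℝ) ∈ e.target := by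
      apply hβ.continuous.continuousAt
      apply e.open_target.mem_nhds
      have := e.map_source hxe
      rw [he] at this
      simpa using this
    filter_upwards [h1] with t ht
    have := e.right_inv ht
    rwa [he] at this
  have hWev : ∀ᶠ x in 𝓝 x₁, ⟪W0, WW M (f x)⟫ ≠ 0 := by
    have h1 : ContinuousAt (fun x => ⟪W0, WW M (f x)⟫) x₁ :=
      continuousAt_const.inner (ContinuousAt.comp (f := f) h.ctsW.continuousAt (hc.cts hx))
    apply h1.eventually_ne
    rw [← hW0]
    simpa using hW
  have hall : ∀ᶠ t in 𝓝 (0 : ℝ), DifferentiableAt ℝ α t ∧ α t ∈ U ∧ Tng M f (α t) ∧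
      ⟪W0, WW M (f (α t))⟫ ≠ 0 ∧
      PP M W0 k f (α t) = PP M W0 k f x₁ + t • ((0, 1) : ℝ × ℝ) := by
    have h1 : ∀ᶠ t in 𝓝 (0 : ℝ), DifferentiableAt ℝ α t :=
      (hαcd.eventually (by norm_num)).mono fun t ht => ht.differentiableAt (by norm_num)
    have h2 : ∀ᶠ x in 𝓝 (α 0), x ∈ U ∧ Tng M f x ∧ ⟪W0, WW M (f x)⟫ ≠ 0 := by
      rw [hα0]
      filter_upwards [hc.oU.mem_nhds hx, ht, hWev] with x a b c using ⟨a, b, c⟩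
    filter_upwards [h1, hαc.eventually h2, hαtgt] with t a b c using ⟨a, b.1, b.2.1, b.2.2, c⟩
  obtain ⟨δ, hδ, hball⟩ := Metric.eventually_nhds_iff_ball.1 hall
  have hder : ∀ t ∈ Metric.ball (0 : ℝ) δ, HasDerivAt (fun t => M (f (α t))) 0 t := by
    intro t ht
    obtain ⟨a, b, ⟨ζ, hζ, hζ0⟩, d, -⟩ := hball t ht
    have hMf : HasFDerivAt (fun x => M (f x)) ((fderiv ℝ M (f (α t))).comp (fderiv ℝ f (α t)))
        (α t) := (h.hfd _).comp (α t) (hc.hfd b)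
    have h1 := hMf.comp_hasDerivAt t a.hasDerivAt
    obtain ⟨ξ, hξ⟩ := h.tanM f U V hc _ b
    have hξW : ((fderiv ℝ M (f (α t))).comp (fderiv ℝ f (α t))) ξ = WW M (f (α t)) := by
      simp [hξ, WW]
    obtain ⟨c, hcc⟩ := rank_one_E2 (L := (fderiv ℝ M (f (α t))).comp (fderiv ℝ f (α t)))
      (ζ := ζ) (ξ := ξ) hζ hζ0 (by rw [hξW]; intro h0; rw [h0] at d; simp at d) (deriv α t)
    have h2 : HasDerivAt (fun t => ⟪W0, M (f (α t))⟫)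
        ⟪W0, ((fderiv ℝ M (f (α t))).comp (fderiv ℝ f (α t))) (deriv α t)⟫ t :=
      (innerSL ℝ W0).hasFDerivAt.comp_hasDerivAt t h1
    have h3 : HasDerivAt (fun t => ⟪W0, M (f (α t))⟫) 0 t := by
      refine (hasDerivAt_const t ⟪W0, M (f x₁)⟫).congr_of_eventuallyEq ?_
      filter_upwards [Metric.isOpen_ball.mem_nhds ht] with s hs
      have := congrArg Prod.fst (hball s hs).2.2.2.2
      simpa [PP] using this
    have h4 := h2.unique h3
    rw [hcc, hξW, inner_smul_right] at h4
    have hc0 : c = 0 := by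
      rcases mul_eq_zero.1 h4 with h | h
      · exact h
      · exact absurd h d
    rw [hcc, hc0, zero_smul] at h1
    exact h1
  have hconst : ∀ t ∈ Metric.ball (0 : ℝ) δ, M (f (α t)) = M (f x₁) := by
    intro t ht
    have := Metric.isOpen_ball.is_const_of_deriv_eq_zero (convex_ball (0 : ℝ) δ).isPreconnected
      (f := fun t => M (f (α t)))
      (fun s hs => (hder s hs).differentiableAt.differentiableWithinAt)
      (fun s hs => (hder s hs).deriv) ht (Metric.mem_ball_self hδ)
    rwa [hα0] at this
  have hγ : ContDiffAt ℝ 1 (fun t => f (α t)) 0 :=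
    ContDiffAt.comp (0 : ℝ) (g := f) (by rw [hα0]; exact (hc.cda hx).of_le (by norm_num)) hαcd
  refine ⟨fun t => f (α t), deriv (fun t => f (α t)) 0, by simp [hα0],
    hγ.hasStrictDerivAt (by norm_num), ?_, ?_⟩
  · intro h0
    have h1 : HasDerivAt (fun t => f (α t)) 0 0 := by
      have := (hγ.differentiableAt (by norm_num)).hasDerivAt
      rwa [h0] at this
    have h2 : HasDerivAt (fun t => ⟪k, f (α t)⟫) ⟪k, (0 : E3)⟫ 0 :=
      (innerSL ℝ k).hasFDerivAt.comp_hasDerivAt (0 : ℝ) h1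
    have h3 : HasDerivAt (fun t : ℝ => ⟪k, f x₁⟫ + t) 1 0 := (hasDerivAt_id (0 : ℝ)).const_add _
    have h4 : HasDerivAt (fun t => ⟪k, f (α t)⟫) 1 0 := by
      refine h3.congr_of_eventuallyEq ?_
      filter_upwards [hall] with t ht
      have := congrArg Prod.snd ht.2.2.2.2
      simpa [PP] using this
    have := h2.unique h4
    simp at this
  · filter_upwards [Metric.ball_mem_nhds (0 : ℝ) hδ] with t ht
    exact ⟨hc.mem (hball t ht).2.1, hconst t ht⟩

end

lemma chart_baire {S : Set E3} (hS : IsClosed S) {f U V} (hc : IsChart S f U V) {N : Set E3}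
    (hNS : N ⊆ S ∩ V) (hN : N.Nonempty) :
    ∃ K : Set E2, IsCompact K ∧ K ⊆ U ∧ ∃ x₁ ∈ U, f x₁ ∈ N ∧
      ∀ᶠ q in 𝓝 (f x₁), q ∈ N → q ∈ f '' K := by
  obtain ⟨n0, hn0⟩ := hN
  obtain ⟨r, hr, hrV⟩ := Metric.nhds_basis_closedBall.mem_iff.1 (hc.oV.mem_nhds (hNS hn0).2)
  set C := closure (N ∩ Metric.ball n0 r) with hC
  have hCS : C ⊆ S ∩ Metric.closedBall n0 r :=
    closure_minimal (fun q hq => ⟨(hNS hq.1).1, Metric.ball_subset_closedBall hq.2⟩)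
      (hS.inter Metric.isClosed_closedBall)
  have hCcl : IsClosed C := isClosed_closure
  have : CompleteSpace C := hCcl.completeSpace_coe
  have hn0C : n0 ∈ C := subset_closure ⟨hn0, Metric.mem_ball_self hr⟩
  have : Nonempty C := ⟨⟨n0, hn0C⟩⟩
  have : LocallyCompactSpace U := hc.oU.locallyCompactSpace
  obtain ⟨K, hK, hKU⟩ := isSigmaCompact_iff_sigmaCompactSpace.2
    (inferInstance : SigmaCompactSpace U)
  have hKsub : ∀ i, K i ⊆ U := fun i => hKU ▸ subset_iUnion K i
  have hcK : ∀ i, IsCompact (f '' K i) := fun i =>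
    (hK i).image_of_continuousOn (hc.cd.continuousOn.mono (hKsub i))
  obtain ⟨i, ⟨c, hci⟩⟩ := nonempty_interior_of_iUnion_of_closed (X := C)
    (f := fun i => ((↑) : C → E3) ⁻¹' (f '' K i))
    (fun i => (hcK i).isClosed.preimage continuous_subtype_val) (by
      rw [← preimage_iUnion, ← image_iUnion, hKU, hc.img, eq_univ_iff_forall]
      rintro ⟨c, hcC⟩
      exact ⟨(hCS hcC).1, hrV (hCS hcC).2⟩)
  obtain ⟨O', hO'sub, hO'o, hcO'⟩ := mem_interior.1 hci
  obtain ⟨O, hOo, rfl⟩ := isOpen_induced_iff.1 hO'o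
  obtain ⟨q1, hq1O, hq1N, hq1b⟩ := mem_closure_iff.1 c.2 O hOo hcO'
  have hq1f : q1 ∈ f '' U := by rw [hc.img]; exact hNS hq1N
  obtain ⟨x₁, hx₁, rfl⟩ := hq1f
  refine ⟨K i, hK i, hKsub i, x₁, hx₁, hq1N, ?_⟩
  filter_upwards [hOo.mem_nhds hq1O, Metric.isOpen_ball.mem_nhds hq1b] with q h1 h2 h3
  exact hO'sub (a := ⟨q, subset_closure ⟨h3, h2⟩⟩) h1

lemma chart_loc {S : Set E3} {f U V} (hc : IsChart S f U V) {K : Set E2} (hK : IsCompact K)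
    (hKU : K ⊆ U) {x : E2} (hx : x ∈ U) {B : Set E2} (hB : B ∈ 𝓝 x) :
    ∀ᶠ q in 𝓝 (f x), q ∈ f '' K → q ∈ f '' B := by
  have h1 : IsCompact (K \ interior B) := hK.diff isOpen_interior
  have h2 : IsCompact (f '' (K \ interior B)) :=
    h1.image_of_continuousOn (hc.cd.continuousOn.mono (sdiff_subset.trans hKU))
  have h3 : f x ∉ f '' (K \ interior B) := by
    rintro ⟨y, ⟨hyK, hyB⟩, hyx⟩
    rw [hc.inj (hKU hyK) hx hyx] at hyB
    exact hyB (mem_interior_iff_mem_nhds.2 hB)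
  filter_upwards [h2.isClosed.isOpen_compl.mem_nhds h3] with q hq
  rintro ⟨y, hy, rfl⟩
  by_contra hcon
  exact hq ⟨y, ⟨hy, fun hyB => hcon ⟨y, interior_subset hyB, rfl⟩⟩, rfl⟩

section
variable {S : Set E3} {M Q : E3 → E3} {Φ : E3 → ℝ → E3}

lemma Core.tng_of_Q (h : Core S M Q Φ) {f U V} (hc : IsChart S f U V) {x} (hx : x ∈ U)
    (hQ : Q (f x) ≠ 0) : Tng M f x := by
  obtain ⟨ζ, hζ⟩ := h.tanQ f U V hc x hx
  refine ⟨ζ, ?_, by rw [hζ, h.MQ _ (hc.mem hx)]⟩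
  rintro rfl
  rw [map_zero] at hζ
  exact hQ hζ.symm

lemma not_tng_iff {f : E2 → E3} {x : E2} :
    ¬ Tng M f x ↔ Function.Injective ((fderiv ℝ M (f x)).comp (fderiv ℝ f x)) := by
  rw [injective_iff_map_eq_zero]
  constructor
  · intro h v hv
    by_contra h0
    exact h ⟨v, h0, hv⟩
  · rintro h ⟨ζ, hζ, h0⟩
    exact hζ (h ζ h0)

lemma Core.ntng_open (h : Core S M Q Φ) {f U V} (hc : IsChart S f U V) {x₂} (hx : x₂ ∈ U)
    (ht : ¬ Tng M f x₂) : ∀ᶠ x in 𝓝 x₂, ¬ Tng M f x := by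
  simp_rw [not_tng_iff] at ht ⊢
  have h1 : ContinuousAt (fun x => (fderiv ℝ M (f x)).comp (fderiv ℝ f x)) x₂ := by
    have h2 : ContinuousAt (fun x => fderiv ℝ M (f x)) x₂ :=
      ContinuousAt.comp (f := f) h.ctsD.continuousAt (hc.cts hx)
    have h3 : ContinuousAt (fderiv ℝ f) x₂ :=
      ((hc.cd.continuousOn_fderiv_of_isOpen hc.oU (by norm_num)).continuousAt (hc.oU.mem_nhds hx))
    exact h2.clm_comp h3
  exact h1 (ContinuousLinearMap.isOpen_injective.mem_nhds ht)

/-- the transverse straightening of a chart -/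
lemma Core.FF_homeo (h : Core S M Q Φ) {f U V} (hc : IsChart S f U V) {x} (hx : x ∈ U)
    (ht : ¬ Tng M f x) {k : E3} (hk : ‖k‖ = 1) (hTk : fderiv ℝ M (f x) k = 0) :
    ∃ e : OpenPartialHomeomorph (E2 × ℝ) E3,
      (∀ p, e p = HH M k (f p.1) + p.2 • k) ∧ (x, (0 : ℝ)) ∈ e.source := by
  have hkk : ⟪k, k⟫ = 1 := by rw [real_inner_self_eq_norm_sq, hk]; norm_num
  have h0 : ContDiffAt ℝ 1 f x := (hc.cda hx).of_le (by norm_num)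
  have hcd : ContDiffAt ℝ 1 (fun p : E2 × ℝ => HH M k (f p.1) + p.2 • k) (x, 0) := by
    have h1 : ContDiffAt ℝ 1 (fun p : E2 × ℝ => f p.1) (x, 0) :=
      ContDiffAt.comp (x, (0 : ℝ)) (g := f) h0 contDiffAt_fst
    have h2 : ContDiffAt ℝ 1 (fun p : E2 × ℝ => HH M k (f p.1)) (x, 0) :=
      (h.HH_cd k).contDiffAt.comp (x, (0 : ℝ)) h1
    exact h2.add (contDiffAt_snd.smul contDiffAt_const)
  set D : E2 × ℝ →L[ℝ] E3 := ((DHH M k (f x)).comp (fderiv ℝ f x)).comp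
    (ContinuousLinearMap.fst ℝ E2 ℝ) + (ContinuousLinearMap.snd ℝ E2 ℝ).smulRight k with hD
  have hfd : HasFDerivAt (fun p : E2 × ℝ => HH M k (f p.1) + p.2 • k) D (x, 0) := by
    have h1 : HasFDerivAt (fun p : E2 × ℝ => HH M k (f p.1))
        (((DHH M k (f x)).comp (fderiv ℝ f x)).comp (ContinuousLinearMap.fst ℝ E2 ℝ)) (x, 0) :=
      HasFDerivAt.comp (x, (0 : ℝ)) (g := fun x => HH M k (f x))
        ((h.HH_fd k (f x)).comp x (hc.hfd hx)) hasFDerivAt_fst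
    exact h1.add (hasFDerivAt_snd.smul_const k)
  have hinj : Function.Injective D := by
    rw [injective_iff_map_eq_zero]
    rintro ⟨ζ, c⟩ h0
    have h1 : fderiv ℝ M (f x) (fderiv ℝ f x ζ) + (⟪fderiv ℝ f x ζ, k⟫ + c) • k = 0 := by
      rw [add_smul, ← add_assoc]
      simpa [hD, DHH_apply] using h0
    have h2 : ⟪fderiv ℝ f x ζ, k⟫ + c = 0 := by
      have := congrArg (fun z => ⟪z, k⟫) h1
      simpa [inner_add_left, h.sym _ (hc.mem hx), hTk, inner_smul_left, hk] using this
    rw [h2, zero_smul, add_zero] at h1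
    have hζ : ζ = 0 := by
      by_contra hζ
      exact ht ⟨ζ, hζ, h1⟩
    subst hζ
    simp at h2
    simp [h2]
  have hfr : Module.finrank ℝ (E2 × ℝ) = Module.finrank ℝ E3 := by simp
  have hsurj : Function.Surjective D :=
    (LinearMap.injective_iff_surjective_of_finrank_eq_finrank
      (f := (D : E2 × ℝ →ₗ[ℝ] E3)) hfr).1 hinj
  let e0 : (E2 × ℝ) ≃L[ℝ] E3 := (LinearEquiv.ofBijective (D : E2 × ℝ →ₗ[ℝ] E3)
    ⟨hinj, hsurj⟩).toContinuousLinearEquiv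
  have he0 : (e0 : E2 × ℝ →L[ℝ] E3) = D :=
    ContinuousLinearMap.ext fun v => rfl
  have hf' : HasFDerivAt (fun p : E2 × ℝ => HH M k (f p.1) + p.2 • k)
    (e0 : E2 × ℝ →L[ℝ] E3) (x, 0) := he0 ▸ hfd
  exact ⟨hcd.toOpenPartialHomeomorph _ hf' (by norm_num),
    fun p => congrFun (hcd.toOpenPartialHomeomorph_coe hf' (by norm_num)) p,
    hcd.mem_toOpenPartialHomeomorph_source hf' (by norm_num)⟩

lemma Core.TR (h : Core S M Q Φ) {f U V} (hc : IsChart S f U V) {x₂} (hx : x₂ ∈ U)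
    (hW : WW M (f x₂) ≠ 0) (ht : ¬ Tng M f x₂)
    (hyp : ∀ B ∈ 𝓝 x₂, ∀ᶠ q in 𝓝 (f x₂), q ∈ S → EC S M q ∨ q ∈ f '' B) : False := by
  obtain ⟨k, hk, hTk, -⟩ := h.kernel (hc.mem hx)
  obtain ⟨e, he, hxe⟩ := h.FF_homeo hc hx ht hk hTk
  obtain ⟨R, O, σ, Bx, -⟩ := h.box (hc.mem hx) hW hk hTk univ_mem
  set z := f x₂ with hz
  have e20 : e (x₂, 0) = HH M k z := by rw [he]; simp [hz]
  -- first neighbourhood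
  have hev0 : ∀ᶠ x in 𝓝 x₂, x ∈ U ∧ f x ∈ O ∧ ¬ Tng M f x ∧ (x, (0 : ℝ)) ∈ e.source := by
    have h3 : ∀ᶠ x in 𝓝 x₂, (x, (0 : ℝ)) ∈ e.source := by
      have : ContinuousAt (fun x : E2 => (x, (0 : ℝ))) x₂ := by fun_prop
      exact this (e.open_source.mem_nhds hxe)
    filter_upwards [hc.oU.mem_nhds hx, hc.cts hx (Bx.oO.mem_nhds Bx.zO), h.ntng_open hc hx ht, h3]
      with x a b c d using ⟨a, b, c, d⟩
  obtain ⟨B0, hB0, hB0o, hxB0⟩ := eventually_nhds_iff.1 hev0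
  have hec : ContinuousAt e (x₂, 0) := e.continuousAt hxe
  have hev1 : ∀ᶠ p in 𝓝 (x₂, (0 : ℝ)), p ∈ e.source ∧ p.1 ∈ B0 ∧
      e p ∈ Metric.ball (HH M k z) R ∧
      (σ (e p) ∈ S → EC S M (σ (e p)) ∨ σ (e p) ∈ f '' B0) := by
    have h1 : ∀ᶠ p in 𝓝 (x₂, (0 : ℝ)), p.1 ∈ B0 := continuousAt_fst (hB0o.mem_nhds hxB0)
    have h2 : ∀ᶠ p in 𝓝 (x₂, (0 : ℝ)), e p ∈ Metric.ball (HH M k z) R := by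
      apply hec
      rw [e20]; exact Metric.ball_mem_nhds _ Bx.pos
    have h3 : ContinuousAt (fun p => σ (e p)) (x₂, (0 : ℝ)) := by
      apply ContinuousAt.comp (f := e) _ hec
      rw [e20]; exact Bx.cts _ (Metric.mem_ball_self Bx.pos)
    have h4 : σ (e (x₂, 0)) = z := by rw [e20]; exact Bx.left z Bx.zO
    have h5 : ∀ᶠ p in 𝓝 (x₂, (0 : ℝ)), σ (e p) ∈ S → EC S M (σ (e p)) ∨ σ (e p) ∈ f '' B0 := by
      have := hyp B0 (hB0o.mem_nhds hxB0)
      rw [← h4] at this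
      exact h3 this
    filter_upwards [e.open_source.mem_nhds hxe, h1, h2, h5] with p a b c d using ⟨a, b, c, d⟩
  obtain ⟨r, hr, hball⟩ := Metric.eventually_nhds_iff_ball.1 hev1
  have hin : ∀ x ∈ Metric.ball x₂ r, ∀ t ∈ Ioo (-r) r, (x, t) ∈ Metric.ball (x₂, (0 : ℝ)) r := by
    intro x hx t ht
    rw [Metric.mem_ball, Prod.dist_eq, max_lt_iff]
    refine ⟨hx, ?_⟩
    rw [Real.dist_eq, sub_zero, abs_lt]
    exact ht
  have hECt : ∀ x ∈ Metric.ball x₂ r, ∀ t ∈ Ioo (-r) r, t ≠ 0 → σ (e (x, t)) ∈ S →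
      EC S M (σ (e (x, t))) := by
    intro x hx t ht ht0 hS
    obtain ⟨h1, h2, h3, h4⟩ := hball _ (hin x hx t ht)
    rcases h4 hS with h5 | ⟨x', hx', hx'e⟩
    · exact h5
    · exfalso
      have h6 : e (x, t) = e (x', 0) := by
        rw [← Bx.right _ h3, ← hx'e, he]; simp
      have h7 := e.injOn h1 (hB0 x' hx').2.2.2 h6
      exact ht0 (congrArg Prod.snd h7)
  have hsat : ∀ J : Set ℝ, IsPreconnected J → J ⊆ Ioo (-r) r → (0 : ℝ) ∉ J →
      ∀ x ∈ Metric.ball x₂ r, ∀ t₀ ∈ J, σ (e (x, t₀)) ∈ S → ∀ t ∈ J, σ (e (x, t)) ∈ S := by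
    intro J hJ hJr hJ0 x hx t₀ ht₀ hS t ht
    have hEe : ∀ t, e (x, t) = HH M k (f x) + t • k := fun t => he _
    have := h.sat Bx hJ (p := HH M k (f x))
      (fun t ht => by rw [← hEe]; exact (hball _ (hin x hx t (hJr ht))).2.2.1)
      (fun t ht hs => by
        rw [← hEe] at hs ⊢
        exact hECt x hx t (hJr ht) (fun h0 => hJ0 (h0 ▸ ht)) hs)
      ht₀ (by rwa [← hEe]) t ht
    rw [hEe]; exact this.1
  -- no open piece can be filled
  have hfill : ∀ J : Set ℝ, IsOpen J → J.Nonempty → J ⊆ Ioo (-r) r → ∀ I : Set E2, IsOpen I →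
      I.Nonempty → I ⊆ Metric.ball x₂ r → (∀ x ∈ I, ∀ t ∈ J, σ (e (x, t)) ∈ S) → False := by
    rintro J hJ ⟨t, ht⟩ hJr I hI ⟨x, hx⟩ hIr hfil
    have hsub : I ×ˢ J ⊆ e.source := fun p hp => (hball p (hin _ (hIr hp.1) _ (hJr hp.2))).1
    have hop : IsOpen (e '' (I ×ˢ J)) := e.isOpen_image_of_subset_source (hI.prod hJ) hsub
    have hop2 : IsOpen (O ∩ HH M k ⁻¹' (e '' (I ×ˢ J))) :=
      Bx.oO.inter (hop.preimage (h.HH_cd k).continuous)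
    have hsub2 : O ∩ HH M k ⁻¹' (e '' (I ×ˢ J)) ⊆ S := by
      rintro y ⟨hyO, ⟨x', t'⟩, ⟨hx', ht'⟩, hy⟩
      have := hfil x' hx' t' ht'
      rwa [hy, Bx.left y hyO] at this
    have hmem : σ (e (x, t)) ∈ O ∩ HH M k ⁻¹' (e '' (I ×ˢ J)) := by
      have hb := (hball _ (hin x (hIr hx) t (hJr ht))).2.2.1
      refine ⟨Bx.mapsσ _ hb, ?_⟩
      rw [mem_preimage, Bx.right _ hb]
      exact ⟨(x, t), ⟨hx, ht⟩, rfl⟩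
    have := interior_maximal hsub2 hop2 hmem
    rw [h.int] at this
    exact this
  have hJp : Ioo 0 r ⊆ Ioo (-r) r := Ioo_subset_Ioo_left (by linarith)
  have hJm : Ioo (-r) 0 ⊆ Ioo (-r) r := Ioo_subset_Ioo_right (by linarith)
  have hop : ∀ s ∈ Ioo (-r) r, ∀ x ∈ Metric.ball x₂ r, σ (e (x, s)) ∉ S →
      ∀ᶠ x' in 𝓝 x, σ (e (x', s)) ∉ S := by
    intro s hs x hx hn
    have hb := hball _ (hin x hx s hs)
    have h1 : ContinuousAt (fun x' => σ (e (x', s))) x := by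
      apply ContinuousAt.comp (f := fun x' => e (x', s)) (Bx.cts _ hb.2.2.1)
      apply ContinuousAt.comp (f := fun x' : E2 => (x', s)) (e.continuousAt hb.1)
      fun_prop
    exact h1 (h.cpt.isClosed.isOpen_compl.mem_nhds hn)
  have hsp : r / 2 ∈ Ioo 0 r := ⟨by linarith, by linarith⟩
  have hsm : -(r / 2) ∈ Ioo (-r) 0 := ⟨by linarith, by linarith⟩
  have hcov : ∀ x ∈ Metric.ball x₂ r, σ (e (x, r / 2)) ∈ S ∨ σ (e (x, -(r / 2))) ∈ S := by
    intro x hx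
    by_contra hcon
    push Not at hcon
    have hx0 := hball _ (hin x hx 0 ⟨by linarith, by linarith⟩)
    have hxB := hB0 x hx0.2.1
    have hex : e (x, 0) = HH M k (f x) := by rw [he]; simp
    have hev : ∀ᶠ p in 𝓝 (x, (0 : ℝ)), p.1 ∈ Metric.ball x₂ r ∧ p.2 ∈ Ioo (-r) r ∧
        σ (e (p.1, r / 2)) ∉ S ∧ σ (e (p.1, -(r / 2))) ∉ S := by
      have h1 : ∀ᶠ x' in 𝓝 x, x' ∈ Metric.ball x₂ r ∧ σ (e (x', r / 2)) ∉ S ∧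
          σ (e (x', -(r / 2))) ∉ S := by
        filter_upwards [Metric.isOpen_ball.mem_nhds hx, hop _ (hJp hsp) x hx hcon.1,
          hop _ (hJm hsm) x hx hcon.2] with x' a b c using ⟨a, b, c⟩
      have h2 : ∀ᶠ t in 𝓝 (0 : ℝ), t ∈ Ioo (-r) r := Ioo_mem_nhds (by linarith) hr
      filter_upwards [continuousAt_fst.eventually h1, continuousAt_snd.eventually h2]
        with p a b using ⟨a.1, b, a.2.1, a.2.2⟩
    have hHc : ContinuousAt (HH M k) (f x) := (h.HH_cd k).continuous.continuousAt
    have htg : HH M k (f x) ∈ e.target := by rw [← hex]; exact e.map_source hx0.1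
    have hsym : e.symm (HH M k (f x)) = (x, 0) := by rw [← hex]; exact e.left_inv hx0.1
    have hev2 : ∀ᶠ g in 𝓝 (f x), g ∈ O ∧ HH M k g ∈ e.target ∧
        ((e.symm (HH M k g)).1 ∈ Metric.ball x₂ r ∧ (e.symm (HH M k g)).2 ∈ Ioo (-r) r ∧
        σ (e ((e.symm (HH M k g)).1, r / 2)) ∉ S ∧
        σ (e ((e.symm (HH M k g)).1, -(r / 2))) ∉ S) := by
      have h1 : ContinuousAt (fun g => e.symm (HH M k g)) (f x) :=
        ContinuousAt.comp (f := HH M k) (e.continuousAt_symm htg) hHc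
      rw [← hsym] at hev
      filter_upwards [Bx.oO.mem_nhds hxB.2.1, hHc (e.open_target.mem_nhds htg),
        h1.eventually hev] with g a b c using ⟨a, b, c⟩
    obtain ⟨g, ⟨hgO, hgt, hg1, hg2, hg3, hg4⟩, hgS, hgM, hgQ⟩ :=
      mem_closure_iff_nhds.1 (h.dense (hc.mem hxB.1)) _ hev2
    obtain ⟨⟨x', c⟩, hxc⟩ : ∃ p, p = e.symm (HH M k g) := ⟨_, rfl⟩
    rw [← hxc] at hg1 hg2 hg3 hg4
    have hexc : e (x', c) = HH M k g := by rw [hxc]; exact e.right_inv hgt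
    have hσ : σ (e (x', c)) = g := by rw [hexc]; exact Bx.left g hgO
    rcases lt_trichotomy c 0 with hc0 | hc0 | hc0
    · exact hg4 (hsat _ isPreconnected_Ioo hJm (by simp) x' hg1 c ⟨hg2.1, hc0⟩
        (by rw [hσ]; exact hgS) _ hsm)
    · subst hc0
      have hb := hB0 x' (hball _ (hin x' hg1 0 hg2)).2.1
      have : f x' = g := by
        rw [← hσ, he]
        simp [Bx.left _ hb.2.1]
      exact hb.2.2.1 (h.tng_of_Q hc hb.1 (by rw [this]; exact hgQ))
    · exact hg3 (hsat _ isPreconnected_Ioo hJp (by simp) x' hg1 c ⟨hc0, hg2.2⟩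
        (by rw [hσ]; exact hgS) _ hsp)
  by_cases hall : ∀ x ∈ Metric.ball x₂ r, σ (e (x, r / 2)) ∈ S
  · exact hfill (Ioo 0 r) isOpen_Ioo ⟨_, hsp⟩ hJp (Metric.ball x₂ r) Metric.isOpen_ball
      ⟨x₂, Metric.mem_ball_self hr⟩ subset_rfl fun x hx t ht =>
        hsat _ isPreconnected_Ioo hJp (by simp) x hx _ hsp (hall x hx) t ht
  · push Not at hall
    obtain ⟨x, hx, hxn⟩ := hall
    obtain ⟨I, hI, hIo, hxI⟩ := eventually_nhds_iff.1
      ((hop _ (hJp hsp) x hx hxn).and (Metric.isOpen_ball.mem_nhds hx))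
    exact hfill (Ioo (-r) 0) isOpen_Ioo ⟨_, hsm⟩ hJm I hIo ⟨x, hxI⟩ (fun y hy => (hI y hy).2)
      fun x hx t ht => hsat _ isPreconnected_Ioo hJm (by simp) x (hI x hx).2 _ hsm
        ((hcov x (hI x hx).2).resolve_left (hI x hx).1) t ht

lemma Core.ec_all (h : Core S M Q Φ) {q : E3} (hq : q ∈ S) (hW : WW M q ≠ 0) : EC S M q := by
  by_contra hnec
  obtain ⟨f, U, V, x0, hc, hx0, rfl⟩ := exists_chart h.surf hq
  have hAo : IsOpen {q | WW M q ≠ 0} := isOpen_ne.preimage h.ctsW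
  obtain ⟨K, hK, hKU, x₁, hx₁, ⟨⟨hx₁S, hx₁V⟩, hx₁W, hx₁E⟩, hev⟩ := chart_baire h.cpt.isClosed hc
    (N := {q | q ∈ S ∩ V ∧ WW M q ≠ 0 ∧ ¬ EC S M q}) (fun q hq => hq.1)
    ⟨f x0, ⟨hq, hc.memV hx0⟩, hW, hnec⟩
  have hnt : ∃ᶠ x in 𝓝 x₁, ¬ Tng M f x := by
    intro hcon
    refine hx₁E (h.sheet_ec hc hx₁ hx₁W ?_)
    filter_upwards [hcon] with x hx using not_not.1 hx
  have hev2 : ∀ᶠ q in 𝓝 (f x₁), (q ∈ S → WW M q ≠ 0 ∧ (EC S M q ∨ q ∈ f '' K)) := by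
    filter_upwards [hev, hAo.mem_nhds hx₁W, hc.oV.mem_nhds hx₁V] with q a b c hqS
    refine ⟨b, ?_⟩
    by_contra hcon
    push Not at hcon
    exact hcon.2 (a ⟨⟨hqS, c⟩, b, hcon.1⟩)
  have hev3 := (hc.cts hx₁).eventually hev2.eventually_nhds
  obtain ⟨x₂, hx₂n, hx₂U, hx₂⟩ :=
    (hnt.and_eventually ((hc.oU.eventually_mem hx₁).and hev3)).exists
  refine h.TR hc hx₂U (hx₂.self_of_nhds (hc.mem hx₂U)).1 hx₂n fun B hB => ?_
  filter_upwards [hx₂, chart_loc hc hK hKU hx₂U hB] with q a b hqS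
  exact (a hqS).2.imp_right b

lemma Core.tng_all (h : Core S M Q Φ) {f U V} (hc : IsChart S f U V) {x} (hx : x ∈ U)
    (hW : WW M (f x) ≠ 0) : Tng M f x := by
  by_contra ht
  have hAo : IsOpen {q | WW M q ≠ 0} := isOpen_ne.preimage h.ctsW
  refine h.TR hc hx hW ht fun B hB => ?_
  filter_upwards [hAo.mem_nhds hW] with q a hqS
  exact Or.inl (h.ec_all hqS a)

end

lemma tangent_decomp {L : E2 →L[ℝ] E3} {ξ η : E2} (hξ : L ξ ≠ 0) (hη : L η ≠ 0)
    (ho : ⟪L ξ, L η⟫ = 0) (θ : E2) : ∃ a b : ℝ, L θ = a • L ξ + b • L η := by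
  have hli : LinearIndependent ℝ ![ξ, η] := by
    rw [LinearIndependent.pair_iff]
    intro s t hst
    have h1 : s • L ξ + t • L η = 0 := by
      rw [← map_smul, ← map_smul, ← map_add, hst, map_zero]
    constructor
    · have := congrArg (fun z => ⟪L ξ, z⟫) h1
      simp only [inner_add_right, inner_smul_right, ho, mul_zero, add_zero, inner_zero_right] at this
      rcases mul_eq_zero.1 this with h | h
      · exact h
      · exact absurd (inner_self_eq_zero.1 h) hξ
    · have := congrArg (fun z => ⟪z, L η⟫) h1
      simp only [inner_add_left, real_inner_smul_left, ho, mul_zero, zero_add,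
        inner_zero_left] at this
      rcases mul_eq_zero.1 this with h | h
      · exact h
      · exact absurd (inner_self_eq_zero.1 h) hη
  have hsp := hli.span_eq_top_of_card_eq_finrank' (by simp)
  have hθ : θ ∈ Submodule.span ℝ (range ![ξ, η]) := by rw [hsp]; trivial
  rw [Matrix.range_cons, Matrix.range_cons, Matrix.range_empty, union_empty,
    singleton_union, Submodule.mem_span_pair] at hθ
  obtain ⟨a, b, rfl⟩ := hθ
  exact ⟨a, b, by simp⟩

lemma eq_zero_of_closure {X Y : Type*} [TopologicalSpace X] [TopologicalSpace Y] [T1Space Y]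
    {φ : X → Y} {x : X} {y : Y} (hφ : ContinuousAt φ x) {T : Set X} (hx : x ∈ closure T)
    (h : ∀ᶠ x' in 𝓝 x, x' ∈ T → φ x' = y) : φ x = y := by
  by_contra hne
  obtain ⟨x', ⟨h1, h2⟩, h3⟩ := mem_closure_iff_nhds.1 hx _ (h.and (hφ.eventually_ne hne))
  exact h2 (h1 h3)

def Reg (S : Set E3) (f : E2 → E3) (x : E2) : Prop :=
  ∀ B ∈ 𝓝 x, ∀ᶠ q in 𝓝 (f x), q ∈ S → q ∈ f '' B

lemma Reg.ev {S : Set E3} {f U V} (hc : IsChart S f U V) {x} (hx : x ∈ U) (h : Reg S f x) :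
    ∀ᶠ x' in 𝓝 x, Reg S f x' := by
  obtain ⟨r, hr, hrU⟩ := Metric.nhds_basis_closedBall.mem_iff.1 (hc.oU.mem_nhds hx)
  have h1 := (h _ (Metric.closedBall_mem_nhds x hr)).eventually_nhds
  filter_upwards [(hc.cts hx).eventually h1, hc.oU.mem_nhds hx] with x' h2 h3 B hB
  filter_upwards [h2, chart_loc hc (isCompact_closedBall x r) hrU h3 hB] with q a b c
  exact b (a c)

section
variable {S : Set E3} {M Q : E3 → E3} {Φ : E3 → ℝ → E3}

lemma Core.exists_reg (h : Core S M Q Φ) {O : Set E3} (hO : IsOpen O) {q : E3} (hq : q ∈ S)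
    (hqO : q ∈ O) : ∃ f U V x, IsChart S f U V ∧ x ∈ U ∧ f x ∈ O ∧ Reg S f x := by
  obtain ⟨f, U, V, x0, hc, hx0, rfl⟩ := exists_chart h.surf hq
  obtain ⟨K, hK, hKU, x₁, hx₁, ⟨⟨hx₁S, hx₁V⟩, hx₁O⟩, hev⟩ := chart_baire h.cpt.isClosed hc
    (N := (S ∩ V) ∩ O) inter_subset_left ⟨f x0, ⟨hq, hc.memV hx0⟩, hqO⟩
  refine ⟨f, U, V, x₁, hc, hx₁, hx₁O, fun B hB => ?_⟩
  filter_upwards [hev, chart_loc hc hK hKU hx₁ hB, hO.mem_nhds hx₁O, hc.oV.mem_nhds hx₁V]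
    with q a b c d hqS
  exact b (a ⟨⟨hqS, d⟩, c⟩)

lemma Core.reg_dense (h : Core S M Q Φ) {f U V} (hc : IsChart S f U V) {x} (hx : x ∈ U)
    (hr : Reg S f x) : x ∈ closure {x' | M (f x') ≠ 0 ∧ Q (f x') ≠ 0} := by
  rw [mem_closure_iff_nhds]
  intro B hB
  obtain ⟨g, hg1, hgS, hgM, hgQ⟩ := mem_closure_iff_nhds.1 (h.dense (hc.mem hx)) _ (hr B hB)
  obtain ⟨x', hx', rfl⟩ := hg1 hgS
  exact ⟨x', hx', hgM, hgQ⟩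

def QS (S : Set E3) (Q : E3 → E3) (q : E3) : Prop :=
  ∀ᶠ q' in 𝓝 q, q' ∈ S → ∃ c : ℝ, fderiv ℝ Q q' (Q q') = c • Q q'

lemma Core.const_dir (h : Core S M Q Φ) {f U V} (hc : IsChart S f U V) {x₁} (hx : x₁ ∈ U)
    (hW : WW M (f x₁) ≠ 0) (hreg : Reg S f x₁) (hQS : QS S Q (f x₁)) {k : E3} (hk : ‖k‖ = 1)
    (hTk : fderiv ℝ M (f x₁) k = 0) :
    ∀ᶠ q in 𝓝 (f x₁), q ∈ S → fderiv ℝ M q k = 0 := by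
  have hkk : ⟪k, k⟫ = 1 := by rw [real_inner_self_eq_norm_sq, hk]; norm_num
  obtain ⟨ζ, hζ, hζ0⟩ := h.tng_all hc hx hW
  obtain ⟨c, hcζ⟩ := h.ker_uniq (hc.mem hx) hW hk hTk hζ0
  have hc0 : c ≠ 0 := by
    rintro rfl
    rw [zero_smul] at hcζ
    exact hζ (hc.imm x₁ hx (by rw [hcζ, map_zero]))
  set a := c⁻¹ • ζ with ha
  have hfa : fderiv ℝ f x₁ a = k := by
    rw [ha, map_smul, hcζ, smul_smul, inv_mul_cancel₀ hc0, one_smul]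
  have hkM : ⟪k, M (f x₁)⟫ = 0 := h.ker_orth (hc.mem hx) hW hk hTk
  have hMne : M (f x₁) ≠ 0 := WW_ne hW
  set E0 : E2 → E3 := fun x => fderiv ℝ f x a -
    (⟪fderiv ℝ f x a, M (f x)⟫ / ⟪M (f x), M (f x)⟫) • M (f x) with hE0
  have hE01 : E0 x₁ = k := by simp [hE0, hfa, hkM]
  have hcdE0 : ContDiffAt ℝ 1 E0 x₁ := by
    have h1 : ContDiffAt ℝ 1 (fun x => fderiv ℝ f x a) x₁ :=
      ((hc.cda hx).fderiv_right (m := 1) (by norm_num)).clm_apply contDiffAt_const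
    have h2 : ContDiffAt ℝ 1 (fun x => M (f x)) x₁ :=
      h.hM.contDiffAt.comp x₁ ((hc.cda hx).of_le (by norm_num))
    exact h1.sub (((h1.inner ℝ h2).div (h2.inner ℝ h2) (by simpa using hMne)).smul h2)
  set E : E2 → E3 := fun x => ⟪E0 x, k⟫⁻¹ • E0 x with hE
  have hE1 : E x₁ = k := by simp only [hE, hE01, hkk]; simp
  have hcdE : ContDiffAt ℝ 1 E x₁ :=
    ((hcdE0.inner ℝ contDiffAt_const).inv (by simp [hE01, hk])).smul hcdE0
  have hE0k : ∀ᶠ x in 𝓝 x₁, ⟪E0 x, k⟫ ≠ 0 := by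
    have : ContinuousAt (fun x => ⟪E0 x, k⟫) x₁ := hcdE0.continuousAt.inner continuousAt_const
    apply this.eventually_ne
    simp [hE01, hk]
  have hev : ∀ᶠ x in 𝓝 x₁, x ∈ U ∧ Reg S f x ∧ ⟪E0 x, k⟫ ≠ 0 ∧ ContDiffAt ℝ 1 E x ∧
      (∃ c : ℝ, fderiv ℝ Q (f x) (Q (f x)) = c • Q (f x)) := by
    filter_upwards [hc.oU.mem_nhds hx, hreg.ev hc hx, hE0k, hcdE.eventually (by norm_num),
      (hc.cts hx).eventually hQS] with x a b c d e using ⟨a, b, c, d, e (hc.mem a)⟩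
  obtain ⟨r, hr, hball⟩ := Metric.eventually_nhds_iff_ball.1 hev
  -- at good points
  have hpar : ∀ x ∈ Metric.ball x₁ r, M (f x) ≠ 0 → Q (f x) ≠ 0 →
      ⟪Q (f x), k⟫ ≠ 0 ∧ ⟪Q (f x), k⟫ • E x = Q (f x) := by
    intro x hx hMx hQx
    obtain ⟨b1, -, b3, -, -⟩ := hball x hx
    obtain ⟨ξ, hξ⟩ := h.tanM f U V hc x b1
    obtain ⟨η, hη⟩ := h.tanQ f U V hc x b1
    have ho := h.orth _ (hc.mem b1)
    obtain ⟨s, t, hst⟩ := tangent_decomp (L := fderiv ℝ f x) (ξ := ξ) (η := η) (by rwa [hξ])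
      (by rwa [hη]) (by rwa [hξ, hη]) a
    rw [hξ, hη] at hst
    have hmm : ⟪M (f x), M (f x)⟫ ≠ 0 := by simpa using hMx
    have hE0x : E0 x = t • Q (f x) := by
      simp only [hE0, hst, inner_add_left, real_inner_smul_left]
      rw [real_inner_comm (M (f x)) (Q (f x)), ho, mul_zero, add_zero, mul_div_assoc, div_self hmm]
      simp
    rw [hE0x, real_inner_smul_left] at b3
    have ht : t ≠ 0 := left_ne_zero_of_mul b3
    have hqk : ⟪Q (f x), k⟫ ≠ 0 := right_ne_zero_of_mul b3
    refine ⟨hqk, ?_⟩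
    simp only [hE, hE0x, real_inner_smul_left, smul_smul]
    rw [show ⟪Q (f x), k⟫ * ((t * ⟪Q (f x), k⟫)⁻¹ * t) = 1 by field_simp, one_smul]
  have hDEg : ∀ x ∈ Metric.ball x₁ r, M (f x) ≠ 0 → Q (f x) ≠ 0 → fderiv ℝ E x = 0 := by
    intro x hx hMx hQx
    obtain ⟨b1, -, b3, b4, ⟨cc, b5⟩⟩ := hball x hx
    obtain ⟨hqk, hQE⟩ := hpar x hx hMx hQx
    have hQf : HasFDerivAt (fun x => Q (f x)) ((fderiv ℝ Q (f x)).comp (fderiv ℝ f x)) x :=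
      ((h.hQ.differentiable (by norm_num) (f x)).hasFDerivAt).comp x (hc.hfd b1)
    have hin : HasFDerivAt (fun x => ⟪k, Q (f x)⟫)
        ((innerSL ℝ k).comp ((fderiv ℝ Q (f x)).comp (fderiv ℝ f x))) x :=
      (innerSL ℝ k).hasFDerivAt.comp x hQf
    have hEd : HasFDerivAt E (fderiv ℝ E x) x :=
      (b4.differentiableAt (by norm_num)).hasFDerivAt
    have hL := hin.smul hEd
    have hMc : ContinuousAt (fun x => M (f x)) x :=
      ContinuousAt.comp (f := f) h.hM.continuous.continuousAt (hc.cts b1)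
    have hQc : ContinuousAt (fun x => Q (f x)) x :=
      ContinuousAt.comp (f := f) h.hQ.continuous.continuousAt (hc.cts b1)
    have hL2 := hQf.congr_of_eventuallyEq (f₁ := fun x => ⟪k, Q (f x)⟫ • E x) (by
      filter_upwards [Metric.isOpen_ball.mem_nhds hx, hMc.eventually_ne hMx,
        hQc.eventually_ne hQx] with y y1 y2 y3
      rw [real_inner_comm]
      exact (hpar y y1 y2 y3).2)
    have heq := hL.unique hL2
    obtain ⟨ξ, hξ⟩ := h.tanM f U V hc x b1
    obtain ⟨η, hη⟩ := h.tanQ f U V hc x b1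
    have ho := h.orth _ (hc.mem b1)
    refine ContinuousLinearMap.ext fun θ => ?_
    obtain ⟨s, t, hst⟩ := tangent_decomp (L := fderiv ℝ f x) (ξ := ξ) (η := η) (by rwa [hξ])
      (by rwa [hη]) (by rwa [hξ, hη]) θ
    rw [hξ, hη] at hst
    have hDQ : fderiv ℝ Q (f x) (fderiv ℝ f x θ) = (t * cc) • Q (f x) := by
      rw [hst, map_add, map_smul, map_smul, h.QM _ (hc.mem b1), b5, smul_zero, zero_add, smul_smul]
    have h3 := congrArg (fun T => T θ) heq
    simp only [add_apply, smul_apply,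
      ContinuousLinearMap.smulRight_apply, ContinuousLinearMap.comp_apply, hDQ, map_smul,
      innerSL_apply_apply] at h3
    rw [real_inner_comm, smul_assoc, hQE] at h3
    have h4 : ⟪Q (f x), k⟫ • fderiv ℝ E x θ = 0 := by simpa using h3
    simpa using (smul_eq_zero.1 h4).resolve_left hqk
  have hDE : ∀ x ∈ Metric.ball x₁ r, fderiv ℝ E x = 0 := by
    intro x hx
    obtain ⟨b1, b2, b3, b4, -⟩ := hball x hx
    have hct : ContinuousAt (fderiv ℝ E) x :=
      (b4.fderiv_right (m := 0) (by norm_num)).continuousAt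
    refine eq_zero_of_closure hct (h.reg_dense hc b1 b2) ?_
    filter_upwards [Metric.isOpen_ball.mem_nhds hx] with y hy hy2
    exact hDEg y hy hy2.1 hy2.2
  have hEk : ∀ x ∈ Metric.ball x₁ r, E x = k := by
    intro x hx
    rw [← hE1]
    exact Metric.isOpen_ball.is_const_of_fderiv_eq_zero (𝕜 := ℝ)
      (convex_ball x₁ r).isPreconnected
      (fun y hy => ((hball y hy).2.2.2.1.differentiableAt (by norm_num)).differentiableWithinAt)
      (fun y hy => hDE y hy) hx (Metric.mem_ball_self hr)
  have hDMk : ∀ x ∈ Metric.ball x₁ r, fderiv ℝ M (f x) k = 0 := by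
    intro x hx
    obtain ⟨b1, b2, b3, b4, -⟩ := hball x hx
    have hct : ContinuousAt (fun x => fderiv ℝ M (f x) k) x :=
      (ContinuousAt.comp (f := f) h.ctsD.continuousAt (hc.cts b1)).clm_apply continuousAt_const
    refine eq_zero_of_closure (φ := fun x => fderiv ℝ M (f x) k) hct (h.reg_dense hc b1 b2) ?_
    filter_upwards [Metric.isOpen_ball.mem_nhds hx] with y hy hy2
    obtain ⟨c1, c2⟩ := hpar y hy hy2.1 hy2.2
    rw [hEk y hy] at c2
    have := h.MQ _ (hc.mem (hball y hy).1)
    rw [← c2, map_smul] at this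
    exact (smul_eq_zero.1 this).resolve_left c1
  filter_upwards [hreg _ (Metric.ball_mem_nhds x₁ hr)] with q hq hqS
  obtain ⟨x, hx, rfl⟩ := hq hqS
  exact hDMk x hx

lemma Core.straight (h : Core S M Q Φ) {q : E3} (hq : q ∈ S) (hW : WW M q ≠ 0) {k : E3}
    (hk : ‖k‖ = 1) (hker : ∀ᶠ q' in 𝓝 q, q' ∈ S → fderiv ℝ M q' k = 0) :
    ∃ η > 0, ∀ᶠ q' in 𝓝 q, q' ∈ S → ∀ t : ℝ, |t| < η → q' + t • k ∈ S ∧ M (q' + t • k) = M q' := by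
  have hkk : ⟪k, k⟫ = 1 := by rw [real_inner_self_eq_norm_sq, hk]; norm_num
  have hAo : IsOpen {q | WW M q ≠ 0} := isOpen_ne.preimage h.ctsW
  obtain ⟨R, O, σ, Bx, hON⟩ := h.box hq hW hk (hker.self_of_nhds hq)
    (Filter.inter_mem hker (hAo.mem_nhds hW))
  have hEC : ∀ q ∈ O, q ∈ S → EC S M q := fun q h1 h2 => h.ec_all h2 (hON h1).2
  have hR := Bx.pos
  refine ⟨R / 2, by linarith, ?_⟩
  have hHc : ContinuousAt (HH M k) q := (h.HH_cd k).continuous.continuousAt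
  have hev : ∀ᶠ q' in 𝓝 q, dist (HH M k q') (HH M k q) < R / 2 :=
    hHc.eventually (Metric.ball_mem_nhds _ (half_pos hR))
  filter_upwards [Bx.oO.mem_nhds Bx.zO, hev] with q' hq'O hq'H hq'S
  have hb : ∀ t ∈ Metric.ball (0 : ℝ) (R / 2),
      HH M k q' + t • k ∈ Metric.ball (HH M k q) R := by
    intro t ht
    rw [Metric.mem_ball, dist_eq_norm]
    have h1 : HH M k q' + t • k - HH M k q = (HH M k q' - HH M k q) + t • k := by abel
    rw [h1]
    have h2 : ‖t • k‖ < R / 2 := by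
      rw [norm_smul, hk, mul_one]; simpa using ht
    have h3 : ‖HH M k q' - HH M k q‖ < R / 2 := by
      rw [← dist_eq_norm]; exact hq'H
    linarith [norm_add_le (HH M k q' - HH M k q) (t • k)]
  have hsat := fun t ht => h.sat_box Bx hEC hq'O hq'S (hb t ht)
  have hder : ∀ t ∈ Metric.ball (0 : ℝ) (R / 2),
      HasDerivAt (fun t : ℝ => σ (HH M k q' + t • k) - t • k) 0 t := by
    intro t ht
    have hl : HasDerivAt (fun t : ℝ => HH M k q' + t • k) k t := by
      simpa using ((hasDerivAt_id t).smul_const k).const_add (HH M k q')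
    have h1 : HasDerivAt (fun t : ℝ => σ (HH M k q' + t • k))
        (fderiv ℝ σ (HH M k q' + t • k) k) t :=
      (Bx.diff _ (hb t ht)).hasFDerivAt.comp_hasDerivAt t hl
    set p' := fderiv ℝ σ (HH M k q' + t • k) k with hp'
    have h2 : HasDerivAt (fun t : ℝ => HH M k (σ (HH M k q' + t • k)))
        (DHH M k (σ (HH M k q' + t • k)) p') t :=
      (h.HH_fd k _).comp_hasDerivAt t h1
    have h3 : HasDerivAt (fun t : ℝ => HH M k (σ (HH M k q' + t • k))) k t := by
      refine hl.congr_of_eventuallyEq ?_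
      filter_upwards [Metric.isOpen_ball.mem_nhds ht] with s hs
      exact Bx.right _ (hb s hs)
    have h4 := h2.unique h3
    have hpO : σ (HH M k q' + t • k) ∈ O := Bx.mapsσ _ (hb t ht)
    have h5 : DHH M k (σ (HH M k q' + t • k)) k = k := by
      rw [DHH_apply, (hON hpO).1 (hsat t ht).1, hkk]; simp
    have h6 : p' - k = 0 := Bx.inj _ hpO _ (by rw [map_sub, h4, h5, sub_self])
    have h7 := h1.sub ((hasDerivAt_id t).smul_const k)
    simp only [one_smul, h6] at h7
    exact h7
  intro t ht
  have ht' : t ∈ Metric.ball (0 : ℝ) (R / 2) := by simpa using ht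
  have hc := Metric.isOpen_ball.is_const_of_deriv_eq_zero
    (convex_ball (0 : ℝ) (R / 2)).isPreconnected
    (f := fun t : ℝ => σ (HH M k q' + t • k) - t • k)
    (fun s hs => (hder s hs).differentiableAt.differentiableWithinAt)
    (fun s hs => (hder s hs).deriv) ht' (Metric.mem_ball_self (half_pos hR))
  simp only [zero_smul, add_zero, sub_zero, Bx.left _ hq'O] at hc
  have : σ (HH M k q' + t • k) = q' + t • k := sub_eq_iff_eq_add.1 hc
  rw [← this]
  exact hsat t ht'

def Inj (S : Set E3) (M : E3 → E3) (W0 q : E3) : Prop :=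
  ∃ N : Set E3, IsOpen N ∧ q ∈ N ∧ ∀ q' ∈ N, ∀ q'' ∈ N, q' ∈ S → q'' ∈ S →
    ⟪W0, M q'⟫ = ⟪W0, M q''⟫ → M q' = M q''

lemma Inj.ev {W0 q : E3} (h : Inj S M W0 q) : ∀ᶠ q' in 𝓝 q, Inj S M W0 q' := by
  obtain ⟨N, h1, h2, h3⟩ := h
  filter_upwards [h1.mem_nhds h2] with q' hq' using ⟨N, h1, hq', h3⟩

lemma Core.inj_of_reg (h : Core S M Q Φ) {f U V} (hc : IsChart S f U V) {x} (hx : x ∈ U)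
    (hW : WW M (f x) ≠ 0) (hreg : Reg S f x) (hQS : QS S Q (f x)) :
    Inj S M (WW M (f x)) (f x) := by
  obtain ⟨k, hk, hTk, -⟩ := h.kernel (hc.mem hx)
  have hkk : ⟪k, k⟫ = 1 := by rw [real_inner_self_eq_norm_sq, hk]; norm_num
  obtain ⟨e, he, hxe, -⟩ := h.PP_homeo hc hx hW hk hTk (h.tng_all hc hx hW)
  obtain ⟨η, hη, hst⟩ := h.straight (hc.mem hx) hW hk (h.const_dir hc hx hW hreg hQS hk hTk)
  obtain ⟨ρ, hρ, hb⟩ := Metric.eventually_nhds_iff_ball.1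
    (hst.and (hreg _ (e.open_source.mem_nhds hxe)))
  set m := min (ρ / 3) (η / 2) with hm
  have hm0 : 0 < m := lt_min (by linarith) (by linarith)
  have hm1 : m ≤ ρ / 3 := min_le_left _ _
  have hm2 : m ≤ η / 2 := min_le_right _ _
  refine ⟨Metric.ball (f x) m, Metric.isOpen_ball, Metric.mem_ball_self hm0, ?_⟩
  intro q' hq' q'' hq'' hS' hS'' heq
  rw [Metric.mem_ball, dist_eq_norm] at hq' hq''
  have hd : ‖q'' - q'‖ < 2 * m := by
    have : q'' - q' = (q'' - f x) - (q' - f x) := by abel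
    rw [this]
    linarith [norm_sub_le (q'' - f x) (q' - f x)]
  set t := ⟪k, q'' - q'⟫ with ht
  have htn : |t| ≤ ‖q'' - q'‖ := by
    have := abs_real_inner_le_norm k (q'' - q')
    rwa [hk, one_mul] at this
  have hq'b : q' ∈ Metric.ball (f x) ρ := by rw [Metric.mem_ball, dist_eq_norm]; linarith
  have hq''b : q'' ∈ Metric.ball (f x) ρ := by rw [Metric.mem_ball, dist_eq_norm]; linarith
  obtain ⟨h1, h2⟩ := (hb q' hq'b).1 hS' t (by linarith)
  have hq3 : q' + t • k ∈ Metric.ball (f x) ρ := by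
    rw [Metric.mem_ball, dist_eq_norm]
    have : q' + t • k - f x = (q' - f x) + t • k := by abel
    rw [this]
    have h3 : ‖t • k‖ = |t| := by rw [norm_smul, hk, mul_one, Real.norm_eq_abs]
    linarith [norm_add_le (q' - f x) (t • k)]
  obtain ⟨x', hx', hx'e⟩ := (hb _ hq3).2 h1
  obtain ⟨x'', hx'', hx''e⟩ := (hb _ hq''b).2 hS''
  have hP : e x' = e x'' := by
    rw [he]
    simp only [PP, hx'e, hx''e, h2, heq, Prod.mk.injEq, true_and]
    rw [inner_add_right, inner_smul_right, hkk, ht, inner_sub_right]; ring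
  have := e.injOn hx' hx'' hP
  rw [← h2, ← hx'e, this, hx''e]

lemma Core.reg_of_inj (h : Core S M Q Φ) {f U V} (hc : IsChart S f U V) {x} (hx : x ∈ U)
    (hW : WW M (f x) ≠ 0) (hinj : Inj S M (WW M (f x)) (f x)) : Reg S f x := by
  obtain ⟨k, hk, hTk, -⟩ := h.kernel (hc.mem hx)
  obtain ⟨e, he, hxe, -⟩ := h.PP_homeo hc hx hW hk hTk (h.tng_all hc hx hW)
  obtain ⟨R, O, σ, Bx, -⟩ := h.box (hc.mem hx) hW hk hTk univ_mem
  obtain ⟨N, hNo, hxN, hN⟩ := hinj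
  intro B hB
  set W0 := WW M (f x) with hW0
  set π : E3 → ℝ × ℝ := fun q => (⟪W0, M q⟫, ⟪k, q⟫) with hπ
  have hπc : Continuous π :=
    (continuous_const.inner h.hM.continuous).prodMk (continuous_const.inner continuous_id)
  have hπx : π (f x) = e x := by rw [he]; rfl
  have htg : π (f x) ∈ e.target := by rw [hπx]; exact e.map_source hxe
  have hsx : e.symm (π (f x)) = x := by rw [hπx]; exact e.left_inv hxe
  have hc1 : ContinuousAt (fun q => e.symm (π q)) (f x) :=
    ContinuousAt.comp (f := π) (e.continuousAt_symm htg) hπc.continuousAt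
  have hev : ∀ᶠ x' in 𝓝 (e.symm (π (f x))), x' ∈ B ∧ x' ∈ U ∧ f x' ∈ N ∧ f x' ∈ O := by
    rw [hsx]
    filter_upwards [hB, hc.oU.mem_nhds hx, hc.cts hx (hNo.mem_nhds hxN),
      hc.cts hx (Bx.oO.mem_nhds Bx.zO)] with x' a b c d using ⟨a, b, c, d⟩
  filter_upwards [hc1.eventually hev, hNo.mem_nhds hxN, Bx.oO.mem_nhds Bx.zO,
    hπc.continuousAt (e.open_target.mem_nhds htg)] with q ⟨a1, a2, a3, a4⟩ a5 a6 a7 hqS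
  have hP : π (f (e.symm (π q))) = π q := by
    have := e.right_inv a7
    rw [he] at this
    exact this
  have hP1 : ⟪W0, M (f (e.symm (π q)))⟫ = ⟪W0, M q⟫ := congrArg Prod.fst hP
  have hP2 : ⟪k, f (e.symm (π q))⟫ = ⟪k, q⟫ := congrArg Prod.snd hP
  have hMq := hN _ a3 _ a5 (hc.mem a2) hqS hP1
  have hH : HH M k (f (e.symm (π q))) = HH M k q := by
    simp only [HH, hMq]
    rw [real_inner_comm, hP2, real_inner_comm]
  refine ⟨_, a1, ?_⟩
  rw [← Bx.left _ a4, hH, Bx.left _ a6]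

structure Good (S : Set E3) (M : E3 → E3) (M0 W0 k q : E3) : Prop where
  mem : q ∈ S
  eM : M q = M0
  eW : WW M q = W0
  ker : fderiv ℝ M q k = 0
  inj : Inj S M W0 q

lemma Core.good_open (h : Core S M Q Φ) {M0 W0 k q : E3} (hk : ‖k‖ = 1) (hW0 : W0 ≠ 0)
    (hQS : QS S Q q) (hg : Good S M M0 W0 k q) :
    ∀ᶠ t in 𝓝 (0 : ℝ), Good S M M0 W0 k (q + t • k) := by
  obtain ⟨f, U, V, x, hc, hx, rfl⟩ := exists_chart h.surf hg.mem
  have hW : WW M (f x) ≠ 0 := by rw [hg.eW]; exact hW0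
  have hreg := h.reg_of_inj hc hx hW (by rw [hg.eW]; exact hg.inj)
  have hcd := h.const_dir hc hx hW hreg hQS hk hg.ker
  obtain ⟨η, hη, hst⟩ := h.straight hg.mem hW hk hcd
  have hct : Tendsto (fun t : ℝ => f x + t • k) (𝓝 0) (𝓝 (f x)) := by
    have : Continuous (fun t : ℝ => f x + t • k) := by fun_prop
    simpa using this.tendsto 0
  have hη' : ∀ᶠ t in 𝓝 (0 : ℝ), |t| < η := by
    filter_upwards [Metric.ball_mem_nhds (0 : ℝ) hη] with t ht
    simpa using ht
  filter_upwards [hct.eventually hcd, hct.eventually hg.inj.ev, hη'] with t h1 h2 h3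
  obtain ⟨h4, h5⟩ := hst.self_of_nhds hg.mem t h3
  refine ⟨h4, h5.trans hg.eM, ?_, h1 h4, h2⟩
  -- the acceleration is constant along the line
  have hΦ := h.fl.deriv _ hg.mem 0
  have hΦ0 := h.fl.zero _ hg.mem
  rw [hΦ0] at hΦ
  have d1 : HasDerivAt (fun s => M (Φ (f x) s)) (fderiv ℝ M (f x) (M (f x))) 0 := by
    have hfd : HasFDerivAt M (fderiv ℝ M (f x)) (Φ (f x) 0) := by rw [hΦ0]; exact h.hfd _
    exact hfd.comp_hasDerivAt 0 hΦ
  have d2 : HasDerivAt (fun s => M (Φ (f x) s + t • k)) (fderiv ℝ M (f x + t • k) (M (f x))) 0 := by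
    have hfd : HasFDerivAt M (fderiv ℝ M (f x + t • k)) (Φ (f x) 0 + t • k) := by
      rw [hΦ0]; exact h.hfd _
    exact hfd.comp_hasDerivAt 0 (hΦ.add_const (t • k))
  have d3 : HasDerivAt (fun s => M (Φ (f x) s + t • k)) (fderiv ℝ M (f x) (M (f x))) 0 := by
    refine d1.congr_of_eventuallyEq ?_
    have hcts : ContinuousAt (Φ (f x)) 0 := hΦ.continuousAt
    rw [← hΦ0] at hst
    filter_upwards [hcts.eventually hst] with s hs
    exact (hs (h.fl.mem _ hg.mem s) t h3).2
  have d4 := d2.unique d3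
  unfold WW
  rw [h5, d4]
  exact hg.eW

lemma Core.good_closed (h : Core S M Q Φ) {M0 W0 k q : E3} (hk : ‖k‖ = 1) (hW0 : W0 ≠ 0)
    {T : ℝ} (hT : 0 < T) (hg : ∀ t ∈ Ico 0 T, Good S M M0 W0 k (q + t • k)) :
    Good S M M0 W0 k (q + T • k) := by
  have hkk : ⟪k, k⟫ = 1 := by rw [real_inner_self_eq_norm_sq, hk]; norm_num
  have hlc : Continuous (fun t : ℝ => q + t • k) := by fun_prop
  have hTc : T ∈ closure (Ico 0 T) := by rw [closure_Ico hT.ne]; exact ⟨hT.le, le_rfl⟩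
  have hS : q + T • k ∈ S :=
    closure_minimal (s := Ico 0 T) (t := (fun t : ℝ => q + t • k) ⁻¹' S)
      (fun t ht => (hg t ht).mem) (h.cpt.isClosed.preimage hlc) hTc
  have hM : M (q + T • k) = M0 :=
    eq_zero_of_closure (φ := fun t : ℝ => M (q + t • k))
      (h.hM.continuous.comp hlc).continuousAt hTc (Eventually.of_forall fun t ht => (hg t ht).eM)
  have hW : WW M (q + T • k) = W0 :=
    eq_zero_of_closure (φ := fun t : ℝ => WW M (q + t • k))
      (h.ctsW.comp hlc).continuousAt hTc (Eventually.of_forall fun t ht => (hg t ht).eW)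
  have hker : fderiv ℝ M (q + T • k) k = 0 :=
    eq_zero_of_closure (φ := fun t : ℝ => fderiv ℝ M (q + t • k) k)
      ((h.ctsD.comp hlc).clm_apply continuous_const).continuousAt hTc
      (Eventually.of_forall fun t ht => (hg t ht).ker)
  refine ⟨hS, hM, hW, hker, ?_⟩
  have hWne : WW M (q + T • k) ≠ 0 := by rw [hW]; exact hW0
  have hAo : IsOpen {q | WW M q ≠ 0} := isOpen_ne.preimage h.ctsW
  obtain ⟨R, O, σ, Bx, hON⟩ := h.box hS hWne hk hker (hAo.mem_nhds hWne)
  have hEC : ∀ q ∈ O, q ∈ S → EC S M q := fun q h1 h2 => h.ec_all h2 (hON h1)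
  set z := q + T • k with hz
  -- choose a previous parameter
  have hev : ∀ᶠ t in 𝓝[<] T, t ∈ Ico 0 T ∧ q + t • k ∈ O := by
    have h1 : ∀ᶠ t in 𝓝[<] T, q + t • k ∈ O :=
      nhdsWithin_le_nhds (hlc.continuousAt (Bx.oO.mem_nhds Bx.zO))
    filter_upwards [h1, Ico_mem_nhdsLT hT] with t a b using ⟨b, a⟩
  obtain ⟨t, ht, htO⟩ := hev.exists
  have hgt := hg t ht
  obtain ⟨N, hNo, hqN, hN⟩ := hgt.inj
  have hHt : HH M k (q + t • k) = HH M k z + (t - T) • k := by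
    rw [HH_of_eq (k := k) (hgt.eM.trans hM.symm)]
    congr 2
    have : q + t • k - z = (t - T) • k := by rw [hz]; module
    rw [this, real_inner_smul_left, hkk, mul_one]
  have hbt : HH M k z + (t - T) • k ∈ Metric.ball (HH M k z) R := hHt ▸ Bx.mapsH _ htO
  have hσt : σ (HH M k z + (t - T) • k) = q + t • k := by rw [← hHt]; exact Bx.left _ htO
  have hc1 : Continuous (fun y => HH M k y + (t - T) • k) :=
    (h.HH_cd k).continuous.add continuous_const
  have hc2 : ContinuousAt (fun y => σ (HH M k y + (t - T) • k)) z :=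
    ContinuousAt.comp (f := fun y => HH M k y + (t - T) • k) (Bx.cts _ hbt) hc1.continuousAt
  have hev2 : ∀ᶠ y in 𝓝 z, y ∈ O ∧ HH M k y + (t - T) • k ∈ Metric.ball (HH M k z) R ∧
      σ (HH M k y + (t - T) • k) ∈ N := by
    have h1 : ∀ᶠ y in 𝓝 z, σ (HH M k y + (t - T) • k) ∈ N := by
      apply hc2
      simp only [hσt]
      exact hNo.mem_nhds hqN
    filter_upwards [Bx.oO.mem_nhds Bx.zO,
      hc1.continuousAt (Metric.isOpen_ball.mem_nhds hbt), h1] with y a b c using ⟨a, b, c⟩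
  obtain ⟨N', hN', hN'o, hzN'⟩ := eventually_nhds_iff.1 hev2
  refine ⟨N', hN'o, hzN', ?_⟩
  intro q' hq' q'' hq'' hS' hS'' heq
  obtain ⟨a1, a2, a3⟩ := hN' q' hq'
  obtain ⟨b1, b2, b3⟩ := hN' q'' hq''
  obtain ⟨a4, a5⟩ := h.sat_box Bx hEC a1 hS' a2
  obtain ⟨b4, b5⟩ := h.sat_box Bx hEC b1 hS'' b2
  rw [← a5, ← b5]
  exact hN _ a3 _ b3 a4 b4 (by rw [a5, b5]; exact heq)

theorem Core.main (h : Core S M Q Φ) {q₁ : E3} (hq : q₁ ∈ S) (hW : WW M q₁ ≠ 0)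
    {OO : Set (E3 × E3)} (hOO : IsOpen OO) (hqO : (M q₁, WW M q₁) ∈ OO)
    (hQ : ∀ q ∈ S, (M q, WW M q) ∈ OO → ∃ c : ℝ, fderiv ℝ Q q (Q q) = c • Q q) : False := by
  have hMW : Continuous (fun q => (M q, WW M q)) := h.hM.continuous.prodMk h.ctsW
  have hAo : IsOpen {q | WW M q ≠ 0} := isOpen_ne.preimage h.ctsW
  have hQS : ∀ q, (M q, WW M q) ∈ OO → QS S Q q := by
    intro q hq
    filter_upwards [hMW.continuousAt (hOO.mem_nhds hq)] with q' h1 h2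
    exact hQ q' h2 h1
  obtain ⟨f, U, V, x, hc, hx, ⟨hxW, hxO⟩, hreg⟩ :=
    h.exists_reg (hAo.inter (hOO.preimage hMW)) hq ⟨hW, hqO⟩
  obtain ⟨k, hk, hTk, -⟩ := h.kernel (hc.mem hx)
  set M0 := M (f x) with hM0
  set W0 := WW M (f x) with hW0
  have hgood0 : Good S M M0 W0 k (f x) :=
    ⟨hc.mem hx, rfl, rfl, hTk, h.inj_of_reg hc hx hxW hreg (hQS _ hxO)⟩
  have hop : ∀ t : ℝ, Good S M M0 W0 k (f x + t • k) →
      ∀ᶠ s in 𝓝 t, Good S M M0 W0 k (f x + s • k) := by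
    intro t ht
    have h1 := h.good_open hk hxW (hQS _ (by rw [ht.eM, ht.eW]; exact hxO)) ht
    have h2 : Tendsto (fun s : ℝ => s - t) (𝓝 t) (𝓝 0) := by
      have : Continuous (fun s : ℝ => s - t) := by fun_prop
      simpa using this.tendsto t
    filter_upwards [h2.eventually h1] with s hs
    have : f x + t • k + (s - t) • k = f x + s • k := by module
    rwa [this] at hs
  have hall : ∀ t : ℝ, 0 ≤ t → Good S M M0 W0 k (f x + t • k) := by
    by_contra hcon
    push Not at hcon
    obtain ⟨t1, ht1, ht1b⟩ := hcon
    set Bad := {t : ℝ | 0 ≤ t ∧ ¬ Good S M M0 W0 k (f x + t • k)} with hBad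
    have hbdd : BddBelow Bad := ⟨0, fun t ht => ht.1⟩
    have hne : Bad.Nonempty := ⟨t1, ht1, ht1b⟩
    set T := sInf Bad with hT
    have hT0 : 0 ≤ T := le_csInf hne fun t ht => ht.1
    have hlt : ∀ t ∈ Ico 0 T, Good S M M0 W0 k (f x + t • k) := by
      intro t ht
      by_contra hb
      exact absurd (csInf_le hbdd (show t ∈ Bad from ⟨ht.1, hb⟩)) (not_le.2 ht.2)
    have hGT : Good S M M0 W0 k (f x + T • k) := by
      rcases hT0.eq_or_lt with h0 | h0
      · rw [← h0]; simpa using hgood0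
      · exact h.good_closed hk hxW h0 hlt
    obtain ⟨δ, hδ, hb⟩ := Metric.eventually_nhds_iff_ball.1 (hop T hGT)
    obtain ⟨t2, ht2, ht2b⟩ := exists_lt_of_csInf_lt hne (show sInf Bad < T + δ by linarith)
    have h3 : T ≤ t2 := csInf_le hbdd ht2
    exact ht2.2 (hb t2 (by rw [Metric.mem_ball, Real.dist_eq, abs_lt]; constructor <;> linarith))
  obtain ⟨C, hC⟩ := h.cpt.isBounded.exists_norm_le
  have h1 := hC _ (hall (C + ‖f x‖ + 1) (by
    have := hC _ (hc.mem hx)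
    have := norm_nonneg (f x)
    linarith)).mem
  have h2 : ‖(C + ‖f x‖ + 1) • k‖ ≤ ‖f x + (C + ‖f x‖ + 1) • k‖ + ‖f x‖ := by
    have h3 := norm_sub_le (f x + (C + ‖f x‖ + 1) • k) (f x)
    rwa [add_sub_cancel_left] at h3
  rw [norm_smul, hk, mul_one, Real.norm_eq_abs] at h2
  linarith [le_abs_self (C + ‖f x‖ + 1)]

end

lemma extend_field {S W : Set E3} (hS : IsCompact S) (hW : IsOpen W) (hSW : S ⊆ W) {v : E3 → E3}
    (hv : ContDiffOn ℝ 1 v W) :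
    ∃ v' : E3 → E3, ContDiff ℝ 1 v' ∧ HasCompactSupport v' ∧ ∀ p ∈ S, v' =ᶠ[𝓝 p] v := by
  obtain ⟨K, hK, hSK, hKW⟩ := exists_compact_between hS hW hSW
  obtain ⟨φ, h1, h0, -⟩ := exists_contMDiffMap_one_nhds_of_subset_interior
    (modelWithCornersSelf ℝ E3) (n := 1) hS.isClosed hSK
  have hφ : ContDiff ℝ 1 φ := φ.contMDiff.contDiff
  refine ⟨fun x => φ x • v x, ?_, ?_, ?_⟩
  · rw [contDiff_iff_contDiffAt]
    intro x
    by_cases hx : x ∈ W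
    · exact hφ.contDiffAt.smul (hv.contDiffAt (hW.mem_nhds hx))
    · have : (fun x => φ x • v x) =ᶠ[𝓝 x] fun _ => 0 := by
        filter_upwards [hK.isClosed.isOpen_compl.mem_nhds (fun h => hx (hKW h))] with y hy
        rw [h0 y hy, zero_smul]
      exact contDiffAt_const.congr_of_eventuallyEq this
  · exact HasCompactSupport.intro hK fun x hx => by rw [h0 x hx, zero_smul]
  · intro p hp
    filter_upwards [(eventually_nhdsSet_iff_forall.1 h1) p hp] with y hy
    rw [hy, one_smul]

lemma sym_of_curl {v : E3 → E3} {p : E3} (h : curl3 v p = 0) (u w : E3) :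
    ⟪fderiv ℝ v p u, w⟫ = ⟪u, fderiv ℝ v p w⟫ := by
  have h0 : pder v 2 1 p - pder v 1 2 p = 0 := by
    simpa [curl3, mk3] using congrArg (fun z : E3 => z 0) h
  have h1 : pder v 0 2 p - pder v 2 0 p = 0 := by
    simpa [curl3, mk3] using congrArg (fun z : E3 => z 1) h
  have h2 : pder v 1 0 p - pder v 0 1 p = 0 := by
    simpa [curl3, mk3] using congrArg (fun z : E3 => z 2) h
  have hexp : ∀ (T : E3 →L[ℝ] E3) (u : E3) (i : Fin 3), T u i =
      u 0 * T (e3 0) i + u 1 * T (e3 1) i + u 2 * T (e3 2) i := by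
    intro T u i
    have : u = u 0 • e3 0 + u 1 • e3 1 + u 2 • e3 2 := by
      ext j; fin_cases j <;> simp [e3]
    conv_lhs => rw [this]
    simp
  simp only [PiLp.inner_apply, Fin.sum_univ_three, RCLike.inner_apply, conj_trivial]
  rw [hexp _ u 0, hexp _ u 1, hexp _ u 2, hexp _ w 0, hexp _ w 1, hexp _ w 2]
  unfold pder at h0 h1 h2
  linear_combination (u 1 * w 2 - u 2 * w 1) * h0 + (u 2 * w 0 - u 0 * w 2) * h1
    + (u 0 * w 1 - u 1 * w 0) * h2

lemma trace_of_div {v : E3 → E3} {p : E3} :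
    LinearMap.trace ℝ E3 (fderiv ℝ v p : E3 →ₗ[ℝ] E3) = div3 v p := by
  rw [LinearMap.trace_eq_sum_inner _ (EuclideanSpace.basisFun (Fin 3) ℝ)]
  simp [div3, pder, e3, EuclideanSpace.inner_single_left]

lemma sym_tr_closure {S Ω W : Set E3} (hW : IsOpen W) (hsub : Ω ∪ S ⊆ W) {v : E3 → E3}
    (hv : ContDiffOn ℝ 1 v W) (hcl : S ⊆ closure Ω) (hd : ∀ p ∈ Ω, div3 v p = 0)
    (hc : ∀ p ∈ Ω, curl3 v p = 0) {p : E3} (hp : p ∈ S) :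
    (∀ u w, ⟪fderiv ℝ v p u, w⟫ = ⟪u, fderiv ℝ v p w⟫) ∧
    LinearMap.trace ℝ E3 (fderiv ℝ v p : E3 →ₗ[ℝ] E3) = 0 := by
  have hD : ContinuousAt (fderiv ℝ v) p :=
    (hv.continuousOn_fderiv_of_isOpen hW le_rfl).continuousAt (hW.mem_nhds (hsub (Or.inr hp)))
  constructor
  · intro u w
    have h1 : ContinuousAt (fun q => ⟪fderiv ℝ v q u, w⟫ - ⟪u, fderiv ℝ v q w⟫) p :=
      ((hD.clm_apply continuousAt_const).inner (𝕜 := ℝ) continuousAt_const).sub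
        (continuousAt_const.inner (𝕜 := ℝ) (hD.clm_apply continuousAt_const))
    have := eq_zero_of_closure (y := 0) h1 (hcl hp)
      (Eventually.of_forall fun q hq => sub_eq_zero.2 (sym_of_curl (hc q hq) u w))
    exact sub_eq_zero.1 this
  · rw [trace_of_div]
    have h1 : ContinuousAt (fun q => div3 v q) p := by
      unfold div3
      refine tendsto_finsetSum _ fun i _ => ?_
      have h2 : ContinuousAt (fun q => fderiv ℝ v q (e3 i)) p := hD.clm_apply continuousAt_const
      exact ((EuclideanSpace.proj (𝕜 := ℝ) i).continuous.continuousAt.comp h2)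
    exact eq_zero_of_closure h1 (hcl hp) (Eventually.of_forall hd)

lemma QM_of_MQ {S : Set E3} (hS : IsSurface 2 S) {X Y : E3 → E3} (hX : ContDiff ℝ 1 X)
    (hY : ContDiff ℝ 1 Y) {c : ℝ} (hc : ∀ p ∈ S, ⟪X p, Y p⟫ = c)
    (sX : ∀ p ∈ S, ∀ u v, ⟪fderiv ℝ X p u, v⟫ = ⟪u, fderiv ℝ X p v⟫)
    (sY : ∀ p ∈ S, ∀ u v, ⟪fderiv ℝ Y p u, v⟫ = ⟪u, fderiv ℝ Y p v⟫)
    (tX : ∀ f U V, IsChart S f U V → ∀ x ∈ U, ∃ ξ, fderiv ℝ f x ξ = X (f x))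
    (tY : ∀ f U V, IsChart S f U V → ∀ x ∈ U, ∃ ξ, fderiv ℝ f x ξ = Y (f x))
    (XY : ∀ p ∈ S, fderiv ℝ X p (Y p) = 0) : ∀ p ∈ S, fderiv ℝ Y p (X p) = 0 := by
  intro p hp
  obtain ⟨f, U, V, x, hf, hx, rfl⟩ := exists_chart hS hp
  have hXd := hX.differentiable (by norm_num) (f x)
  have hYd := hY.differentiable (by norm_num) (f x)
  have hn : ∀ ζ, ⟪fderiv ℝ Y (f x) (X (f x)), fderiv ℝ f x ζ⟫ = 0 := by
    intro ζ
    have d1 : HasFDerivAt (fun y => X (f y)) _ x := hXd.hasFDerivAt.comp x (hf.hfd hx)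
    have d2 : HasFDerivAt (fun y => Y (f y)) _ x := hYd.hasFDerivAt.comp x (hf.hfd hx)
    have d3 := d1.inner ℝ d2
    have d4 : HasFDerivAt (fun y => ⟪X (f y), Y (f y)⟫) (0 : E2 →L[ℝ] ℝ) x := by
      refine (hasFDerivAt_const c x).congr_of_eventuallyEq ?_
      filter_upwards [hf.oU.mem_nhds hx] with y hy
      exact hc _ (hf.mem hy)
    have d5 := congrArg (fun T => T ζ) (d3.unique d4)
    simp [fderivInnerCLM_apply] at d5
    rw [sX _ hp, XY _ hp, inner_zero_right, add_zero] at d5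
    rw [sY _ hp]
    exact d5
  obtain ⟨ξ, hξ⟩ := tX f U V hf x hx
  obtain ⟨η, hη⟩ := tY f U V hf x hx
  have n1 := normal_deriv (hf.cda hx) (hf.imm x hx) hYd
    (by filter_upwards [hf.oU.mem_nhds hx] with y hy using tY f U V hf y hy) hη hn ξ
  have n2 := normal_deriv (hf.cda hx) (hf.imm x hx) hXd
    (by filter_upwards [hf.oU.mem_nhds hx] with y hy using tX f U V hf y hy) hξ hn η
  have hsym : fderiv ℝ (fderiv ℝ f) x ξ η = fderiv ℝ (fderiv ℝ f) x η ξ :=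
    ((hf.cda hx).isSymmSndFDerivAt (by simp)).eq ξ η
  rw [hη, XY _ hp, inner_zero_right] at n2
  rw [hξ, hsym, ← n2] at n1
  exact inner_self_eq_zero.1 n1

lemma FlowOn.const_along {S : Set E3} {X Y : E3 → E3} {Ψ} (h : FlowOn S Y Ψ)
    (hX : ContDiff ℝ 1 X) (XY : ∀ p ∈ S, fderiv ℝ X p (Y p) = 0) :
    ∀ r ∈ S, ∀ t, X (Ψ r t) = X r := by
  intro r hr t
  have hd : ∀ t, HasDerivAt (fun t => X (Ψ r t)) 0 t := by
    intro t
    have := (hX.differentiable (by norm_num) (Ψ r t)).hasFDerivAt.comp_hasDerivAt t (h.deriv r hr t)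
    rwa [XY _ (h.mem r hr t)] at this
  have := is_const_of_deriv_eq_zero (fun t => (hd t).differentiableAt) (fun t => (hd t).deriv) t 0
  rwa [h.zero r hr] at this

lemma FlowOn.no_drift {S : Set E3} (hS : IsCompact S) {Y : E3 → E3} {Ψ} (h : FlowOn S Y Ψ)
    {q : E3} (hq : q ∈ S) (a : E3) {c : ℝ} (hc : ∀ t, ⟪a, Y (Ψ q t)⟫ = c) : c = 0 := by
  have hd : ∀ t, HasDerivAt (fun t : ℝ => ⟪a, Ψ q t⟫ - t * c) 0 t := by
    intro t
    have h1 : HasDerivAt (fun t => ⟪a, Ψ q t⟫) ⟪a, Y (Ψ q t)⟫ t := by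
      simpa using (hasDerivAt_const t a).inner ℝ (h.deriv q hq t)
    rw [hc t] at h1
    simpa using h1.fun_sub ((hasDerivAt_id t).mul_const c)
  have hcon : ∀ t, ⟪a, Ψ q t⟫ - t * c = ⟪a, q⟫ := by
    intro t
    have := is_const_of_deriv_eq_zero (fun t => (hd t).differentiableAt) (fun t => (hd t).deriv) t 0
    simpa [h.zero q hq] using this
  by_contra hne
  obtain ⟨C, hC⟩ := hS.isBounded.exists_norm_le
  have hb : ∀ p ∈ S, |⟪a, p⟫| ≤ ‖a‖ * C := fun p hp =>
    (abs_real_inner_le_norm a p).trans (mul_le_mul_of_nonneg_left (hC p hp) (norm_nonneg a))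
  have h1 := hcon ((‖a‖ * C + ‖a‖ * C + 1) / c)
  rw [div_mul_cancel₀ _ hne] at h1
  have h2 := abs_le.1 (hb _ (h.mem q hq ((‖a‖ * C + ‖a‖ * C + 1) / c)))
  have h3 := abs_le.1 (hb _ hq)
  linarith [h2.1, h2.2, h3.1, h3.2]

lemma par3 {a b y w : E3} (hG : ‖a‖ ^ 2 * ‖b‖ ^ 2 - ⟪a, b⟫ ^ 2 ≠ 0) (hy : y ≠ 0)
    (h1 : ⟪a, y⟫ = 0) (h2 : ⟪b, y⟫ = 0) (h3 : ⟪a, w⟫ = 0) (h4 : ⟪b, w⟫ = 0) :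
    ∃ c : ℝ, w = c • y := by
  have hli : LinearIndependent ℝ ![a, b] := by
    rw [LinearIndependent.pair_iff]
    intro s t hst
    have e1 : s * ‖a‖ ^ 2 + t * ⟪a, b⟫ = 0 := by
      have := congrArg (fun z => ⟪a, z⟫) hst
      simpa [inner_add_right, inner_smul_right, real_inner_self_eq_norm_sq] using this
    have e2 : s * ⟪a, b⟫ + t * ‖b‖ ^ 2 = 0 := by
      have := congrArg (fun z => ⟪b, z⟫) hst
      simpa [inner_add_right, inner_smul_right, real_inner_self_eq_norm_sq,
        real_inner_comm a b] using this
    constructor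
    · refine (mul_eq_zero.1 (?_ : s * (‖a‖ ^ 2 * ‖b‖ ^ 2 - ⟪a, b⟫ ^ 2) = 0)).resolve_right hG
      linear_combination ‖b‖ ^ 2 * e1 - ⟪a, b⟫ * e2
    · refine (mul_eq_zero.1 (?_ : t * (‖a‖ ^ 2 * ‖b‖ ^ 2 - ⟪a, b⟫ ^ 2) = 0)).resolve_right hG
      linear_combination ‖a‖ ^ 2 * e2 - ⟪a, b⟫ * e1
  have hfr := finrank_span_eq_card hli
  have hsum := Submodule.finrank_add_finrank_orthogonal (Submodule.span ℝ (Set.range ![a, b]))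
  rw [hfr] at hsum
  simp at hsum
  have hone : Module.finrank ℝ (Submodule.span ℝ (Set.range ![a, b]))ᗮ = 1 := by
    simp; omega
  have mem : ∀ z : E3, ⟪a, z⟫ = 0 → ⟪b, z⟫ = 0 → z ∈ (Submodule.span ℝ (Set.range ![a, b]))ᗮ := by
    intro z h1 h2
    rw [Submodule.mem_orthogonal]
    intro u hu
    induction hu using Submodule.span_induction with
    | mem x hx =>
      obtain ⟨i, rfl⟩ := hx
      fin_cases i
      · exact h1
      · exact h2
    | zero => simp
    | add x y _ _ hx hy => rw [inner_add_left, hx, hy, add_zero]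
    | smul c x _ hx => rw [inner_smul_left, hx, mul_zero]
  obtain ⟨c, hc⟩ := exists_smul_eq_of_finrank_eq_one hone
    (x := ⟨y, mem y h1 h2⟩) (fun h => hy (congrArg Subtype.val h)) ⟨w, mem w h3 h4⟩
  exact ⟨c, (congrArg Subtype.val hc).symm⟩

lemma par2 {y w : E3} (hG : ‖y‖ ^ 2 * ‖w‖ ^ 2 - ⟪y, w⟫ ^ 2 = 0) (hy : y ≠ 0) :
    ∃ c : ℝ, w = c • y := by
  have hn : ‖y‖ ^ 2 ≠ 0 := by positivity
  refine ⟨⟪y, w⟫ / ‖y‖ ^ 2, ?_⟩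
  rw [← sub_eq_zero, ← inner_self_eq_zero (𝕜 := ℝ)]
  simp only [inner_sub_left, inner_sub_right, inner_smul_left, inner_smul_right, conj_trivial,
    real_inner_self_eq_norm_sq, real_inner_comm y w]
  field_simp
  linear_combination hG

def GramSet : Set (E3 × E3) := {z | ‖z.1‖ ^ 2 * ‖z.2‖ ^ 2 - ⟪z.1, z.2⟫ ^ 2 ≠ 0}

lemma isOpen_GramSet : IsOpen GramSet := by
  refine isOpen_ne.preimage (f := fun z : E3 × E3 => ‖z.1‖ ^ 2 * ‖z.2‖ ^ 2 - ⟪z.1, z.2⟫ ^ 2) ?_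
  exact ((continuous_fst.norm.pow 2).mul (continuous_snd.norm.pow 2)).sub
    ((continuous_fst.inner continuous_snd).pow 2)

/-- Case I: the field and its acceleration are somewhere independent. -/
lemma Core.caseI {S : Set E3} {M Q : E3 → E3} {Φ} (h : Core S M Q Φ)
    (hac : ∀ q ∈ S, ⟪WW M q, Q q⟫ = 0 ∧ ⟪M q, WW Q q⟫ = 0 ∧ ⟪WW M q, WW Q q⟫ = 0)
    {q : E3} (hq : q ∈ S) (hG : (M q, WW M q) ∈ GramSet) : False := by
  refine h.main hq ?_ isOpen_GramSet hG ?_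
  · intro h0
    rw [h0] at hG
    simp [GramSet] at hG
  · intro p hp hpG
    by_cases hQ : Q p = 0
    · exact ⟨0, by rw [hQ]; simp⟩
    · exact par3 hpG hQ (h.orth p hp) (hac p hp).1 (hac p hp).2.1 (hac p hp).2.2

lemma final_contra_s6 {S : Set E3} (hcpt : IsCompact S) (hint : interior S = ∅) (hS : IsSurface 2 S)
    (hne : S.Nonempty) {X Y : E3 → E3} {Φ Ψ} (hX : ContDiff ℝ 1 X) (hY : ContDiff ℝ 1 Y)
    {K B : NNReal} (lX : LipschitzWith K X) (lY : LipschitzWith K Y) (bX : ∀ x, ‖X x‖ ≤ B)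
    (bY : ∀ x, ‖Y x‖ ≤ B) (hΦ : FlowOn S X Φ) (hΨ : FlowOn S Y Ψ)
    (sX : ∀ p ∈ S, ∀ u v, ⟪fderiv ℝ X p u, v⟫ = ⟪u, fderiv ℝ X p v⟫)
    (sY : ∀ p ∈ S, ∀ u v, ⟪fderiv ℝ Y p u, v⟫ = ⟪u, fderiv ℝ Y p v⟫)
    (trX : ∀ p ∈ S, LinearMap.trace ℝ E3 (fderiv ℝ X p : E3 →ₗ[ℝ] E3) = 0)
    (trY : ∀ p ∈ S, LinearMap.trace ℝ E3 (fderiv ℝ Y p : E3 →ₗ[ℝ] E3) = 0)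
    (XY : ∀ p ∈ S, fderiv ℝ X p (Y p) = 0) {c : ℝ} (hc : ∀ p ∈ S, ⟪X p, Y p⟫ = c)
    (hd : S ⊆ closure {p | p ∈ S ∧ X p ≠ 0 ∧ Y p ≠ 0}) : False := by
  have cX := hΨ.const_along hX XY
  have hc0 : c = 0 := by
    obtain ⟨q, hq⟩ := hne
    refine hΨ.no_drift hcpt hq (X q) fun t => ?_
    rw [← cX q hq t]
    exact hc _ (hΨ.mem q hq t)
  subst hc0
  have tan : ∀ {v : E3 → E3} {Θ}, FlowOn S v Θ → LipschitzWith K v → (∀ x, ‖v x‖ ≤ B) →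
      ∀ f U V, IsChart S f U V → ∀ x ∈ U, ∃ ξ, fderiv ℝ f x ξ = v (f x) := by
    intro v Θ h1 h2 h3 f U V hf x hx
    refine tangent_sheet hint h1 h2 h3 ((hf.cda hx).hasStrictFDerivAt (by norm_num))
      (hf.imm x hx) ?_
    filter_upwards [hf.oU.mem_nhds hx] with y hy using hf.mem hy
  have tX := tan hΦ lX bX
  have tY := tan hΨ lY bY
  have YX := QM_of_MQ hS hX hY hc sX sY tX tY XY
  have cY := hΦ.const_along hY YX
  have hac : ∀ q ∈ S, ⟪WW X q, Y q⟫ = 0 ∧ ⟪X q, WW Y q⟫ = 0 ∧ ⟪WW X q, WW Y q⟫ = 0 :=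
    fun q hq => flows_accel hΦ hΨ hq (hX.differentiable (by norm_num) q)
      (hY.differentiable (by norm_num) q)
      (flows_orth hΦ hΨ lX lY bY cX cY hc hq)
  have C1 : Core S X Y Φ := ⟨hcpt, hint, hS, hX, hY, sX, trX, XY, YX, hc, hΦ, tX, tY, hd⟩
  have C2 : Core S Y X Ψ := ⟨hcpt, hint, hS, hY, hX, sY, trY, YX, XY,
    fun p hp => by rw [real_inner_comm]; exact hc p hp, hΨ, tY, tX, by
      simpa only [and_comm (a := X _ ≠ 0)] using hd⟩
  have hac2 : ∀ q ∈ S, ⟪WW Y q, X q⟫ = 0 ∧ ⟪Y q, WW X q⟫ = 0 ∧ ⟪WW Y q, WW X q⟫ = 0 := by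
    intro q hq
    obtain ⟨a, b, d⟩ := hac q hq
    exact ⟨by rwa [real_inner_comm], by rwa [real_inner_comm], by rwa [real_inner_comm]⟩
  by_cases hI : ∃ q ∈ S, (X q, WW X q) ∈ GramSet
  · obtain ⟨q, hq, hG⟩ := hI
    exact C1.caseI hac hq hG
  by_cases hI2 : ∃ q ∈ S, (Y q, WW Y q) ∈ GramSet
  · obtain ⟨q, hq, hG⟩ := hI2
    exact C2.caseI hac2 hq hG
  push Not at hI2
  have hex : ∃ q ∈ S, WW X q ≠ 0 := by
    by_contra hcon
    push Not at hcon
    obtain ⟨q, hq⟩ := hne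
    obtain ⟨p, hp, hpX, -⟩ : {p | p ∈ S ∧ X p ≠ 0 ∧ Y p ≠ 0}.Nonempty :=
      closure_nonempty_iff.1 ⟨q, hd hq⟩
    have := hΦ.no_drift hcpt hp (X p) (c := ⟪X p, X p⟫) fun t => by
      rw [hΦ.const_along hX hcon p hp t]
    exact hpX (inner_self_eq_zero.1 this)
  obtain ⟨q, hq, hW⟩ := hex
  refine C1.main hq hW isOpen_univ (mem_univ _) fun p hp _ => ?_
  by_cases hQ : Y p = 0
  · exact ⟨0, by rw [hQ]; simp⟩
  · have := hI2 p hp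
    simp only [GramSet, mem_setOf_eq, not_not] at this
    exact par2 this hQ

lemma cs_bounds {v : E3 → E3} (hv : ContDiff ℝ 1 v) (hs : HasCompactSupport v) :
    ∃ K B : NNReal, LipschitzWith K v ∧ ∀ x, ‖v x‖ ≤ B := by
  obtain ⟨K, hK⟩ := hv.lipschitzWith_of_hasCompactSupport hs (by norm_num)
  obtain ⟨C, hC⟩ := hs.exists_bound_of_continuous hv.continuous
  exact ⟨K, C.toNNReal, hK, fun x => (hC x).trans (Real.le_coe_toNNReal C)⟩

lemma locally_const {S : Set E3} (hconn : IsConnected S) {g : E3 → ℝ}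
    (h : ∀ p ∈ S, ∀ᶠ q in 𝓝[S] p, g q = g p) : ∃ c, ∀ p ∈ S, g p = c := by
  obtain ⟨p0, hp0⟩ := hconn.nonempty
  haveI : PreconnectedSpace S := isPreconnected_iff_preconnectedSpace.1 hconn.isPreconnected
  have hl : IsLocallyConstant (fun p : S => g p) := by
    rw [IsLocallyConstant.iff_eventually_eq]
    intro p
    have := h p p.2
    rw [nhdsWithin_eq_map_subtype_coe p.2] at this
    exact this
  exact ⟨g p0, fun p hp => hl.apply_eq_of_preconnectedSpace ⟨p, hp⟩ ⟨p0, hp0⟩⟩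

/-- Let `S ⊂ ℝ³` be a smooth compact closed connected embedded surface of
genus strictly greater than 1, i.e. homeomorphic to neither the 2-sphere nor the 2-torus,
bounding the region `Ωm` with exterior `Ωp`, and let `(vm, vp)` satisfy the CVS conditions
(1)–(5).  Then either `vp = vm` on some nonempty (relatively) open subset of `S`, or
`vp = -vm` on some nonempty (relatively) open subset of `S`. -/
theorem statement6
    (S Ωm Ωp : Set E3) (vm vp : E3 → E3)
    (hS : IsSurface 2 S) (hcpt : IsCompact S) (hconn : IsConnected S)
    (hnotSphere : ¬ Nonempty (S ≃ₜ (Metric.sphere (0 : E3) 1)))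
    (hnotTorus : ¬ Nonempty (S ≃ₜ (UnitAddCircle × UnitAddCircle)))
    (henc : EnclosedBy S Ωm Ωp)
    (hCVS : CVSPair S Ωm Ωp vm vp) :
    (∃ O : Set E3, IsOpen O ∧ (S ∩ O).Nonempty ∧ ∀ p ∈ S ∩ O, vp p = vm p) ∨
    (∃ O : Set E3, IsOpen O ∧ (S ∩ O).Nonempty ∧ ∀ p ∈ S ∩ O, vp p = -vm p) := by
  by_contra hcon
  rw [not_or] at hcon
  obtain ⟨hcon1, hcon2⟩ := hcon
  push Not at hcon1 hcon2
  obtain ⟨Wm, oWm, sWm, cWm⟩ := hCVS.smoothm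
  obtain ⟨Wp, oWp, sWp, cWp⟩ := hCVS.smoothp
  obtain ⟨vm', cm, csm, em⟩ := extend_field hcpt oWm (fun p hp => sWm (Or.inr hp)) cWm
  obtain ⟨vp', cp, csp, ep⟩ := extend_field hcpt oWp (fun p hp => sWp (Or.inr hp)) cWp
  have vme : ∀ p ∈ S, vm' p = vm p := fun p hp => (em p hp).eq_of_nhds
  have vpe : ∀ p ∈ S, vp' p = vp p := fun p hp => (ep p hp).eq_of_nhds
  have dme : ∀ p ∈ S, fderiv ℝ vm' p = fderiv ℝ vm p := fun p hp => (em p hp).fderiv_eq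
  have dpe : ∀ p ∈ S, fderiv ℝ vp' p = fderiv ℝ vp p := fun p hp => (ep p hp).fderiv_eq
  have hm : ∀ p ∈ S, (∀ u w, ⟪fderiv ℝ vm' p u, w⟫ = ⟪u, fderiv ℝ vm' p w⟫) ∧
      LinearMap.trace ℝ E3 (fderiv ℝ vm' p : E3 →ₗ[ℝ] E3) = 0 := fun p hp => by
    rw [dme p hp]
    exact sym_tr_closure oWm sWm cWm hCVS.clm hCVS.divm hCVS.curlm hp
  have hp : ∀ p ∈ S, (∀ u w, ⟪fderiv ℝ vp' p u, w⟫ = ⟪u, fderiv ℝ vp' p w⟫) ∧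
      LinearMap.trace ℝ E3 (fderiv ℝ vp' p : E3 →ₗ[ℝ] E3) = 0 := fun p hp => by
    rw [dpe p hp]
    exact sym_tr_closure oWp sWp cWp hCVS.clp hCVS.divp hCVS.curlp hp
  have hint : interior S = ∅ := by
    by_contra hne
    obtain ⟨p, hpi⟩ := nonempty_iff_ne_empty.2 hne
    obtain ⟨q, q1, q2⟩ := mem_closure_iff.1 (hCVS.clm (interior_subset hpi)) _ isOpen_interior hpi
    exact disjoint_left.1 hCVS.disjm q2 (interior_subset q1)
  obtain ⟨Km, Bm, lm, bm⟩ := cs_bounds cm csm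
  obtain ⟨Kp, Bp, lp, bp⟩ := cs_bounds cp csp
  obtain ⟨Φm, fm⟩ := exists_flowOn hcpt lm bm fun p hp => by
    rw [vme p hp]; exact hCVS.tangentm p hp
  obtain ⟨Φp, fp⟩ := exists_flowOn hcpt lp bp fun p hp => by
    rw [vpe p hp]; exact hCVS.tangentp p hp
  set X : E3 → E3 := fun x => vp' x + vm' x with hXdef
  set Y : E3 → E3 := fun x => vp' x - vm' x with hYdef
  have hX : ContDiff ℝ 1 X := cp.add cm
  have hY : ContDiff ℝ 1 Y := cp.sub cm
  have csX : HasCompactSupport X := csp.add csm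
  have csY : HasCompactSupport Y := csp.sub csm
  have dX : ∀ p, fderiv ℝ X p = fderiv ℝ vp' p + fderiv ℝ vm' p := fun p =>
    fderiv_fun_add (cp.differentiable (by norm_num) p) (cm.differentiable (by norm_num) p)
  have dY : ∀ p, fderiv ℝ Y p = fderiv ℝ vp' p - fderiv ℝ vm' p := fun p =>
    fderiv_fun_sub (cp.differentiable (by norm_num) p) (cm.differentiable (by norm_num) p)
  obtain ⟨K1, B1, l1, b1⟩ := cs_bounds hX csX
  obtain ⟨K2, B2, l2, b2⟩ := cs_bounds hY csY
  obtain ⟨Φ, hΦ⟩ := exists_flowOn hcpt l1 b1 fun p hp => tangent_add fp fm lp bp hp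
  obtain ⟨Ψ, hΨ⟩ := exists_flowOn hcpt l2 b2 fun p hp => by
    have := tangent_add fp fm.rev lp bp hp
    simpa [hYdef, sub_eq_add_neg] using this
  have hXY : ∀ p, ⟪X p, Y p⟫ = ‖vp' p‖ ^ 2 - ‖vm' p‖ ^ 2 := fun p => by
    simp only [hXdef, hYdef, inner_add_left, inner_sub_right, real_inner_self_eq_norm_sq,
      real_inner_comm (vp' p) (vm' p)]
    ring
  obtain ⟨c, hc⟩ := locally_const hconn hCVS.bernoulli
  have oX : IsOpen {p | X p ≠ 0} := isOpen_ne.preimage hX.continuous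
  have hd : S ⊆ closure {p | p ∈ S ∧ X p ≠ 0 ∧ Y p ≠ 0} := by
    intro p hp
    rw [mem_closure_iff]
    intro O hO hpO
    obtain ⟨q, hq, hq1⟩ := hcon2 O hO ⟨p, hp, hpO⟩
    have hqX : X q ≠ 0 := by
      simp only [hXdef, vme q hq.1, vpe q hq.1]
      exact fun h => hq1 (eq_neg_of_add_eq_zero_left h)
    obtain ⟨r, hr, hr1⟩ := hcon1 (O ∩ {p | X p ≠ 0}) (hO.inter oX) ⟨q, hq.1, hq.2, hqX⟩
    refine ⟨r, hr.2.1, hr.1, hr.2.2, ?_⟩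
    simp only [hYdef, vme r hr.1, vpe r hr.1]
    exact sub_ne_zero.2 hr1
  refine final_contra_s6 (K := max K1 K2) (B := max B1 B2) (c := c) hcpt hint hS hconn.nonempty hX hY
    (l1.weaken (le_max_left _ _)) (l2.weaken (le_max_right _ _))
    (fun x => (b1 x).trans (by exact_mod_cast le_max_left _ _))
    (fun x => (b2 x).trans (by exact_mod_cast le_max_right _ _)) hΦ hΨ ?_ ?_ ?_ ?_ ?_ ?_ hd
  · intro p h u v
    rw [dX, add_apply, add_apply, inner_add_left, inner_add_right, (hp p h).1, (hm p h).1]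
  · intro p h u v
    rw [dY, sub_apply, sub_apply, inner_sub_left, inner_sub_right, (hp p h).1, (hm p h).1]
  · intro p h
    rw [dX, ContinuousLinearMap.toLinearMap_add, map_add, (hp p h).2, (hm p h).2, add_zero]
  · intro p h
    rw [dY, ContinuousLinearMap.toLinearMap_sub, map_sub, (hp p h).2, (hm p h).2, sub_zero]
  · intro p h
    rw [dX, dme p h, dpe p h]
    simp only [hYdef, vme p h, vpe p h]
    exact hCVS.strain p h
  · intro p h
    rw [hXY, vme p h, vpe p h]
    exact hc p h
end
end
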